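/- arXiv:1608.05863 — 6 statements merged into one kernel-verified Lean document; each statement's English description precedes it below -/
import Mathlib

section
/- Let K be a field of characteristic 2 and n ≥ 2 an integer. The Lie algebra of derivations of the Zassenhaus algebra W₁′(n) over K has dimension 2ⁿ + n − 1. -/
/-!
The vector `e_{a-1}` is the divided power `x^(a)`, and in characteristic 2 the bracket is
`[f, g] = ∂(fg)`. A derivation `D` is determined by `D x^(0)` together with the constant terms of
`D x^(2^k)` for `k < n`. Indeed, if all of these vanish, then `[x^(0), f] = ∂f` shows by induction
on `b` that `D x^(b)` is constant, and this constant is `0` because `x^(b)`, for `b` not a power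
of 2, either is a bracket of elements without constant and linear terms or has zero bracket with
`x^(1)`. Conversely, all these data occur: `ad x^(i+1)` and `(ad x^(2^(n-1)))^2` send `x^(0)` to
`x^(i)` and to the top element `x^(2^n-2)`, while `(ad x^(0))^(2^k) = ∂^(2^k)` sends `x^(2^k)`
to `1`.
-/

open scoped BigOperators

/-- The bracket of the Zassenhaus algebra `W₁′(n)` in characteristic 2, on the
`(2ⁿ - 1)`-dimensional space `Fin (2^n - 1) → K`.  The coordinate `a : Fin (2^n - 1)`
corresponds to the basis vector `e_i` with `i = a - 1` (so `i` ranges over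
`-1 ≤ i ≤ 2^n - 3`), and the bracket is the bilinear extension of
`[e_i, e_j] = C(i+j+2, i+1) e_{i+j}` if `-1 ≤ i+j ≤ 2^n - 3`, and `0` otherwise,
the binomial coefficient being taken in `K` (i.e. reduced mod 2 when `char K = 2`). -/
def zassBracket (K : Type*) [Field K] (n : ℕ) (x y : Fin (2 ^ n - 1) → K) :
    Fin (2 ^ n - 1) → K :=
  fun k => ∑ a : Fin (2 ^ n - 1), ∑ b : Fin (2 ^ n - 1),
    (if (a : ℕ) + (b : ℕ) = (k : ℕ) + 1 then (Nat.choose ((k : ℕ) + 1) (a : ℕ) : K) else 0)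
      * x a * y b

theorem zassBracket_add_left (K : Type*) [Field K] (n : ℕ) (x x' y : Fin (2 ^ n - 1) → K) :
    zassBracket K n (x + x') y = zassBracket K n x y + zassBracket K n x' y := by
  funext k
  simp [zassBracket, mul_add, add_mul, Finset.sum_add_distrib]

theorem zassBracket_add_right (K : Type*) [Field K] (n : ℕ) (x y y' : Fin (2 ^ n - 1) → K) :
    zassBracket K n x (y + y') = zassBracket K n x y + zassBracket K n x y' := by
  funext k
  simp [zassBracket, mul_add, add_mul, Finset.sum_add_distrib]

theorem zassBracket_smul_left (K : Type*) [Field K] (n : ℕ) (c : K)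
    (x y : Fin (2 ^ n - 1) → K) :
    zassBracket K n (c • x) y = c • zassBracket K n x y := by
  funext k
  simp only [zassBracket, Pi.smul_apply, smul_eq_mul, Finset.mul_sum]
  refine Finset.sum_congr rfl fun a _ => Finset.sum_congr rfl fun b _ => by ring

theorem zassBracket_smul_right (K : Type*) [Field K] (n : ℕ) (c : K)
    (x y : Fin (2 ^ n - 1) → K) :
    zassBracket K n x (c • y) = c • zassBracket K n x y := by
  funext k
  simp only [zassBracket, Pi.smul_apply, smul_eq_mul, Finset.mul_sum]
  refine Finset.sum_congr rfl fun a _ => Finset.sum_congr rfl fun b _ => by ring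

/-- The space of derivations of the Zassenhaus algebra `W₁′(n)`: linear endomorphisms `D`
satisfying the Leibniz rule `D [x,y] = [D x, y] + [x, D y]`. -/
def zassDerivations (K : Type*) [Field K] (n : ℕ) :
    Submodule K ((Fin (2 ^ n - 1) → K) →ₗ[K] (Fin (2 ^ n - 1) → K)) where
  carrier := {D | ∀ x y, D (zassBracket K n x y)
    = zassBracket K n (D x) y + zassBracket K n x (D y)}
  add_mem' := by
    intro D D' hD hD' x y
    simp only [LinearMap.add_apply, hD x y, hD' x y, zassBracket_add_left,
      zassBracket_add_right]
    abel
  zero_mem' := by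
    intro x y
    have h0 : ∀ y : Fin (2 ^ n - 1) → K, zassBracket K n 0 y = 0 := by
      intro y; funext k; simp [zassBracket]
    have h0' : ∀ x : Fin (2 ^ n - 1) → K, zassBracket K n x 0 = 0 := by
      intro x; funext k; simp [zassBracket]
    simp [h0, h0']
  smul_mem' := by
    intro c D hD x y
    simp only [LinearMap.smul_apply, hD x y, zassBracket_smul_left, zassBracket_smul_right,
      smul_add]

namespace Zassenhaus

open Finset.HasAntidiagonal (antidiagonal mem_antidiagonal)

section BinomialCoefficients

theorem choose_prime_pow_modEq_div {p : ℕ} [Fact p.Prime] (m k : ℕ) :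
    m.choose (p ^ k) ≡ m / p ^ k [MOD p] := by
  have hp : 0 < p := (Fact.out : p.Prime).pos
  have digits : ∀ i ∈ Finset.range k, (m / p ^ i % p).choose (p ^ k / p ^ i % p) = 1 := by
    intro i hi
    have hik : i < k := Finset.mem_range.1 hi
    have hdvd : p ∣ p ^ k / p ^ i := by
      rw [Nat.pow_div hik.le hp]
      exact dvd_pow_self p (by omega)
    rw [Nat.mod_eq_zero_of_dvd hdvd, Nat.choose_zero_right]
  rw [← Int.natCast_modEq_iff]
  refine (Choose.choose_modEq_choose_mul_prod_range_choose k).trans ?_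
  rw [Finset.prod_congr rfl digits, Nat.div_self (pow_pos hp k)]
  simp [Int.ModEq.refl]

theorem cast_choose_two_pow {R : Type*} [AddGroupWithOne R] [CharP R 2] {m k : ℕ}
    (h₁ : 2 ^ k ≤ m) (h₂ : m < 2 ^ (k + 1)) : (m.choose (2 ^ k) : R) = 1 := by
  have hdiv : m / 2 ^ k = 1 := Nat.div_eq_of_lt_le (by omega) (by rw [pow_succ] at h₂; omega)
  have := (CharP.natCast_eq_natCast R 2).2 (choose_prime_pow_modEq_div (p := 2) m k)
  simpa [hdiv] using this

theorem choose_mul_choose_add_comm_left (a b c : ℕ) :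
    (a + b + c).choose a * (b + c).choose b = (a + b + c).choose b * (a + c).choose a := by
  have key := Nat.choose_mul (n := a + b + c) (k := a + b) (s := a) (by omega)
  have key' := Nat.choose_mul (n := a + b + c) (k := a + b) (s := b) (by omega)
  rw [show a + b + c - a = b + c by omega, show a + b - a = b by omega] at key
  rw [show a + b + c - b = a + c by omega, show a + b - b = a by omega] at key'
  rw [← key, ← key', Nat.choose_symm_add (a := a)]

theorem sum_cyclic_choose_mul_choose {a b c s : ℕ} (h : a + b + c = s + 1) :
    s.choose a * (b + c).choose b + s.choose b * (a + c).choose a + s.choose c * (a + b).choose a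
      = 2 * ((s + 1).choose a * (b + c).choose b) := by
  -- Multiplied by `s + 1`, the summands become `M * (b + c)`, `M * (a + c)` and `M * (a + b)`,
  -- where `M = (a + b + c)! / (a! b! c!)`.
  have symm_ab := choose_mul_choose_add_comm_left a b c
  have symm_ac := choose_mul_choose_add_comm_left a c b
  rw [h] at symm_ab
  rw [show a + c + b = s + 1 by omega, add_comm c b, ← Nat.choose_symm_add (a := b)] at symm_ac
  have absorb_a := Nat.choose_mul_succ_eq s a
  have absorb_b := Nat.choose_mul_succ_eq s b
  have absorb_c := Nat.choose_mul_succ_eq s c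
  rw [show s + 1 - a = b + c by omega] at absorb_a
  rw [show s + 1 - b = a + c by omega] at absorb_b
  rw [show s + 1 - c = a + b by omega] at absorb_c
  apply Nat.eq_of_mul_eq_mul_right s.succ_pos
  zify at *
  linear_combination (b + c).choose b * absorb_a + (a + c).choose a * absorb_b +
    (a + b).choose a * absorb_c - (a + c) * symm_ab - (a + b) * symm_ac +
    2 * (s + 1).choose a * (b + c).choose b * h

end BinomialCoefficients

section BilinearDerivations

variable {R M : Type*} [CommSemiring R] [AddCommMonoid M] [Module R M]

/-- `D` is a derivation of the not necessarily associative algebra with product `B`. -/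
def IsDerivation (B : M →ₗ[R] M →ₗ[R] M) (D : Module.End R M) : Prop :=
  ∀ x y, D (B x y) = B (D x) y + B x (D y)

variable {B : M →ₗ[R] M →ₗ[R] M} {D : Module.End R M}

theorem isDerivation_of_basis {ι : Type*} (v : Module.Basis ι R M)
    (h : ∀ i j, D (B (v i) (v j)) = B (D (v i)) (v j) + B (v i) (D (v j))) :
    IsDerivation B D := by
  have key : B.compr₂ D = B.compl₁₂ D LinearMap.id + B.compl₁₂ LinearMap.id D :=
    v.ext fun i => v.ext fun j => by simpa using h i j
  intro x y
  simpa using LinearMap.congr_fun₂ key x y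

theorem IsDerivation.sq [CharP R 2] (hD : IsDerivation B D) : IsDerivation B (D ^ 2) := by
  intro x y
  have cross : B (D x) (D y) + B (D x) (D y) = 0 := by
    rw [← two_smul R, CharTwo.two_eq_zero, zero_smul]
  simp only [pow_two, Module.End.mul_apply, hD _ _, map_add]
  rw [add_assoc, ← add_assoc (B (D x) (D y)), cross, zero_add]

theorem IsDerivation.pow_two_pow [CharP R 2] (hD : IsDerivation B D) (k : ℕ) :
    IsDerivation B (D ^ 2 ^ k) := by
  induction k with
  | zero => simpa using hD
  | succ k ih =>
    rw [pow_succ, pow_mul]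
    exact ih.sq

end BilinearDerivations

variable (K : Type*) [Field K] (n : ℕ)

/-- The adjoint representation `x ↦ [x, ·]` of `W₁′(n)`, that is, the bracket as a bilinear map. -/
def ad : (Fin (2 ^ n - 1) → K) →ₗ[K] (Fin (2 ^ n - 1) → K) →ₗ[K] (Fin (2 ^ n - 1) → K) :=
  LinearMap.mk₂ K (zassBracket K n) (zassBracket_add_left K n) (zassBracket_smul_left K n)
    (zassBracket_add_right K n) (zassBracket_smul_right K n)

/-- The divided power `x^(b)`, which is the basis vector `e_{b-1}` of `W₁′(n)` for `b < 2 ^ n - 1`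
and zero for the other `b`. -/
def dpow (b : ℕ) : Fin (2 ^ n - 1) → K :=
  fun k => if (k : ℕ) = b then 1 else 0

/-- The coefficient of `x^(j)`, which is zero for `j` outside the range `j < 2 ^ n - 1`. -/
def coeff (j : ℕ) : (Fin (2 ^ n - 1) → K) →ₗ[K] K :=
  if h : j < 2 ^ n - 1 then LinearMap.proj ⟨j, h⟩ else 0

variable {K n}

theorem mem_zassDerivations_iff {D : Module.End K (Fin (2 ^ n - 1) → K)} :
    D ∈ zassDerivations K n ↔ IsDerivation (ad K n) D :=
  Iff.rfl

section Coefficients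

theorem coeff_of_lt {j : ℕ} (h : j < 2 ^ n - 1) (x : Fin (2 ^ n - 1) → K) :
    coeff K n j x = x ⟨j, h⟩ := by
  simp [coeff, h]

theorem coeff_of_le {j : ℕ} (h : 2 ^ n - 1 ≤ j) (x : Fin (2 ^ n - 1) → K) :
    coeff K n j x = 0 := by
  simp [coeff, h.not_gt]

theorem coeff_val (i : Fin (2 ^ n - 1)) (x : Fin (2 ^ n - 1) → K) : coeff K n i x = x i :=
  coeff_of_lt i.2 x

theorem ext_coeff {x y : Fin (2 ^ n - 1) → K}
    (h : ∀ j < 2 ^ n - 1, coeff K n j x = coeff K n j y) : x = y := by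
  funext i
  simpa only [coeff_val] using h i i.2

theorem coeff_dpow (j b : ℕ) :
    coeff K n j (dpow K n b) = if j = b ∧ b < 2 ^ n - 1 then 1 else 0 := by
  by_cases hj : j < 2 ^ n - 1
  · rw [coeff_of_lt hj, dpow]
    grind
  · rw [coeff_of_le (by omega), if_neg (by omega)]

theorem basisFun_eq_dpow (i : Fin (2 ^ n - 1)) :
    Pi.basisFun K (Fin (2 ^ n - 1)) i = dpow K n i := by
  funext k
  simp [dpow, Pi.single_apply, Fin.ext_iff]

end Coefficients

section Bracket

theorem coeff_ad_of_lt {k : ℕ} (hk : k < 2 ^ n - 1) (x y : Fin (2 ^ n - 1) → K) :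
    coeff K n k (ad K n x y) = ∑ p ∈ antidiagonal (k + 1),
      ((k + 1).choose p.1 : K) * coeff K n p.1 x * coeff K n p.2 y := by
  let F (p : ℕ × ℕ) : K := (if p.1 + p.2 = k + 1 then ((k + 1).choose p.1 : K) else 0) *
    coeff K n p.1 x * coeff K n p.2 y
  have hF : coeff K n k (ad K n x y) =
      ∑ p ∈ Finset.range (2 ^ n - 1) ×ˢ Finset.range (2 ^ n - 1), F p := by
    simp only [coeff_of_lt hk, Finset.sum_product, Finset.sum_range, F, coeff_val]
    rfl
  rw [hF]
  refine Finset.sum_congr_of_eq_on_inter ?_ ?_ ?_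
  · intro p _ hp
    simp [F, mem_antidiagonal.not.1 hp]
  · intro p _ hp
    simp only [Finset.mem_product, Finset.mem_range, not_and_or, not_lt] at hp
    rcases hp with h | h <;> simp [coeff_of_le h]
  · intro p _ hp
    simp [F, mem_antidiagonal.1 hp]

theorem ad_comm (x y : Fin (2 ^ n - 1) → K) : ad K n x y = ad K n y x := by
  refine ext_coeff fun k hk => ?_
  rw [coeff_ad_of_lt hk, coeff_ad_of_lt hk, ← Finset.Nat.sum_antidiagonal_swap]
  refine Finset.sum_congr rfl fun p hp => ?_
  rw [Prod.fst_swap, Prod.snd_swap,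
    Nat.choose_symm_of_eq_add ((mem_antidiagonal.1 hp).symm.trans (add_comm _ _)), mul_right_comm]

variable [CharP K 2]

/-- The coefficient of `∂(xy)`. For `k = 2 ^ n - 1`, where the left side is zero by truncation, the
right side vanishes because the inner binomial coefficients of `2 ^ n` are even. -/
theorem coeff_ad {k : ℕ} (hk : k < 2 ^ n) (x y : Fin (2 ^ n - 1) → K) :
    coeff K n k (ad K n x y) = ∑ p ∈ antidiagonal (k + 1),
      ((k + 1).choose p.1 : K) * coeff K n p.1 x * coeff K n p.2 y := by
  rcases lt_or_ge k (2 ^ n - 1) with hk' | hk'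
  · exact coeff_ad_of_lt hk' x y
  rw [coeff_of_le hk']
  refine (Finset.sum_eq_zero fun p hp => ?_).symm
  have hp : p.1 + p.2 = k + 1 := mem_antidiagonal.1 hp
  rcases lt_or_ge p.1 (2 ^ n - 1) with h₁ | h₁
  · rcases lt_or_ge p.2 (2 ^ n - 1) with h₂ | h₂
    · have hdvd : 2 ∣ (k + 1).choose p.1 := by
        rw [show k + 1 = 2 ^ n by omega]
        exact Nat.prime_two.dvd_choose_pow (by omega) (by omega)
      simp [(CharP.cast_eq_zero_iff K 2 _).2 hdvd]
    · simp [coeff_of_le h₂]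
  · simp [coeff_of_le h₁]

theorem coeff_zero_ad (x y : Fin (2 ^ n - 1) → K) :
    coeff K n 0 (ad K n x y) =
      coeff K n 0 x * coeff K n 1 y + coeff K n 1 x * coeff K n 0 y := by
  rw [coeff_ad (Nat.two_pow_pos n)]
  simp [Finset.Nat.antidiagonal_succ]

/-- For `k + 1 < a` the subtraction on the right is truncated, but the binomial coefficient is
zero. -/
theorem coeff_ad_dpow {a k : ℕ} (ha : a < 2 ^ n - 1) (hk : k < 2 ^ n) (y : Fin (2 ^ n - 1) → K) :
    coeff K n k (ad K n (dpow K n a) y) =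
      ((k + 1).choose a : K) * coeff K n (k + 1 - a) y := by
  rw [coeff_ad hk]
  simp only [coeff_dpow, ha, and_true, mul_ite, mul_one, mul_zero, ite_mul, zero_mul]
  rcases lt_or_ge (k + 1) a with h | h
  · rw [Nat.choose_eq_zero_of_lt h, Nat.cast_zero, zero_mul]
    refine Finset.sum_eq_zero fun p hp => if_neg ?_
    have := mem_antidiagonal.1 hp
    omega
  · rw [Finset.sum_eq_single_of_mem (a, k + 1 - a) (mem_antidiagonal.2 (by omega)), if_pos rfl]
    intro p hp hne
    have := mem_antidiagonal.1 hp
    exact if_neg fun hpa => hne (Prod.ext hpa (by simp only; omega))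

theorem coeff_ad_dpow_dpow {a b k : ℕ} (ha : a < 2 ^ n - 1) (hb : b < 2 ^ n - 1)
    (hk : k < 2 ^ n) :
    coeff K n k (ad K n (dpow K n a) (dpow K n b)) =
      if a + b = k + 1 then ((k + 1).choose a : K) else 0 := by
  rw [coeff_ad_dpow ha hk, coeff_dpow]
  rcases lt_or_ge (k + 1) a with h | h
  · simp [Nat.choose_eq_zero_of_lt h]
  · simp only [mul_ite, mul_one, mul_zero]
    exact if_congr (by omega) rfl rfl

theorem ad_dpow_dpow {a b s : ℕ} (ha : a < 2 ^ n - 1) (hb : b < 2 ^ n - 1) (h : a + b = s + 1) :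
    ad K n (dpow K n a) (dpow K n b) = ((s + 1).choose a : K) • dpow K n s := by
  refine ext_coeff fun k hk => ?_
  rw [coeff_ad_dpow_dpow ha hb (by omega), map_smul, smul_eq_mul, coeff_dpow, mul_ite, mul_one,
    mul_zero]
  rcases eq_or_ne k s with rfl | hks
  · rw [if_pos h, if_pos ⟨rfl, hk⟩]
  · rw [if_neg (by omega), if_neg (by omega)]

theorem coeff_ad_dpow_zero (j : ℕ) (y : Fin (2 ^ n - 1) → K) :
    coeff K n j (ad K n (dpow K n 0) y) = coeff K n (j + 1) y := by
  rcases lt_or_ge j (2 ^ n - 1) with hj | hj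
  · simp [coeff_ad_dpow (K := K) (show 0 < 2 ^ n - 1 by omega) (show j < 2 ^ n by omega)]
  · rw [coeff_of_le hj, coeff_of_le (by omega)]

theorem coeff_ad_dpow_zero_pow (i j : ℕ) (y : Fin (2 ^ n - 1) → K) :
    coeff K n j ((ad K n (dpow K n 0) ^ i) y) = coeff K n (j + i) y := by
  induction i generalizing j with
  | zero => simp
  | succ i ih =>
    rw [pow_succ', Module.End.mul_apply, coeff_ad_dpow_zero, ih, add_right_comm, add_assoc]

end Bracket

section InnerDerivations

variable [CharP K 2]

theorem coeff_ad_dpow_ad_dpow {a b c m : ℕ} (ha : a < 2 ^ n - 1) (hb : b < 2 ^ n - 1)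
    (hc : c < 2 ^ n - 1) (hm : m < 2 ^ n - 1) :
    coeff K n m (ad K n (dpow K n a) (ad K n (dpow K n b) (dpow K n c))) =
      if a + b + c = m + 2 then ((m + 1).choose a * (b + c).choose b : K) else 0 := by
  rw [coeff_ad_dpow ha (by omega), coeff_ad_dpow_dpow hb hc (by omega)]
  rcases lt_or_ge (m + 1) a with h | h
  · simp [Nat.choose_eq_zero_of_lt h]
  · simp only [mul_ite, mul_zero]
    split_ifs with h₁ h₂ h₂
    · rw [h₁]
    · omega
    · omega
    · rfl

theorem isDerivation_ad_dpow {a : ℕ} (ha : a < 2 ^ n - 1) :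
    IsDerivation (ad K n) (ad K n (dpow K n a)) := by
  refine isDerivation_of_basis (Pi.basisFun K _) fun b c => ext_coeff fun m hm => ?_
  simp only [basisFun_eq_dpow]
  rw [ad_comm (ad K n (dpow K n a) _), map_add, coeff_ad_dpow_ad_dpow ha b.2 c.2 hm,
    coeff_ad_dpow_ad_dpow c.2 ha b.2 hm, coeff_ad_dpow_ad_dpow b.2 ha c.2 hm]
  by_cases h : a + b + c = m + 2
  · rw [if_pos h, if_pos (by omega), if_pos (by omega)]
    have jacobi := congrArg (Nat.cast (R := K)) (sum_cyclic_choose_mul_choose h)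
    push_cast at jacobi
    grind
  · rw [if_neg h, if_neg (by omega), if_neg (by omega), add_zero]

theorem ad_mem_zassDerivations (x : Fin (2 ^ n - 1) → K) : ad K n x ∈ zassDerivations K n := by
  have hspan : LinearMap.range (ad K n) ≤ zassDerivations K n := by
    rw [LinearMap.range_eq_map, ← (Pi.basisFun K _).span_eq, Submodule.map_span_le]
    rintro _ ⟨a, rfl⟩
    rw [basisFun_eq_dpow]
    exact isDerivation_ad_dpow a.2
  exact hspan ⟨x, rfl⟩

end InnerDerivations

section Coordinates

variable (K n) in
/-- The map `D ↦ (D x^(0), (constant term of D x^(2^k))_k)`, which turns out to coordinatize the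
space of derivations. -/
def derivationCoords : zassDerivations K n →ₗ[K] (Fin (2 ^ n - 1) → K) × (Fin n → K) :=
  ((LinearMap.applyₗ (dpow K n 0)).prod (LinearMap.pi fun k : Fin n =>
    coeff K n 0 ∘ₗ LinearMap.applyₗ (dpow K n (2 ^ (k : ℕ))))) ∘ₗ (zassDerivations K n).subtype

theorem derivationCoords_apply (D : zassDerivations K n) :
    derivationCoords K n D =
      (D.1 (dpow K n 0), fun k : Fin n => coeff K n 0 (D.1 (dpow K n (2 ^ (k : ℕ))))) :=
  rfl

theorem two_pow_lt_two_pow_sub_one {k : ℕ} (hn : 2 ≤ n) (hk : k < n) : 2 ^ k < 2 ^ n - 1 := by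
  obtain ⟨m, rfl⟩ : ∃ m, n = m + 1 := ⟨n - 1, by omega⟩
  have hkm : 2 ^ k ≤ 2 ^ m := Nat.pow_le_pow_right two_pos (by omega)
  have hm : 2 ^ 1 ≤ 2 ^ m := Nat.pow_le_pow_right two_pos (by omega)
  rw [pow_succ]
  omega

variable [CharP K 2]

section Injectivity

variable {D : Module.End K (Fin (2 ^ n - 1) → K)}

theorem coeff_zero_map_ad_dpow_dpow (hD : IsDerivation (ad K n) D) {a b : ℕ} (ha : 1 < a)
    (hb : 1 < b) : coeff K n 0 (D (ad K n (dpow K n a) (dpow K n b))) = 0 := by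
  rw [hD, map_add, coeff_zero_ad, coeff_zero_ad]
  simp [coeff_dpow, show 0 ≠ a by omega, show 1 ≠ a by omega, show 0 ≠ b by omega,
    show 1 ≠ b by omega]

theorem coeff_zero_map_dpow_of_odd (hD : IsDerivation (ad K n) D) {b : ℕ} (hodd : Odd b)
    (hb₁ : 1 < b) (hb : b < 2 ^ n - 1) : coeff K n 0 (D (dpow K n b)) = 0 := by
  have bracket_eq_zero : ad K n (dpow K n b) (dpow K n 1) = 0 := by
    have hdvd : 2 ∣ (b + 1).choose b := by
      rw [Nat.choose_succ_self_right]
      exact hodd.add_one.two_dvd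
    rw [ad_dpow_dpow hb (by omega) rfl, (CharP.cast_eq_zero_iff K 2 _).2 hdvd, zero_smul]
  have leibniz := congrArg (coeff K n 0) (hD (dpow K n b) (dpow K n 1))
  rw [bracket_eq_zero, map_zero, map_zero, map_add, coeff_zero_ad, coeff_zero_ad] at leibniz
  simpa [coeff_dpow, show 0 ≠ b by omega, show 1 ≠ b by omega, show 1 < 2 ^ n - 1 by omega]
    using leibniz.symm

theorem ad_dpow_two_pow {b k : ℕ} (hk : 0 < k) (h₁ : 2 ^ k ≤ b) (h₂ : b + 1 < 2 ^ (k + 1))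
    (hb : b < 2 ^ n - 1) :
    ad K n (dpow K n (2 ^ k)) (dpow K n (b + 1 - 2 ^ k)) = dpow K n b := by
  have := Nat.one_lt_two_pow hk.ne'
  rw [ad_dpow_dpow (s := b) (by omega) (by omega) (by omega),
    cast_choose_two_pow (by omega) h₂, one_smul]

theorem coeff_zero_map_dpow (hD : IsDerivation (ad K n) D)
    (hpow : ∀ k < n, coeff K n 0 (D (dpow K n (2 ^ k))) = 0) {b : ℕ} (hb₀ : 0 < b)
    (hb : b < 2 ^ n - 1) : coeff K n 0 (D (dpow K n b)) = 0 := by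
  have hlog : 2 ^ Nat.log 2 b ≤ b := Nat.pow_log_le_self 2 hb₀.ne'
  have hlog' : b < 2 ^ (Nat.log 2 b + 1) := Nat.lt_pow_succ_log_self one_lt_two b
  have hlogn : Nat.log 2 b < n := (Nat.pow_lt_pow_iff_right one_lt_two).1 (by omega)
  rcases hlog.eq_or_lt with hb_pow | hb_pow
  · rw [← hb_pow]
    exact hpow _ hlogn
  rcases Nat.even_or_odd b with heven | hodd
  · have hlog_pos : 0 < Nat.log 2 b := Nat.log_pos one_lt_two (by grind)
    have htwo := Nat.one_lt_two_pow hlog_pos.ne'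
    rw [← ad_dpow_two_pow hlog_pos hlog (by grind) hb]
    exact coeff_zero_map_ad_dpow_dpow hD htwo (by omega)
  · exact coeff_zero_map_dpow_of_odd hD hodd (by have := Nat.two_pow_pos (Nat.log 2 b); omega) hb

theorem eq_zero_of_ad_dpow_zero_eq_zero {y : Fin (2 ^ n - 1) → K}
    (had : ad K n (dpow K n 0) y = 0) (hy : coeff K n 0 y = 0) : y = 0 := by
  refine ext_coeff fun j _ => ?_
  cases j with
  | zero => rw [hy, map_zero]
  | succ j => rw [← coeff_ad_dpow_zero, had, map_zero, map_zero]

theorem map_dpow_eq_zero (hD : IsDerivation (ad K n) D) (h₀ : D (dpow K n 0) = 0)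
    (hpow : ∀ k < n, coeff K n 0 (D (dpow K n (2 ^ k))) = 0) {b : ℕ} (hb : b < 2 ^ n - 1) :
    D (dpow K n b) = 0 := by
  induction b with
  | zero => exact h₀
  | succ b ih =>
    refine eq_zero_of_ad_dpow_zero_eq_zero ?_ (coeff_zero_map_dpow hD hpow b.succ_pos hb)
    have bracket : ad K n (dpow K n 0) (dpow K n (b + 1)) = dpow K n b := by
      rw [ad_dpow_dpow (by omega) hb (zero_add _), Nat.choose_zero_right, Nat.cast_one, one_smul]
    have leibniz := hD (dpow K n 0) (dpow K n (b + 1))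
    rwa [bracket, ih (by omega), h₀, map_zero, LinearMap.zero_apply, zero_add, eq_comm] at leibniz

variable (K n) in
theorem derivationCoords_injective : Function.Injective (derivationCoords K n) := by
  refine (injective_iff_map_eq_zero _).2 fun D hD => Subtype.ext ?_
  rw [derivationCoords_apply, Prod.mk_eq_zero] at hD
  refine (Pi.basisFun K _).ext fun b => ?_
  rw [basisFun_eq_dpow]
  exact map_dpow_eq_zero D.2 hD.1 (fun k hk => congrFun hD.2 ⟨k, hk⟩) b.2

end Injectivity

section Surjectivity

theorem dpow_mem_range_derivationCoords {i : ℕ} (hi : i + 1 < 2 ^ n - 1) :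
    (dpow K n i, 0) ∈ LinearMap.range (derivationCoords K n) := by
  refine ⟨⟨ad K n (dpow K n (i + 1)), ad_mem_zassDerivations _⟩, ?_⟩
  rw [derivationCoords_apply]
  refine Prod.ext ?_ (funext fun k => ?_)
  · simp [ad_dpow_dpow hi (show 0 < 2 ^ n - 1 by omega) rfl]
  · have := Nat.two_pow_pos (k : ℕ)
    simp [coeff_zero_ad, coeff_dpow, this.ne]

theorem dpow_top_mem_range_derivationCoords (hn : 2 ≤ n) :
    (dpow K n (2 ^ n - 2), 0) ∈ LinearMap.range (derivationCoords K n) := by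
  obtain ⟨m, rfl⟩ : ∃ m, n = m + 1 := ⟨n - 1, by omega⟩
  have hm : 2 ^ m < 2 ^ (m + 1) - 1 := two_pow_lt_two_pow_sub_one hn m.lt_succ_self
  have hm₁ : 1 < 2 ^ m := Nat.one_lt_two_pow (by omega)
  have hsq : ad K (m + 1) (dpow K (m + 1) (2 ^ m)) ^ 2 ∈ zassDerivations K (m + 1) :=
    (mem_zassDerivations_iff.1 (ad_mem_zassDerivations _)).sq
  refine ⟨⟨_, hsq⟩, ?_⟩
  rw [derivationCoords_apply]
  simp only [pow_two, Module.End.mul_apply]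
  refine Prod.ext ?_ (funext fun k => ?_)
  · rw [ad_dpow_dpow (s := 2 ^ m - 1) hm (by omega) (by omega),
      cast_choose_two_pow (by omega) (by omega), one_smul,
      ad_dpow_dpow (s := 2 ^ (m + 1) - 2) hm (by omega) (by omega),
      cast_choose_two_pow (by omega) (by omega), one_smul]
  · simp [coeff_zero_ad, coeff_dpow, show 0 ≠ 2 ^ m by omega, show 1 ≠ 2 ^ m by omega]

theorem single_mem_range_derivationCoords (hn : 2 ≤ n) (k : Fin n) :
    (0, Pi.single k 1) ∈ LinearMap.range (derivationCoords K n) := by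
  have hpow : ad K n (dpow K n 0) ^ 2 ^ (k : ℕ) ∈ zassDerivations K n :=
    (mem_zassDerivations_iff.1 (ad_mem_zassDerivations _)).pow_two_pow k
  refine ⟨⟨_, hpow⟩, ?_⟩
  rw [derivationCoords_apply]
  refine Prod.ext (ext_coeff fun j _ => ?_) (funext fun l => ?_)
  · simp [coeff_ad_dpow_zero_pow, coeff_dpow]
  · simp [coeff_ad_dpow_zero_pow, coeff_dpow, two_pow_lt_two_pow_sub_one hn l.2,
      Pi.single_apply, Fin.ext_iff, eq_comm]

theorem derivationCoords_surjective (hn : 2 ≤ n) :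
    Function.Surjective (derivationCoords K n) := by
  rw [← LinearMap.range_eq_top, ← top_le_iff,
    ← ((Pi.basisFun K _).prod (Pi.basisFun K _)).span_eq, Submodule.span_le]
  rintro _ ⟨i | k, rfl⟩
  · rw [Module.Basis.prod_apply]
    simp only [Sum.elim_inl, Function.comp_apply, LinearMap.coe_inl, basisFun_eq_dpow]
    rcases lt_or_ge ((i : ℕ) + 1) (2 ^ n - 1) with hi | hi
    · exact dpow_mem_range_derivationCoords hi
    · rw [show (i : ℕ) = 2 ^ n - 2 by omega]
      exact dpow_top_mem_range_derivationCoords hn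
  · rw [Module.Basis.prod_apply]
    simpa using single_mem_range_derivationCoords hn k

end Surjectivity

end Coordinates

end Zassenhaus

/-- Over a field of characteristic 2 and for `n ≥ 2`, the Lie algebra of derivations of the
Zassenhaus algebra `W₁′(n)` has dimension `2^n + n - 1`. -/
theorem zassenhaus_derivations_dim (K : Type*) [Field K] [CharP K 2] (n : ℕ) (hn : 2 ≤ n) :
    Module.finrank K (zassDerivations K n) = 2 ^ n + n - 1 := by
  rw [(LinearEquiv.ofBijective (Zassenhaus.derivationCoords K n)
    ⟨Zassenhaus.derivationCoords_injective K n,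
      Zassenhaus.derivationCoords_surjective hn⟩).finrank_eq]
  have := Nat.two_pow_pos n
  simp only [Module.finrank_prod, Module.finrank_fin_fun]
  omega
end

section
/- Let K be a field of characteristic p > 0 and L a finite-dimensional Lie algebra over K with dim L ≥ 2. Then there exist a finite-dimensional L-module M and an alternating bilinear map f: L × L → M satisfying the 2-cocycle identity x·f(y,z) − y·f(x,z) + z·f(x,y) − f([x,y],z) + f([x,z],y) − f([y,z],x) = 0 for all x,y,z ∈ L, such that f is not a 2-coboundary, i.e., there is no linear map g: L → M with f(x,y) = x·g(y) − y·g(x) − g([x,y]) for all x,y ∈ L. -/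
/-!
An element `x` of `L` is killed in `End K L` by some `p`-polynomial `q` in `ad x`. Since
`p`-polynomials are additive on commuting operators, the formal element `q(x)` then acts on every
`L`-module by module endomorphisms, and on tensor products and `Hom`-spaces like a primitive
element. Contraction of cochains with `q(x)` satisfies Cartan's homotopy formula, so if `q(x)` and
`q'(y)` both act by zero on the coefficients, contracting with both of them kills every
2-coboundary. Two 1-cocycles which are not killed by the contractions with `q(x)` and `q'(y)`
respectively (and which vanish at `y` and `x`) therefore have a cup product which is not a
2-coboundary.

If `L` is abelian, coordinate functionals are such 1-cocycles, with `q = q' = X`. If `⁅x, y⁆ ≠ 0`,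
they are restrictions of inner derivations: on `End W`, the coboundary of an `e` with `[q(x), e]`
nonzero and invariant has values in the kernel of `q(x)`, where it is no longer a coboundary. Such
an `e` exists on `W = A[X] / (g²)`, where `A` is the quotient of the symmetric algebra of `L` by
the `p`-th powers of an augmentation ideal (chosen so that `⁅x, y⁆ ^ p = 1` in `A`) and the action
of `L` is twisted so that `q(x)` is multiplication by a monic polynomial `g`: take for `e` the
remainder modulo `g`.
-/

namespace LieTwoCohomology

noncomputable section

open Polynomial LinearMap TensorProduct LieModule LieModule.Cohomology

universe w w' u v

section PPolynomial

variable {K : Type*} [Field K] {p : ℕ} {q : K[X]}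

variable (K p) in
/-- The `p`-polynomials, that is, the `K`-linear combinations of the monomials `X ^ p ^ i`. -/
def pPolynomials : Submodule K K[X] :=
  Submodule.span K (Set.range fun i : ℕ ↦ X ^ p ^ i)

lemma X_mem_pPolynomials : (X : K[X]) ∈ pPolynomials K p :=
  Submodule.subset_span ⟨0, by simp⟩

lemma coeff_zero_of_mem_pPolynomials [NeZero p] (hq : q ∈ pPolynomials K p) : q.coeff 0 = 0 := by
  induction hq using Submodule.span_induction with
  | mem _ h =>
    obtain ⟨i, rfl⟩ := h
    simp [coeff_X_pow, (NeZero.pos (p ^ i)).ne]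
  | zero => simp
  | add _ _ _ _ h₁ h₂ => simp [h₁, h₂]
  | smul _ _ _ h => simp [h]

section Additivity

variable [Fact p.Prime] [CharP K p] {R : Type*} [Ring R] [Algebra K R] {a b : R}

lemma aeval_sub_of_commute (hq : q ∈ pPolynomials K p) (hab : Commute a b) :
    aeval (a - b) q = aeval a q - aeval b q := by
  nontriviality R
  have : CharP R p := charP_of_injective_algebraMap (algebraMap K R).injective p
  induction hq using Submodule.span_induction with
  | mem _ h =>
    obtain ⟨i, rfl⟩ := h
    simp [sub_pow_char_pow_of_commute _ i hab]
  | zero => simp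
  | add _ _ _ _ h₁ h₂ => rw [map_add, map_add, map_add, h₁, h₂, add_sub_add_comm]
  | smul _ _ _ h => rw [map_smul, map_smul, map_smul, h, smul_sub]

lemma aeval_neg_of_mem_pPolynomials (hq : q ∈ pPolynomials K p) (a : R) :
    aeval (-a) q = -aeval a q := by
  have h0 : aeval (0 : R) q = 0 := by simpa using aeval_sub_of_commute hq (Commute.refl (0 : R))
  simpa [h0] using aeval_sub_of_commute hq (Commute.zero_left a)

lemma aeval_add_of_commute (hq : q ∈ pPolynomials K p) (hab : Commute a b) :
    aeval (a + b) q = aeval a q + aeval b q := by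
  rw [← sub_neg_eq_add, aeval_sub_of_commute hq hab.neg_right, aeval_neg_of_mem_pPolynomials hq,
    sub_neg_eq_add]

end Additivity

lemma exists_monic_mem_pPolynomials_aeval_eq_zero (K : Type*) [Field K] {p : ℕ} (hp : 1 < p)
    {R : Type*} [Ring R] [Algebra K R] [FiniteDimensional K R] (a : R) :
    ∃ q ∈ pPolynomials K p, q.Monic ∧ p ∣ q.natDegree ∧ aeval a q = 0 := by
  let f (i : ℕ) : K[X] := X ^ p ^ (i + 1)
  let S : ℕ →o Submodule K R :=
    ⟨fun n ↦ Submodule.span K (aeval a ∘ f '' Set.Iio n),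
      fun m n h ↦ Submodule.span_mono (Set.image_mono (Set.Iio_subset_Iio h))⟩
  obtain ⟨n, hn⟩ := monotone_stabilizes_iff_noetherian.mpr inferInstance S
  have hmem : aeval a (f n) ∈ S n := by
    rw [hn (n + 1) n.le_succ]
    exact Submodule.subset_span ⟨n, n.lt_succ_self, rfl⟩
  have hS : S n = (Submodule.span K (f '' Set.Iio n)).map (aeval a).toLinearMap := by
    rw [Submodule.map_span, ← Set.image_comp]
    rfl
  obtain ⟨r, hr, hra⟩ : ∃ r ∈ Submodule.span K (f '' Set.Iio n), aeval a r = aeval a (f n) := by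
    rwa [hS, Submodule.mem_map] at hmem
  have hdeg : r.degree < (f n).degree := by
    rw [degree_X_pow, ← mem_degreeLT]
    refine Submodule.span_le.mpr ?_ hr
    rintro _ ⟨i, hi, rfl⟩
    rw [SetLike.mem_coe, mem_degreeLT, degree_X_pow, Nat.cast_lt]
    exact Nat.pow_lt_pow_right hp (Nat.succ_lt_succ hi)
  have hrp : r ∈ pPolynomials K p := by
    refine Submodule.span_mono ?_ hr
    rintro _ ⟨i, -, rfl⟩
    exact ⟨i + 1, rfl⟩
  refine ⟨f n - r, sub_mem (Submodule.subset_span ⟨n + 1, rfl⟩) hrp, ?_, ?_, ?_⟩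
  · exact (monic_X_pow _).sub_of_left hdeg
  · rw [natDegree_eq_of_degree_eq (degree_sub_eq_left_of_degree_lt hdeg), natDegree_X_pow]
    exact dvd_pow_self p n.succ_ne_zero
  · rw [map_sub, hra, sub_self]

end PPolynomial

lemma aeval_divX_mul {K R : Type*} [CommSemiring K] [Semiring R] [Algebra K R] {q : K[X]}
    (hq : q.coeff 0 = 0) (a : R) : aeval a q.divX * a = aeval a q := by
  nth_rw 2 [← divX_mul_X_add q]
  simp [hq]

section Intertwining

variable {K V W : Type*} [Field K] [AddCommGroup V] [Module K V] [AddCommGroup W] [Module K W]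

lemma aeval_apply_of_comm {S : Module.End K V} {T : Module.End K W} (f : V →ₗ[K] W)
    (h : ∀ v, f (S v) = T (f v)) (q : K[X]) (v : V) : f (aeval S q v) = aeval T q (f v) := by
  have hpow (n : ℕ) : f ((S ^ n) v) = (T ^ n) (f v) := by
    induction n with
    | zero => simp
    | succ n ih => rw [pow_succ', pow_succ', Module.End.mul_apply, h, ih, Module.End.mul_apply]
  induction q using Polynomial.induction_on' with
  | add q r hq hr => simp [hq, hr]
  | monomial n a => simp [aeval_monomial, hpow]

lemma aeval_compRight_apply (T : Module.End K W) (q : K[X]) (φ : V →ₗ[K] W) :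
    aeval (compRight K T : Module.End K (V →ₗ[K] W)) q φ = aeval T q ∘ₗ φ := by
  ext v
  exact aeval_apply_of_comm (applyₗ v) (fun _ ↦ rfl) q φ

lemma aeval_lcomp_apply (S : Module.End K V) (q : K[X]) (φ : V →ₗ[K] W) :
    aeval (lcomp K W S : Module.End K (V →ₗ[K] W)) q φ = φ ∘ₗ aeval S q := by
  have hpow (n : ℕ) : ((lcomp K W S : Module.End K (V →ₗ[K] W)) ^ n) φ = φ ∘ₗ (S ^ n) := by
    induction n with
    | zero => rfl
    | succ n ih => rw [pow_succ', Module.End.mul_apply, ih]; rfl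
  induction q using Polynomial.induction_on' with
  | add q r hq hr => rw [map_add, map_add, LinearMap.add_apply, hq, hr, comp_add]
  | monomial n a => simp [← C_mul_X_pow_eq_monomial, ← smul_eq_C_mul, hpow, comp_smul]

end Intertwining

lemma aeval_toEnd_map {K L V W : Type*} [Field K] [LieRing L] [LieAlgebra K L]
    [AddCommGroup V] [Module K V] [LieRingModule L V] [LieModule K L V]
    [AddCommGroup W] [Module K W] [LieRingModule L W] [LieModule K L W]
    (f : V →ₗ⁅K,L⁆ W) (q : K[X]) (x : L) (v : V) :
    f (aeval (toEnd K L V x) q v) = aeval (toEnd K L W x) q (f v) :=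
  aeval_apply_of_comm (f : V →ₗ[K] W) (f.map_lie x) q v

section PPolynomialAction

variable {K L V W : Type*} [Field K] {p : ℕ} [Fact p.Prime] [CharP K p] {q : K[X]}
  [LieRing L] [LieAlgebra K L]
  [AddCommGroup V] [Module K V] [LieRingModule L V] [LieModule K L V]
  [AddCommGroup W] [Module K W] [LieRingModule L W] [LieModule K L W]

lemma aeval_toEnd_linearMap_apply (hq : q ∈ pPolynomials K p) (x : L) (φ : V →ₗ[K] W) :
    aeval (toEnd K L (V →ₗ[K] W) x) q φ =
      aeval (toEnd K L W x) q ∘ₗ φ - φ ∘ₗ aeval (toEnd K L V x) q := by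
  have hsub : toEnd K L (V →ₗ[K] W) x =
      (compRight K (toEnd K L W x) - lcomp K W (toEnd K L V x) : Module.End K (V →ₗ[K] W)) := rfl
  have hcomm : Commute (compRight K (toEnd K L W x) : Module.End K (V →ₗ[K] W))
      (lcomp K W (toEnd K L V x)) := rfl
  rw [hsub, aeval_sub_of_commute hq hcomm, LinearMap.sub_apply, aeval_compRight_apply,
    aeval_lcomp_apply]

lemma aeval_toEnd_tensorProduct (hq : q ∈ pPolynomials K p) (x : L) :
    aeval (toEnd K L (V ⊗[K] W) x) q =
      rTensor W (aeval (toEnd K L V x) q) + lTensor V (aeval (toEnd K L W x) q) := by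
  let R := Module.End.rTensorAlgHom K V W
  let T := Module.End.lTensorAlgHom K W V
  have hadd : toEnd K L (V ⊗[K] W) x = R (toEnd K L V x) + T (toEnd K L W x) := rfl
  have hcomm : Commute (R (toEnd K L V x)) (T (toEnd K L W x)) :=
    (rTensor_comp_lTensor ..).trans (lTensor_comp_rTensor ..).symm
  rw [hadd, aeval_add_of_commute hq hcomm, aeval_algHom_apply R, aeval_algHom_apply T]
  rfl

lemma aeval_toEnd_comp_toEnd_comm (hq : q ∈ pPolynomials K p) {x : L}
    (had : aeval (toEnd K L L x) q = 0) (l : L) (v : V) :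
    aeval (toEnd K L V x) q ⁅l, v⁆ = ⁅l, aeval (toEnd K L V x) q v⁆ := by
  have hequiv (n : L) : toEnd K L V ⁅x, n⁆ = toEnd K L (V →ₗ[K] V) x (toEnd K L V n) := by
    ext v
    simp
  have hzero : aeval (toEnd K L (V →ₗ[K] V) x) q (toEnd K L V l) = 0 := by
    have := aeval_apply_of_comm (S := toEnd K L L x) (toEnd K L V : L →ₗ[K] V →ₗ[K] V) hequiv q l
    simpa [had] using this.symm
  rw [aeval_toEnd_linearMap_apply hq, sub_eq_zero] at hzero
  exact LinearMap.congr_fun hzero v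

end PPolynomialAction

section Contraction

variable {K L M : Type*} [Field K] {q q' : K[X]}
  [LieRing L] [LieAlgebra K L]
  [AddCommGroup M] [Module K M] [LieRingModule L M] [LieModule K L M]

/-- The contraction `(q / X)(θ_x) ∘ ι_x` of a cochain with the formal element `q(x)`. -/
def contraction (q : K[X]) (x : L) : (L →ₗ[K] M) →ₗ[K] M :=
  aeval (toEnd K L M x) q.divX ∘ₗ applyₗ x

variable (K L M) in
/-- The coboundary map `m ↦ (l ↦ ⁅l, m⁆)` from 0-cochains to 1-cochains. -/
def d₀₁ : M →ₗ[K] L →ₗ[K] M := (toEnd K L M : L →ₗ[K] M →ₗ[K] M).flip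

lemma d₀₁_lie (x : L) (m : M) : d₀₁ K L M ⁅x, m⁆ = ⁅x, d₀₁ K L M m⁆ := by
  ext l
  simp [d₀₁]

lemma d₁₂_apply_eq (x : L) (g : L →ₗ[K] M) : d₁₂ K L M g x = ⁅x, g⁆ - d₀₁ K L M (g x) := by
  ext l
  simp [d₀₁]
  abel

lemma contraction_d₀₁ (hq : q.coeff 0 = 0) (x : L) (m : M) :
    contraction q x (d₀₁ K L M m) = aeval (toEnd K L M x) q m := by
  rw [← aeval_divX_mul hq]
  rfl

/-- Cartan's homotopy formula for the contraction with `q(x)`. -/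
lemma contraction_d₁₂ (hq : q.coeff 0 = 0) (x : L) (g : L →ₗ[K] M) :
    contraction q x (d₁₂ K L M g).val =
      aeval (toEnd K L (L →ₗ[K] M) x) q g - d₀₁ K L M (contraction q x g) := by
  have hd₀₁ : aeval (toEnd K L (L →ₗ[K] M) x) q.divX (d₀₁ K L M (g x)) =
      d₀₁ K L M (contraction q x g) :=
    (aeval_apply_of_comm _ (d₀₁_lie x) _ _).symm
  have hlie : aeval (toEnd K L (L →ₗ[K] M) x) q.divX ⁅x, g⁆ =
      aeval (toEnd K L (L →ₗ[K] M) x) q g := by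
    rw [← aeval_divX_mul hq, Module.End.mul_apply, toEnd_apply_apply]
  rw [← hd₀₁, ← hlie, ← map_sub, ← d₁₂_apply_eq]
  rfl

variable {p : ℕ} [Fact p.Prime] [CharP K p]

lemma contraction_contraction_d₁₂ (hq : q ∈ pPolynomials K p) (hq' : q' ∈ pPolynomials K p)
    {x y : L} (had : aeval (toEnd K L L x) q = 0) (hx : aeval (toEnd K L M x) q = 0)
    (hy : aeval (toEnd K L M y) q' = 0) (g : L →ₗ[K] M) :
    contraction q' y (contraction q x (d₁₂ K L M g).val) = 0 := by
  rw [contraction_d₁₂ (coeff_zero_of_mem_pPolynomials hq), aeval_toEnd_linearMap_apply hq, had, hx,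
    map_sub, contraction_d₀₁ (coeff_zero_of_mem_pPolynomials hq'), hy]
  simp

lemma lie_contraction_eq_zero (hq : q ∈ pPolynomials K p) {x : L}
    (had : aeval (toEnd K L L x) q = 0) (hx : aeval (toEnd K L M x) q = 0)
    {c : L →ₗ[K] M} (hc : d₁₂ K L M c = 0) (l : L) : ⁅l, contraction q x c⁆ = 0 := by
  have h := contraction_d₁₂ (coeff_zero_of_mem_pPolynomials hq) x c
  rw [hc, aeval_toEnd_linearMap_apply hq, had, hx] at h
  have := LinearMap.congr_fun h l
  simpa [d₀₁] using this

end Contraction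

section CupProduct

variable {K L E₁ E₂ : Type*} [Field K] [LieRing L] [LieAlgebra K L]
  [AddCommGroup E₁] [Module K E₁] [AddCommGroup E₂] [Module K E₂]

/-- The cup product of two 1-cochains, a 2-cochain with values in the tensor product. -/
def cupProduct (c₁ : L →ₗ[K] E₁) (c₂ : L →ₗ[K] E₂) : twoCochain K L (E₁ ⊗[K] E₂) where
  val := (TensorProduct.mk K E₁ E₂).compl₁₂ c₁ c₂ - ((TensorProduct.mk K E₁ E₂).compl₁₂ c₁ c₂).flip
  property x := by simp

lemma cupProduct_apply (c₁ : L →ₗ[K] E₁) (c₂ : L →ₗ[K] E₂) (l n : L) :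
    cupProduct c₁ c₂ l n = c₁ l ⊗ₜ c₂ n - c₁ n ⊗ₜ c₂ l := rfl

variable [LieRingModule L E₁] [LieModule K L E₁] [LieRingModule L E₂] [LieModule K L E₂]
  {c₁ : L →ₗ[K] E₁} {c₂ : L →ₗ[K] E₂}

lemma apply_lie_of_d₁₂_eq_zero (hc : d₁₂ K L E₁ c₁ = 0) (l n : L) :
    c₁ ⁅l, n⁆ = ⁅l, c₁ n⁆ - ⁅n, c₁ l⁆ := by
  have : d₁₂ K L E₁ c₁ l n = 0 := by rw [hc]; rfl
  rw [d₁₂_apply_apply, sub_eq_zero] at this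
  exact this.symm

lemma cupProduct_mem_twoCocycle (h₁ : d₁₂ K L E₁ c₁ = 0) (h₂ : d₁₂ K L E₂ c₂ = 0) :
    cupProduct c₁ c₂ ∈ twoCocycle K L (E₁ ⊗[K] E₂) := by
  rw [mem_twoCocycle_iff]
  ext l m n
  simp only [d₂₃_apply, cupProduct_apply, lie_sub, TensorProduct.LieModule.lie_tmul_right,
    apply_lie_of_d₁₂_eq_zero h₁, apply_lie_of_d₁₂_eq_zero h₂, sub_tmul, tmul_sub,
    LinearMap.zero_apply]
  abel

lemma lie_eq_zero_of_apply_eq_zero (hc : d₁₂ K L E₁ c₁ = 0) {x : L} (hx : c₁ x = 0) :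
    ⁅x, c₁⁆ = 0 := by
  ext l
  simp [apply_lie_of_d₁₂_eq_zero hc, hx]

lemma contraction_cupProduct (q : K[X]) {x : L} (hc : d₁₂ K L E₂ c₂ = 0) (hx : c₂ x = 0) :
    contraction q x (cupProduct c₁ c₂).val =
      (TensorProduct.mk K E₁ E₂ (contraction q x c₁)) ∘ₗ c₂ := by
  let f : E₁ →ₗ[K] L →ₗ[K] E₁ ⊗[K] E₂ := (lcomp K (E₁ ⊗[K] E₂) c₂) ∘ₗ TensorProduct.mk K E₁ E₂
  have hf (v : E₁) : f (toEnd K L E₁ x v) = toEnd K L (L →ₗ[K] E₁ ⊗[K] E₂) x (f v) := by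
    ext l
    have : ⁅x, c₂ l⁆ - c₂ ⁅x, l⁆ = 0 :=
      LinearMap.congr_fun (lie_eq_zero_of_apply_eq_zero hc hx) l
    simp [f, TensorProduct.LieModule.lie_tmul_right, sub_eq_zero.mp this]
  have hcup : (cupProduct c₁ c₂).val x = f (c₁ x) := by
    ext l
    simp [f, cupProduct_apply, hx]
  change (aeval _ q.divX : Module.End K _) ((cupProduct c₁ c₂).val x) = f (contraction q x c₁)
  rw [hcup, ← aeval_apply_of_comm f hf]
  rfl

lemma contraction_mk_comp (q : K[X]) {y : L} {v : E₁} (hv : ⁅y, v⁆ = 0) (c : L →ₗ[K] E₂) :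
    contraction q y (TensorProduct.mk K E₁ E₂ v ∘ₗ c) = v ⊗ₜ contraction q y c := by
  refine (aeval_apply_of_comm (TensorProduct.mk K E₁ E₂ v) (fun w ↦ ?_) q.divX (c y)).symm
  simp [TensorProduct.LieModule.lie_tmul_right, hv]

end CupProduct

lemma tmul_ne_zero_of_ne_zero {K V W : Type*} [Field K] [AddCommGroup V] [Module K V]
    [AddCommGroup W] [Module K W] {v : V} {w : W} (hv : v ≠ 0) (hw : w ≠ 0) : v ⊗ₜ[K] w ≠ 0 := by
  obtain ⟨f, hf⟩ := Module.Projective.exists_dual_eq_one K hv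
  obtain ⟨g, hg⟩ := Module.Projective.exists_dual_eq_one K hw
  intro h
  simpa [hf, hg] using congrArg (TensorProduct.lid K K ∘ TensorProduct.map f g) h

section Detection

variable {K : Type u} {L : Type v} [Field K] [LieRing L] [LieAlgebra K L]

/-- A 1-cocycle `c` with `c y = 0` which the contraction with `q(x)` detects, on a module
annihilated by `q(x)` and `q'(y)`. -/
structure Detects {E : Type*} [AddCommGroup E] [Module K E] [LieRingModule L E] [LieModule K L E]
    (q q' : K[X]) (x y : L) (c : L →ₗ[K] E) : Prop where
  d₁₂_eq_zero : d₁₂ K L E c = 0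
  aeval_left : aeval (toEnd K L E x) q = 0
  aeval_right : aeval (toEnd K L E y) q' = 0
  apply_right : c y = 0
  contraction_ne_zero : contraction q x c ≠ 0

/-- Existence of a 1-cocycle with finite-dimensional coefficients which `q(x)` detects. -/
def HasDetectedCocycle (q q' : K[X]) (x y : L) : Prop :=
  ∃ (E : Type u) (_ : AddCommGroup E) (_ : Module K E) (_ : LieRingModule L E)
    (_ : LieModule K L E) (_ : FiniteDimensional K E) (c : L →ₗ[K] E), Detects q q' x y c

variable {p : ℕ} [Fact p.Prime] [CharP K p] {q q' : K[X]} {x y : L}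

theorem Detects.cupProduct_notMem_range {E₁ E₂ : Type*}
    [AddCommGroup E₁] [Module K E₁] [LieRingModule L E₁] [LieModule K L E₁]
    [AddCommGroup E₂] [Module K E₂] [LieRingModule L E₂] [LieModule K L E₂]
    {c₁ : L →ₗ[K] E₁} {c₂ : L →ₗ[K] E₂}
    (hq : q ∈ pPolynomials K p) (hq' : q' ∈ pPolynomials K p) (had : aeval (toEnd K L L x) q = 0)
    (h₁ : Detects q q' x y c₁) (h₂ : Detects q' q y x c₂) :
    cupProduct c₁ c₂ ∉ range (d₁₂ K L (E₁ ⊗[K] E₂)) := by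
  rintro ⟨g, hg⟩
  have hx : aeval (toEnd K L (E₁ ⊗[K] E₂) x) q = 0 := by
    rw [aeval_toEnd_tensorProduct hq, h₁.aeval_left, h₂.aeval_right, rTensor_zero,
      lTensor_zero, add_zero]
  have hy : aeval (toEnd K L (E₁ ⊗[K] E₂) y) q' = 0 := by
    rw [aeval_toEnd_tensorProduct hq', h₁.aeval_right, h₂.aeval_left, rTensor_zero,
      lTensor_zero, add_zero]
  have hinv : ⁅y, contraction q x c₁⁆ = 0 :=
    lie_contraction_eq_zero hq had h₁.aeval_left h₁.d₁₂_eq_zero y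
  have hcontr := contraction_contraction_d₁₂ hq hq' had hx hy g
  rw [hg, contraction_cupProduct q h₂.d₁₂_eq_zero h₂.apply_right,
    contraction_mk_comp q' hinv] at hcontr
  exact tmul_ne_zero_of_ne_zero h₁.contraction_ne_zero h₂.contraction_ne_zero hcontr

end Detection

section InnerDerivation

variable {K : Type u} {L : Type v} [Field K] [LieRing L] [LieAlgebra K L]
  {p : ℕ} [Fact p.Prime] [CharP K p] {q q' : K[X]} {x y : L}

section

variable {V : Type*} [AddCommGroup V] [Module K V] [LieRingModule L V] [LieModule K L V]

variable (V) in
/-- The kernel of `q(x)` on an `L`-module; it is stable under `L` because `q(ad x) = 0`. -/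
def aevalKer (hq : q ∈ pPolynomials K p) (had : aeval (toEnd K L L x) q = 0) :
    LieSubmodule K L V where
  __ := ker (aeval (toEnd K L V x) q)
  lie_mem {l v} hv := by
    change aeval (toEnd K L V x) q v = 0 at hv
    change aeval (toEnd K L V x) q ⁅l, v⁆ = 0
    rw [aeval_toEnd_comp_toEnd_comm hq had, hv, lie_zero]

variable {e : V}

lemma lie_mem_aevalKer (hq : q ∈ pPolynomials K p) (had : aeval (toEnd K L L x) q = 0)
    (hinv : ∀ l : L, ⁅l, aeval (toEnd K L V x) q e⁆ = 0) (l : L) :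
    d₀₁ K L V e l ∈ aevalKer V hq had :=
  (aeval_toEnd_comp_toEnd_comm hq had l e).trans (hinv l)

/-- The coboundary `l ↦ ⁅l, e⁆` as a cochain with values in `aevalKer`, where it need no longer be a
coboundary. -/
def innerCochain (hq : q ∈ pPolynomials K p) (had : aeval (toEnd K L L x) q = 0)
    (hinv : ∀ l : L, ⁅l, aeval (toEnd K L V x) q e⁆ = 0) : L →ₗ[K] aevalKer V hq had :=
  (d₀₁ K L V e).codRestrict (aevalKer V hq had).toSubmodule (lie_mem_aevalKer hq had hinv)

@[simp]
lemma coe_innerCochain_apply (hq : q ∈ pPolynomials K p) (had : aeval (toEnd K L L x) q = 0)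
    (hinv : ∀ l : L, ⁅l, aeval (toEnd K L V x) q e⁆ = 0) (l : L) :
    (innerCochain hq had hinv l : V) = ⁅l, e⁆ := rfl

lemma detects_innerCochain (hq : q ∈ pPolynomials K p) (had : aeval (toEnd K L L x) q = 0)
    (hy : aeval (toEnd K L V y) q' = 0) (hye : ⁅y, e⁆ = 0)
    (hinv : ∀ l : L, ⁅l, aeval (toEnd K L V x) q e⁆ = 0) (hne : aeval (toEnd K L V x) q e ≠ 0) :
    Detects q q' x y (innerCochain hq had hinv) where
  d₁₂_eq_zero := by
    ext l n
    simp
  aeval_left := by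
    ext v
    exact (aeval_toEnd_map (aevalKer V hq had).incl q x v).trans v.2
  aeval_right := by
    ext v
    refine (aeval_toEnd_map (aevalKer V hq had).incl q' y v).trans ?_
    simp [hy]
  apply_right := Subtype.ext hye
  contraction_ne_zero h := by
    refine hne ?_
    have hcoe := aeval_toEnd_map (aevalKer V hq had).incl q.divX x (innerCochain hq had hinv x)
    rw [← contraction_d₀₁ (coeff_zero_of_mem_pPolynomials hq)]
    exact hcoe.symm.trans ((congrArg (aevalKer V hq had).incl h).trans (map_zero _))

end

lemma hasDetectedCocycle_of_commutator_eq {W : Type u} [AddCommGroup W] [Module K W]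
    [FiniteDimensional K W] [LieRingModule L W] [LieModule K L W] (hq : q ∈ pPolynomials K p)
    (hq' : q' ∈ pPolynomials K p) (had : aeval (toEnd K L L x) q = 0)
    (hy : aeval (toEnd K L W y) q' = 0) {t e : Module.End K W}
    (ht : aeval (toEnd K L W x) q = t) (hne : t ≠ 0) (hcomm : t ∘ₗ e - e ∘ₗ t = t)
    (hye : ∀ w, ⁅y, e w⁆ = e ⁅y, w⁆) :
    HasDetectedCocycle q q' x y := by
  have hte : aeval (toEnd K L (W →ₗ[K] W) x) q e = t := by
    rw [aeval_toEnd_linearMap_apply hq, ht, hcomm]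
  have hinv (l : L) : ⁅l, aeval (toEnd K L (W →ₗ[K] W) x) q e⁆ = 0 := by
    ext w
    rw [hte, ← ht]
    simp [aeval_toEnd_comp_toEnd_comm hq had]
  have hyE : aeval (toEnd K L (W →ₗ[K] W) y) q' = 0 := by
    ext φ : 1
    simp [aeval_toEnd_linearMap_apply hq', hy]
  refine ⟨aevalKer (W →ₗ[K] W) hq had, inferInstance, inferInstance, inferInstance, inferInstance,
    inferInstanceAs (FiniteDimensional K (aevalKer (W →ₗ[K] W) hq had).toSubmodule), _,
    detects_innerCochain hq had hyE ?_ hinv (hte ▸ hne)⟩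
  ext w
  simp [hye]

lemma hasDetectedCocycle_of_quotient {V : Type u} [AddCommGroup V] [Module K V] [LieRingModule L V]
    [LieModule K L V] (hq : q ∈ pPolynomials K p) (hq' : q' ∈ pPolynomials K p)
    (had : aeval (toEnd K L L x) q = 0) (hy : aeval (toEnd K L V y) q' = 0)
    (N : LieSubmodule K L V) [FiniteDimensional K (V ⧸ N)] {t e : Module.End K V}
    (ht : aeval (toEnd K L V x) q = t) (hne : ∃ v, t v ∉ N) (heN : ∀ v ∈ N, e v ∈ N)
    (hcomm : ∀ v, t (e v) - e (t v) - t v ∈ N) (hye : ∀ v, ⁅y, e v⁆ = e ⁅y, v⁆) :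
    HasDetectedCocycle q q' x y := by
  let π := LieSubmodule.Quotient.mk' N
  have hπ : Function.Surjective π := LieSubmodule.Quotient.surjective_mk' N
  have hπ0 (v : V) : π v = 0 ↔ v ∈ N := LieSubmodule.Quotient.mk_eq_zero N
  let eN : Module.End K (V ⧸ N) := N.toSubmodule.mapQ N.toSubmodule e heN
  have map_mk (v : V) : eN (π v) = π (e v) := rfl
  have ht' (v : V) : aeval (toEnd K L (V ⧸ N) x) q (π v) = π (t v) := by
    rw [← aeval_toEnd_map, ht]
  refine hasDetectedCocycle_of_commutator_eq hq hq' had ?_ rfl ?_ (e := eN) ?_ ?_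
  · ext w
    obtain ⟨v, rfl⟩ := hπ w
    rw [← aeval_toEnd_map, hy, LinearMap.zero_apply, LinearMap.zero_apply, map_zero]
  · obtain ⟨v, hv⟩ := hne
    intro h
    exact hv ((hπ0 _).mp (by rw [← ht', h, LinearMap.zero_apply]))
  · ext w
    obtain ⟨v, rfl⟩ := hπ w
    rw [LinearMap.sub_apply, comp_apply, comp_apply, map_mk, ht', ht', map_mk, ← sub_eq_zero,
      ← map_sub, ← map_sub, hπ0]
    exact hcomm v
  · intro w
    obtain ⟨v, rfl⟩ := hπ w
    rw [map_mk, ← π.map_lie, ← π.map_lie, map_mk, hye]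

end InnerDerivation

lemma aeval_toEnd_mul {K L B : Type*} [Field K] {p : ℕ} [Fact p.Prime] [CharP K p] {q : K[X]}
    [LieRing L] [LieAlgebra K L] [CommRing B] [Algebra K B] [LieRingModule L B] [LieModule K L B]
    (hq : q ∈ pPolynomials K p) {x : L} {δ : Module.End K B}
    (hδ : ∀ b c : B, ⁅x, b * c⁆ = δ b * c + b * ⁅x, c⁆) (b c : B) :
    aeval (toEnd K L B x) q (b * c) = aeval δ q b * c + b * aeval (toEnd K L B x) q c := by
  have hmul (b : B) : LinearMap.mul K B (δ b) = toEnd K L (B →ₗ[K] B) x (LinearMap.mul K B b) := by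
    ext c
    simp [hδ]
  have h := aeval_apply_of_comm (LinearMap.mul K B) hmul q b
  rw [aeval_toEnd_linearMap_apply hq] at h
  exact (sub_eq_iff_eq_add.mp (LinearMap.congr_fun h c).symm)

section PolynomialModule

variable {K : Type u} {L : Type v} {A : Type u} [Field K] [LieRing L]
  [CommRing A] [Algebra K A] [LieRingModule L A[X]] {q q' : K[X]} {x y : L} {g : A[X]}

variable (K L) in
/-- The principal ideal generated by `a`, for `a` commuting with the action of `L`. -/
def spanLieSubmodule (a : A[X]) (ha : ∀ (l : L) (r : A[X]), ⁅l, a * r⁆ = a * ⁅l, r⁆) :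
    LieSubmodule K L A[X] where
  __ := (Ideal.span {a}).restrictScalars K
  lie_mem {l r} hr := by
    obtain ⟨s, rfl⟩ := Ideal.mem_span_singleton.mp (show r ∈ Ideal.span {a} from hr)
    exact Ideal.mem_span_singleton.mpr ⟨⁅l, s⁆, ha l s⟩

lemma mem_spanLieSubmodule {a r : A[X]}
    {ha : ∀ (l : L) (r : A[X]), ⁅l, a * r⁆ = a * ⁅l, r⁆} :
    r ∈ spanLieSubmodule K L a ha ↔ a ∣ r :=
  Ideal.mem_span_singleton

lemma finiteDimensional_quotient_spanLieSubmodule [FiniteDimensional K A] {a : A[X]}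
    (hmonic : a.Monic) (ha : ∀ (l : L) (r : A[X]), ⁅l, a * r⁆ = a * ⁅l, r⁆) :
    FiniteDimensional K (A[X] ⧸ spanLieSubmodule K L a ha) := by
  have : Module.Finite A (A[X] ⧸ Ideal.span {a}) := hmonic.finite_quotient
  have : Module.Finite K (A[X] ⧸ Ideal.span {a}) := Module.Finite.trans A _
  exact Module.Finite.equiv (Submodule.Quotient.restrictScalarsEquiv K (Ideal.span {a})).symm

variable [LieAlgebra K L] [LieModule K L A[X]] {p : ℕ} [Fact p.Prime] [CharP K p]

lemma lie_mul_of_aeval_toEnd_eq_mul (hq : q ∈ pPolynomials K p) (had : aeval (toEnd K L L x) q = 0)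
    (hg : ∀ r : A[X], aeval (toEnd K L A[X] x) q r = g * r) (l : L) (r : A[X]) :
    ⁅l, g * r⁆ = g * ⁅l, r⁆ := by
  rw [← hg, ← hg, aeval_toEnd_comp_toEnd_comm hq had]

lemma not_mul_self_dvd_of_monic [Nontrivial A] (hmonic : g.Monic) (hdeg : g.natDegree ≠ 0) :
    ¬ g * g ∣ g := by
  refine (hmonic.mul hmonic).not_dvd_of_natDegree_lt hmonic.ne_zero ?_
  rw [hmonic.natDegree_mul hmonic]
  lia

lemma hasDetectedCocycle_of_aeval_toEnd_eq_mul [FiniteDimensional K A] [Nontrivial A]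
    (hq : q ∈ pPolynomials K p) (hq' : q' ∈ pPolynomials K p) (had : aeval (toEnd K L L x) q = 0)
    (hy : aeval (toEnd K L A[X] y) q' = 0)
    (hg : ∀ r : A[X], aeval (toEnd K L A[X] x) q r = g * r) (hmonic : g.Monic)
    (hdeg : g.natDegree ≠ 0) (hmod : ∀ r : A[X], ⁅y, r %ₘ g⁆ = ⁅y, r⁆ %ₘ g) :
    HasDetectedCocycle q q' x y := by
  have hlie (l : L) (r : A[X]) : ⁅l, (g * g) * r⁆ = (g * g) * ⁅l, r⁆ := by
    simp only [mul_assoc, lie_mul_of_aeval_toEnd_eq_mul hq had hg]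
  let N := spanLieSubmodule K L (g * g) hlie
  have : FiniteDimensional K (A[X] ⧸ N) :=
    finiteDimensional_quotient_spanLieSubmodule (hmonic.mul hmonic) hlie
  refine hasDetectedCocycle_of_quotient hq hq' had hy N
    (e := (modByMonicHom g).restrictScalars K) rfl ⟨1, ?_⟩ (fun r hr ↦ ?_) (fun r ↦ ?_) hmod
  · rw [hg, mul_one, mem_spanLieSubmodule]
    exact not_mul_self_dvd_of_monic hmonic hdeg
  · have : r %ₘ g = 0 :=
      (modByMonic_eq_zero_iff_dvd hmonic).mpr
        ((dvd_mul_right g g).trans (mem_spanLieSubmodule.mp hr))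
    simp [modByMonicHom_apply, this]
  · have hrem : g * r %ₘ g = 0 := (modByMonic_eq_zero_iff_dvd hmonic).mpr (dvd_mul_right g r)
    rw [mem_spanLieSubmodule]
    refine ⟨-(r /ₘ g), ?_⟩
    simp only [hg, coe_restrictScalars, modByMonicHom_apply, hrem]
    linear_combination g * modByMonic_add_div r g

end PolynomialModule

section GaugeTwist

variable {K L B : Type*} [Field K] [LieRing L] [LieAlgebra K L] [CommRing B] [Algebra K B]

/-- The action `l ↦ exp(-b) ∘ Δ l ∘ exp b = Δ l + Δ l b` of `L` on a commutative algebra on which it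
acts by derivations. -/
abbrev gaugeTwist (Δ : L →ₗ⁅K⁆ Derivation K B B) (b : B) : LieRingModule L B where
  bracket l r := Δ l r + Δ l b * r
  add_lie l n r := by
    change Δ (l + n) r + Δ (l + n) b * r = Δ l r + Δ l b * r + (Δ n r + Δ n b * r)
    simp only [map_add, Derivation.add_apply]
    ring
  lie_add l r s := by
    change Δ l (r + s) + Δ l b * (r + s) = Δ l r + Δ l b * r + (Δ l s + Δ l b * s)
    simp only [map_add]
    ring
  leibniz_lie l n r := by
    change Δ l (Δ n r + Δ n b * r) + Δ l b * (Δ n r + Δ n b * r) =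
      Δ ⁅l, n⁆ r + Δ ⁅l, n⁆ b * r + (Δ n (Δ l r + Δ l b * r) + Δ n b * (Δ l r + Δ l b * r))
    simp only [LieHom.map_lie, Derivation.commutator_apply, map_add, Derivation.leibniz,
      smul_eq_mul]
    ring

lemma gaugeTwist_lieModule (Δ : L →ₗ⁅K⁆ Derivation K B B) (b : B) :
    letI := gaugeTwist Δ b
    LieModule K L B :=
  letI := gaugeTwist Δ b
  { smul_lie := fun a l r ↦ by
      change Δ (a • l) r + Δ (a • l) b * r = a • (Δ l r + Δ l b * r)
      simp
    lie_smul := fun a l r ↦ by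
      change Δ l (a • r) + Δ l b * (a • r) = a • (Δ l r + Δ l b * r)
      simp }

end GaugeTwist

section CoeffDerivation

variable {K A : Type*} [Field K] [CommRing A] [Algebra K A]

variable (K A) in
/-- The extension of derivations of `A` to `A[X]` by `X ↦ 0`, that is, coefficientwise. -/
def coeffDerivation : Derivation K A A →ₗ⁅K⁆ Derivation K A[X] A[X] where
  toFun d := (PolynomialModule.equivPolynomialSelf (R := A)).toLinearMap.compDer d.mapCoeffs
  map_add' d d' := by
    ext
    rfl
  map_smul' a d := by
    ext
    rfl
  map_lie' {d d'} := by
    ext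
    simp [PolynomialModule.equivPolynomialSelf, LinearMap.compDer, Derivation.commutator_apply]

@[simp]
lemma coeff_coeffDerivation (d : Derivation K A A) (r : A[X]) (n : ℕ) :
    (coeffDerivation K A d r).coeff n = d (r.coeff n) := rfl

lemma coeffDerivation_C_mul_X (d : Derivation K A A) (a : A) :
    coeffDerivation K A d (C a * X) = C (d a) * X := by
  ext n
  rw [coeff_coeffDerivation, coeff_C_mul_X, coeff_C_mul_X, apply_ite d, map_zero]

lemma aeval_coeffDerivation_eq_zero {d : Derivation K A A} {q : K[X]}
    (hd : aeval (d : Module.End K A) q = 0) :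
    aeval (coeffDerivation K A d : Module.End K A[X]) q = 0 := by
  ext r n
  have := aeval_apply_of_comm (S := coeffDerivation K A d) (T := d)
    (LinearMap.restrictScalars K (lcoeff A n)) (fun r ↦ coeff_coeffDerivation d r n) q r
  simpa [hd] using this

lemma coeffDerivation_modByMonic [Nontrivial A] (d : Derivation K A A) {g : A[X]}
    (hmonic : g.Monic) (hg : coeffDerivation K A d g = 0) (r : A[X]) :
    coeffDerivation K A d (r %ₘ g) = coeffDerivation K A d r %ₘ g := by
  refine ((div_modByMonic_unique (coeffDerivation K A d (r /ₘ g)) _ hmonic ⟨?_, ?_⟩).2).symm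
  · conv_rhs => rw [← modByMonic_add_div r g]
    simp [hg]
  · refine lt_of_le_of_lt ?_ (degree_modByMonic_lt r hmonic)
    refine (degree_le_iff_coeff_zero _ _).mpr fun n hn ↦ ?_
    rw [coeff_coeffDerivation, coeff_eq_zero_of_degree_lt hn, map_zero]

end CoeffDerivation

section Degree

variable {K A : Type*} [Field K] [CommRing A] [Algebra K A] {T : Module.End K A[X]} {a : A}

lemma natDegree_pow_apply_one_le_and_coeff
    (hT : ∀ (r : A[X]) (n : ℕ), r.natDegree ≤ n →
      (T r).natDegree ≤ n + 1 ∧ (T r).coeff (n + 1) = a * r.coeff n)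
    (n : ℕ) : ((T ^ n) 1).natDegree ≤ n ∧ ((T ^ n) 1).coeff n = a ^ n := by
  induction n with
  | zero => simp
  | succ n ih =>
    obtain ⟨hdeg, hcoeff⟩ := hT _ n ih.1
    rw [pow_succ', Module.End.mul_apply]
    exact ⟨hdeg, by rw [hcoeff, ih.2, pow_succ']⟩

lemma natDegree_aeval_apply_one_le_and_coeff
    (hT : ∀ (r : A[X]) (n : ℕ), r.natDegree ≤ n →
      (T r).natDegree ≤ n + 1 ∧ (T r).coeff (n + 1) = a * r.coeff n)
    {q : K[X]} (hq : q.Monic) :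
    (aeval T q 1).natDegree ≤ q.natDegree ∧ (aeval T q 1).coeff q.natDegree = a ^ q.natDegree := by
  have hpow := natDegree_pow_apply_one_le_and_coeff hT
  rw [aeval_eq_sum_range, LinearMap.sum_apply]
  constructor
  · refine natDegree_sum_le_of_forall_le _ _ fun i hi ↦ ?_
    exact (natDegree_smul_le _ _).trans ((hpow i).1.trans (Finset.mem_range_succ_iff.mp hi))
  · rw [finsetSum_coeff, Finset.sum_range_succ, Finset.sum_eq_zero, zero_add]
    · simp [hq.coeff_natDegree, (hpow _).2]
    · intro i hi
      rw [LinearMap.smul_apply, coeff_smul,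
        coeff_eq_zero_of_natDegree_lt ((hpow i).1.trans_lt (Finset.mem_range.mp hi)), smul_zero]

end Degree

lemma natDegree_ne_zero_of_mem_pPolynomials {K : Type*} [Field K] {p : ℕ} [NeZero p] {q : K[X]}
    (hq : q ∈ pPolynomials K p) (hmonic : q.Monic) : q.natDegree ≠ 0 := fun h ↦ by
  simpa [hmonic.natDegree_eq_zero.mp h] using coeff_zero_of_mem_pPolynomials hq

section GaugeTwistedPolynomials

variable {K : Type u} {L : Type v} {A : Type u} [Field K] [LieRing L] [LieAlgebra K L]
  [CommRing A] [Algebra K A] {D : L →ₗ⁅K⁆ Derivation K A A} {h : A} [LieRingModule L A[X]]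

lemma natDegree_lie_le_and_coeff
    (hlie : ∀ (l : L) (r : A[X]), ⁅l, r⁆ = coeffDerivation K A (D l) r + C (D l h) * X * r)
    (l : L) {r : A[X]} {n : ℕ} (hr : r.natDegree ≤ n) :
    ⁅l, r⁆.natDegree ≤ n + 1 ∧ ⁅l, r⁆.coeff (n + 1) = D l h * r.coeff n := by
  have hcoeff (m : ℕ) : ⁅l, r⁆.coeff (m + 1) = D l (r.coeff (m + 1)) + D l h * r.coeff m := by
    simp [hlie, mul_assoc, coeff_X_mul]
  have hzero {m : ℕ} (hm : n < m) : r.coeff m = 0 := coeff_eq_zero_of_natDegree_lt (hr.trans_lt hm)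
  constructor
  · refine natDegree_le_iff_coeff_eq_zero.mpr fun m hm ↦ ?_
    obtain ⟨m, rfl⟩ := Nat.exists_eq_add_one_of_ne_zero (by lia : m ≠ 0)
    rw [hcoeff, hzero (by lia), hzero (by lia), map_zero, mul_zero, add_zero]
  · rw [hcoeff, hzero n.lt_succ_self, map_zero, zero_add]

variable [LieModule K L A[X]] {p : ℕ} [Fact p.Prime] [CharP K p] {q q' : K[X]} {x y : L}

lemma aeval_toEnd_eq_mul_of_lie_eq
    (hlie : ∀ (l : L) (r : A[X]), ⁅l, r⁆ = coeffDerivation K A (D l) r + C (D l h) * X * r)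
    (hq : q ∈ pPolynomials K p) (hDx : aeval (D x : Module.End K A) q = 0) (r : A[X]) :
    aeval (toEnd K L A[X] x) q r = aeval (toEnd K L A[X] x) q 1 * r := by
  let δ : Module.End K A[X] := coeffDerivation K A (D x)
  have hδ (b c : A[X]) : ⁅x, b * c⁆ = δ b * c + b * ⁅x, c⁆ := by
    simp only [δ, hlie, Derivation.coeFn_coe, Derivation.leibniz, smul_eq_mul]
    ring
  have := aeval_toEnd_mul hq hδ r 1
  rwa [mul_one, aeval_coeffDerivation_eq_zero hDx, LinearMap.zero_apply, zero_mul, zero_add,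
    mul_comm] at this

lemma monic_aeval_toEnd_and_natDegree_eq [Nontrivial A]
    (hlie : ∀ (l : L) (r : A[X]), ⁅l, r⁆ = coeffDerivation K A (D l) r + C (D l h) * X * r)
    (hmonic : q.Monic) (hxh : D x h ^ q.natDegree = 1) :
    (aeval (toEnd K L A[X] x) q 1).Monic ∧
      (aeval (toEnd K L A[X] x) q 1).natDegree = q.natDegree := by
  obtain ⟨hdeg, hcoeff⟩ := natDegree_aeval_apply_one_le_and_coeff
    (T := toEnd K L A[X] x) (fun _ _ ↦ natDegree_lie_le_and_coeff hlie x) hmonic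
  rw [hxh] at hcoeff
  exact ⟨monic_of_natDegree_le_of_coeff_eq_one _ hdeg hcoeff,
    natDegree_eq_of_le_of_coeff_ne_zero hdeg (hcoeff ▸ one_ne_zero)⟩

lemma hasDetectedCocycle_of_lie_eq [FiniteDimensional K A] [Nontrivial A]
    (hlie : ∀ (l : L) (r : A[X]), ⁅l, r⁆ = coeffDerivation K A (D l) r + C (D l h) * X * r)
    (hq : q ∈ pPolynomials K p) (hq' : q' ∈ pPolynomials K p) (hmonic : q.Monic)
    (had : aeval (toEnd K L L x) q = 0) (hDx : aeval (D x : Module.End K A) q = 0)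
    (hDy : aeval (D y : Module.End K A) q' = 0) (hxh : D x h ^ q.natDegree = 1) (hyh : D y h = 0) :
    HasDetectedCocycle q q' x y := by
  have hliey (r : A[X]) : ⁅y, r⁆ = coeffDerivation K A (D y) r := by simp [hlie, hyh]
  have hg := aeval_toEnd_eq_mul_of_lie_eq hlie hq hDx
  have hyg : coeffDerivation K A (D y) (aeval (toEnd K L A[X] x) q 1) = 0 := by
    have := lie_mul_of_aeval_toEnd_eq_mul hq had hg y 1
    rwa [hliey, hliey, mul_one, Derivation.map_one_eq_zero, mul_zero] at this
  obtain ⟨hgmonic, hgdeg⟩ := monic_aeval_toEnd_and_natDegree_eq hlie hmonic hxh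
  refine hasDetectedCocycle_of_aeval_toEnd_eq_mul hq hq' had ?_ hg hgmonic
    (hgdeg ▸ natDegree_ne_zero_of_mem_pPolynomials hq hmonic) fun r ↦ ?_
  · have : toEnd K L A[X] y = coeffDerivation K A (D y) := LinearMap.ext hliey
    rw [this, aeval_coeffDerivation_eq_zero hDy]
  · rw [hliey, hliey, coeffDerivation_modByMonic _ hgmonic hyg]

end GaugeTwistedPolynomials

lemma hasDetectedCocycle_of_derivation {K : Type u} {L : Type v} {A : Type u} [Field K] [LieRing L]
    [LieAlgebra K L] [CommRing A] [Algebra K A] [FiniteDimensional K A] [Nontrivial A]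
    {p : ℕ} [Fact p.Prime] [CharP K p] {q q' : K[X]} {x y : L}
    {D : L →ₗ⁅K⁆ Derivation K A A} {h : A}
    (hq : q ∈ pPolynomials K p) (hq' : q' ∈ pPolynomials K p) (hmonic : q.Monic)
    (had : aeval (toEnd K L L x) q = 0) (hDx : aeval (D x : Module.End K A) q = 0)
    (hDy : aeval (D y : Module.End K A) q' = 0) (hxh : D x h ^ q.natDegree = 1) (hyh : D y h = 0) :
    HasDetectedCocycle q q' x y := by
  let Δ : L →ₗ⁅K⁆ Derivation K A[X] A[X] := (coeffDerivation K A).comp D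
  let _ := gaugeTwist Δ (C h * X)
  have := gaugeTwist_lieModule Δ (C h * X)
  refine hasDetectedCocycle_of_lie_eq (fun l r ↦ ?_) hq hq' hmonic had hDx hDy hxh hyh
  rw [← coeffDerivation_C_mul_X]
  rfl

section QuotientDerivation

variable {K R : Type*} [Field K] [CommRing R] [Algebra K R] (I : Ideal R)

/-- The derivation of `R ⧸ I` induced by a derivation of `R` which maps `I` to itself. -/
def quotientDerivation (d : Derivation K R R) (hd : ∀ r ∈ I, d r ∈ I) :
    Derivation K (R ⧸ I) (R ⧸ I) :=
  Derivation.liftOfSurjective (f := Ideal.Quotient.mkₐ K I) (Ideal.Quotient.mkₐ_surjective K I)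
    (d := d) fun r hr ↦
      Ideal.Quotient.eq_zero_iff_mem.mpr (hd r (Ideal.Quotient.eq_zero_iff_mem.mp hr))

@[simp]
lemma quotientDerivation_mk (d : Derivation K R R) (hd : ∀ r ∈ I, d r ∈ I) (r : R) :
    quotientDerivation I d hd (Ideal.Quotient.mk I r) = Ideal.Quotient.mk I (d r) :=
  Derivation.liftOfSurjective_apply (Ideal.Quotient.mkₐ_surjective K I) (fun s hs ↦
    Ideal.Quotient.eq_zero_iff_mem.mpr (hd s (Ideal.Quotient.eq_zero_iff_mem.mp hs))) r

/-- The action of the derivations of `R` on the quotient by an ideal which all of them preserve. -/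
def quotientDerivationHom (hI : ∀ (d : Derivation K R R), ∀ r ∈ I, d r ∈ I) :
    Derivation K R R →ₗ⁅K⁆ Derivation K (R ⧸ I) (R ⧸ I) where
  toFun d := quotientDerivation I d (hI d)
  map_add' d d' := by
    ext a
    obtain ⟨r, rfl⟩ := Ideal.Quotient.mk_surjective a
    simp
  map_smul' c d := by
    ext a
    obtain ⟨r, rfl⟩ := Ideal.Quotient.mk_surjective a
    simp only [quotientDerivation_mk, Derivation.smul_apply, RingHom.id_apply]
    rfl
  map_lie' {d d'} := by
    ext a
    obtain ⟨r, rfl⟩ := Ideal.Quotient.mk_surjective a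
    simp [Derivation.commutator_apply]

end QuotientDerivation

section FrobeniusQuotient

variable {K R : Type*} [Field K] {p : ℕ} [Fact p.Prime] [CommRing R] [CharP R p]
  [Algebra K R]

lemma derivation_mem_map_frobenius (J : Ideal R) (d : Derivation K R R) (r : R)
    (hr : r ∈ J.map (frobenius R p)) : d r ∈ J.map (frobenius R p) := by
  induction hr using Submodule.span_induction with
  | mem _ h =>
    obtain ⟨s, -, rfl⟩ := h
    simp [_root_.frobenius_def, Derivation.leibniz_pow]
  | zero => simp
  | add _ _ _ _ h₁ h₂ => rw [map_add]; exact add_mem h₁ h₂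
  | smul a s hs h =>
    rw [smul_eq_mul, Derivation.leibniz]
    exact add_mem (Ideal.mul_mem_left _ _ h) (Ideal.mul_mem_right _ _ hs)

variable (ε : R →ₐ[K] K)

lemma mk_pow_eq_algebraMap (r : R) :
    Ideal.Quotient.mk ((RingHom.ker ε).map (frobenius R p)) r ^ p = algebraMap K _ (ε r ^ p) := by
  have hker : r - algebraMap K R (ε r) ∈ RingHom.ker ε := by simp
  have := Ideal.mem_map_of_mem (frobenius R p) hker
  rw [map_sub, _root_.frobenius_def, _root_.frobenius_def, ← map_pow] at this
  rw [← map_pow]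
  exact Ideal.Quotient.eq.mpr this

lemma finiteDimensional_quotient_map_frobenius [Algebra.FiniteType K R] :
    FiniteDimensional K (R ⧸ (RingHom.ker ε).map (frobenius R p)) := by
  have : Algebra.IsIntegral K (R ⧸ (RingHom.ker ε).map (frobenius R p)) := by
    refine ⟨fun a ↦ ?_⟩
    obtain ⟨r, rfl⟩ := Ideal.Quotient.mk_surjective a
    refine IsIntegral.of_pow (NeZero.pos p) ?_
    rw [mk_pow_eq_algebraMap]
    exact isIntegral_algebraMap
  exact Algebra.IsIntegral.finite

lemma nontrivial_quotient_map_frobenius :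
    Nontrivial (R ⧸ (RingHom.ker ε).map (frobenius R p)) := by
  have hle : (RingHom.ker ε).map (frobenius R p) ≤ RingHom.ker ε :=
    Ideal.map_le_iff_le_comap.mpr fun r hr ↦ Ideal.pow_mem_of_mem _ hr p (NeZero.pos p)
  exact Ideal.Quotient.nontrivial_iff.mpr (ne_top_of_le_ne_top (RingHom.ker_ne_top _) hle)

end FrobeniusQuotient

section LinearDerivation

variable {K L V σ : Type*} [Field K] [LieRing L] [LieAlgebra K L] [AddCommGroup V] [Module K V]
  (b : Module.Basis σ K V)

/-- The linear polynomial with the same coordinates as `v` in the basis `b`. -/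
def linearForm : V →ₗ[K] MvPolynomial σ K := b.constr K MvPolynomial.X

lemma linearForm_basis (i : σ) : linearForm b (b i) = MvPolynomial.X i :=
  b.constr_basis K _ i

lemma aeval_linearForm (φ : Module.Dual K V) (v : V) :
    MvPolynomial.aeval (φ ∘ b) (linearForm b v) = φ v := by
  have : (MvPolynomial.aeval (φ ∘ b)).toLinearMap ∘ₗ linearForm b = φ :=
    b.ext fun i ↦ by simp [linearForm_basis]
  exact LinearMap.congr_fun this v

lemma mkDerivation_linearForm (T : Module.End K V) (v : V) :
    MvPolynomial.mkDerivation K (fun i ↦ linearForm b (T (b i))) (linearForm b v) =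
      linearForm b (T v) := by
  have : (MvPolynomial.mkDerivation K fun i ↦ linearForm b (T (b i))).toLinearMap ∘ₗ linearForm b =
      linearForm b ∘ₗ T :=
    b.ext fun i ↦ by simp [linearForm_basis, MvPolynomial.mkDerivation_X]
  exact LinearMap.congr_fun this v

variable [LieRingModule L V] [LieModule K L V]

variable (K L) in
/-- The action of `L` by derivations on the symmetric algebra of an `L`-module, written as a
polynomial algebra by means of a basis. -/
def symmetricAction : L →ₗ⁅K⁆ Derivation K (MvPolynomial σ K) (MvPolynomial σ K) where
  toFun l := MvPolynomial.mkDerivation K fun i ↦ linearForm b ⁅l, b i⁆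
  map_add' l n := MvPolynomial.derivation_ext fun i ↦ by simp [MvPolynomial.mkDerivation_X]
  map_smul' c l := MvPolynomial.derivation_ext fun i ↦ by simp [MvPolynomial.mkDerivation_X]
  map_lie' {l n} := MvPolynomial.derivation_ext fun i ↦ by
    have h (l : L) := mkDerivation_linearForm b (toEnd K L V l)
    simp only [toEnd_apply_apply] at h
    simp only [Derivation.commutator_apply, MvPolynomial.mkDerivation_X, h, lie_lie, map_sub]

lemma symmetricAction_linearForm (l : L) (v : V) :
    symmetricAction K L b l (linearForm b v) = linearForm b ⁅l, v⁆ :=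
  mkDerivation_linearForm b (toEnd K L V l) v

end LinearDerivation

lemma exists_derivation_algebra {K : Type u} {L V : Type*} [Field K] [LieRing L] [LieAlgebra K L]
    {p : ℕ} [Fact p.Prime] [CharP K p] [AddCommGroup V] [Module K V] [LieRingModule L V]
    [LieModule K L V] [FiniteDimensional K V] {w : V} (hw : w ≠ 0) :
    ∃ (A : Type u) (_ : CommRing A) (_ : Algebra K A) (_ : FiniteDimensional K A)
      (_ : Nontrivial A) (D : L →ₗ⁅K⁆ Derivation K A A) (ι : V →ₗ[K] A),
      (∀ l v, D l (ι v) = ι ⁅l, v⁆) ∧ ι w ^ p = 1 := by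
  obtain ⟨φ, hφ⟩ := Module.Projective.exists_dual_eq_one K hw
  let b := Module.finBasis K V
  let R := MvPolynomial (Fin (Module.finrank K V)) K
  let ε : R →ₐ[K] K := MvPolynomial.aeval (φ ∘ b)
  let I : Ideal R := (RingHom.ker ε).map (frobenius R p)
  have hI (d : Derivation K R R) : ∀ r ∈ I, d r ∈ I := derivation_mem_map_frobenius _ d
  refine ⟨R ⧸ I, inferInstance, inferInstance, finiteDimensional_quotient_map_frobenius ε,
    nontrivial_quotient_map_frobenius ε, (quotientDerivationHom I hI).comp (symmetricAction K L b),
    (Ideal.Quotient.mkₐ K I).toLinearMap ∘ₗ linearForm b, fun l v ↦ ?_, ?_⟩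
  · rw [LinearMap.comp_apply, LinearMap.comp_apply, ← symmetricAction_linearForm]
    exact quotientDerivation_mk I _ (hI _) _
  · refine (mk_pow_eq_algebraMap ε _).trans ?_
    rw [aeval_linearForm, hφ, one_pow, map_one]

section NontrivialH2

variable {K : Type u} {L : Type v} [Field K] [LieRing L] [LieAlgebra K L] {x y : L}

variable (K L) in
/-- Nonvanishing of the second cohomology of `L` for some finite-dimensional coefficient module in
`Type w`: not every 2-cocycle is a 2-coboundary. -/
def HasNontrivialH2 : Prop :=
  ∃ (M : Type w) (_ : AddCommGroup M) (_ : Module K M) (_ : LieRingModule L M)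
    (_ : LieModule K L M), FiniteDimensional K M ∧ ¬ twoCocycle K L M ≤ range (d₁₂ K L M)

lemma hasNontrivialH2_of_hasDetectedCocycle {p : ℕ} [Fact p.Prime] [CharP K p] {q q' : K[X]}
    (hq : q ∈ pPolynomials K p) (hq' : q' ∈ pPolynomials K p) (had : aeval (toEnd K L L x) q = 0)
    (h₁ : HasDetectedCocycle q q' x y) (h₂ : HasDetectedCocycle q' q y x) :
    HasNontrivialH2.{u} K L := by
  obtain ⟨E₁, _, _, _, _, _, c₁, hc₁⟩ := h₁
  obtain ⟨E₂, _, _, _, _, _, c₂, hc₂⟩ := h₂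
  exact ⟨E₁ ⊗[K] E₂, inferInstance, inferInstance, inferInstance, inferInstance, inferInstance,
    SetLike.not_le_iff_exists.mpr ⟨cupProduct c₁ c₂,
      cupProduct_mem_twoCocycle hc₁.d₁₂_eq_zero hc₂.d₁₂_eq_zero,
      hc₁.cupProduct_notMem_range hq hq' had hc₂⟩⟩

lemma hasNontrivialH2_of_lie_ne_zero (p : ℕ) [Fact p.Prime] [CharP K p] [FiniteDimensional K L]
    (hxy : ⁅x, y⁆ ≠ 0) : HasNontrivialH2.{u} K L := by
  have hp : Nat.Prime p := Fact.out
  obtain ⟨A, _, _, _, _, D, ι, hD, hι⟩ := exists_derivation_algebra (K := K) (L := L) (p := p) hxy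
  have hann (z : L) : ∃ q ∈ pPolynomials K p, q.Monic ∧ p ∣ q.natDegree ∧
      aeval (toEnd K L L z) q = 0 ∧ aeval (D z : Module.End K A) q = 0 := by
    obtain ⟨q, hq, hmonic, hdvd, hzero⟩ := exists_monic_mem_pPolynomials_aeval_eq_zero K hp.one_lt
      ((toEnd K L L z, D z) : Module.End K L × Module.End K A)
    rw [aeval_prod_apply, Prod.mk_eq_zero] at hzero
    exact ⟨q, hq, hmonic, hdvd, hzero⟩
  have hpow {n : ℕ} (hn : p ∣ n) : ι ⁅x, y⁆ ^ n = 1 := by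
    obtain ⟨k, rfl⟩ := hn
    rw [pow_mul, hι, one_pow]
  obtain ⟨q, hq, hqm, hqd, hadx, hDx⟩ := hann x
  obtain ⟨q', hq', hqm', hqd', hady, hDy⟩ := hann y
  refine hasNontrivialH2_of_hasDetectedCocycle hq hq' hadx
    (hasDetectedCocycle_of_derivation (h := ι y) hq hq' hqm hadx hDx hDy ?_ ?_)
    (hasDetectedCocycle_of_derivation (h := ι (-x)) hq' hq hqm' hady hDy hDx ?_ ?_)
  · rw [hD, hpow hqd]
  · rw [hD, lie_self, map_zero]
  · rw [hD, lie_neg, lie_skew, hpow hqd']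
  · rw [hD, lie_neg, lie_self, neg_zero, map_zero]

lemma detects_X_of_isTrivial [IsLieAbelian L] {E : Type*} [AddCommGroup E] [Module K E]
    [LieRingModule L E] [LieModule K L E] [IsTrivial L E] {c : L →ₗ[K] E} (hx : c x ≠ 0)
    (hy : c y = 0) : Detects X X x y c := by
  have hzero (l : L) : aeval (toEnd K L E l) (X : K[X]) = 0 := by
    rw [aeval_X]
    exact LinearMap.ext (trivial_lie_zero L E l)
  have hdivX : (X : K[X]).divX = 1 := by simpa using divX_X_pow (R := K) (n := 1)
  refine ⟨?_, hzero x, hzero y, hy, ?_⟩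
  · ext l n
    simp [trivial_lie_zero]
  · simpa [contraction, hdivX] using hx

lemma hasDetectedCocycle_X_of_isLieAbelian [IsLieAbelian L] (φ : Module.Dual K L)
    (hx : φ x ≠ 0) (hy : φ y = 0) : HasDetectedCocycle (X : K[X]) X x y := by
  let e : TrivialLieModule K L K ≃ₗ[K] K := TrivialLieModule.equiv K L K
  exact ⟨TrivialLieModule K L K, inferInstance, inferInstance, inferInstance, inferInstance,
    Module.Finite.equiv e.symm, e.symm.toLinearMap ∘ₗ φ,
    detects_X_of_isTrivial (by simpa using hx) (by simp [hy])⟩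

lemma hasNontrivialH2_of_isLieAbelian (p : ℕ) [Fact p.Prime] [CharP K p] [IsLieAbelian L]
    (hL : 2 ≤ Module.finrank K L) : HasNontrivialH2.{u} K L := by
  have : FiniteDimensional K L := Module.finite_of_finrank_pos (by lia)
  let b := Module.finBasis K L
  let i : Fin (Module.finrank K L) := ⟨0, by lia⟩
  let j : Fin (Module.finrank K L) := ⟨1, by lia⟩
  have hij : i ≠ j := by simp [i, j]
  have had : aeval (toEnd K L L (b i)) (X : K[X]) = 0 := by
    ext l
    simp [trivial_lie_zero]
  refine hasNontrivialH2_of_hasDetectedCocycle (p := p) (y := b j) X_mem_pPolynomials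
    X_mem_pPolynomials had
    (hasDetectedCocycle_X_of_isLieAbelian (b.coord i) ?_ ?_)
    (hasDetectedCocycle_X_of_isLieAbelian (b.coord j) ?_ ?_) <;> simp [hij, hij.symm]

theorem hasNontrivialH2_of_two_le_finrank (p : ℕ) [Fact p.Prime] [CharP K p]
    (hL : 2 ≤ Module.finrank K L) : HasNontrivialH2.{u} K L := by
  have : FiniteDimensional K L := Module.finite_of_finrank_pos (by lia)
  by_cases habel : ∀ x y : L, ⁅x, y⁆ = 0
  · have : IsLieAbelian L := ⟨habel⟩
    exact hasNontrivialH2_of_isLieAbelian p hL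
  · push Not at habel
    obtain ⟨x, y, hxy⟩ := habel
    exact hasNontrivialH2_of_lie_ne_zero p hxy

end NontrivialH2

section TwoCocycle

variable {K L M : Type*} [Field K] [LieRing L] [LieAlgebra K L]
  [AddCommGroup M] [Module K M] [LieRingModule L M] [LieModule K L M]

lemma not_twoCocycle_le_range_iff :
    ¬ twoCocycle K L M ≤ range (d₁₂ K L M) ↔
      ∃ f : L →ₗ[K] L →ₗ[K] M,
        (∀ x : L, f x x = 0) ∧
        (∀ x y z : L,
          ⁅x, f y z⁆ - ⁅y, f x z⁆ + ⁅z, f x y⁆ - f ⁅x, y⁆ z + f ⁅x, z⁆ y - f ⁅y, z⁆ x = 0) ∧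
        ¬ ∃ g : L →ₗ[K] M, ∀ x y : L, f x y = ⁅x, g y⁆ - ⁅y, g x⁆ - g ⁅x, y⁆ := by
  rw [SetLike.not_le_iff_exists]
  constructor
  · rintro ⟨f, hf, hfg⟩
    rw [mem_twoCocycle_iff] at hf
    refine ⟨f.val, f.property, fun x y z ↦ ?_, fun ⟨g, hg⟩ ↦ hfg ⟨g, ?_⟩⟩
    · exact congrArg (· x y z) hf
    · ext x y
      exact (hg x y).symm
  · rintro ⟨f, halt, hf, hfg⟩
    refine ⟨⟨f, halt⟩, ?_, fun ⟨g, hg⟩ ↦ hfg ⟨g, fun x y ↦ ?_⟩⟩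
    · rw [mem_twoCocycle_iff]
      ext x y z
      exact hf x y z
    · exact congrArg (· x y) hg.symm

lemma not_twoCocycle_le_range_of_equiv {N : Type*} [AddCommGroup N] [Module K N]
    [LieRingModule L N] [LieModule K L N] (e : M ≃ₗ⁅K,L⁆ N)
    (h : ¬ twoCocycle K L M ≤ range (d₁₂ K L M)) : ¬ twoCocycle K L N ≤ range (d₁₂ K L N) := by
  rw [not_twoCocycle_le_range_iff] at h ⊢
  have hlie (l : L) (m : M) : e ⁅l, m⁆ = ⁅l, e m⁆ := e.toLieModuleHom.map_lie l m
  obtain ⟨f, halt, hf, hfg⟩ := h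
  refine ⟨f.compr₂ (e : M →ₗ[K] N), fun x ↦ ?_, fun x y z ↦ ?_, fun ⟨g, hg⟩ ↦
    hfg ⟨(e.symm : N →ₗ[K] M) ∘ₗ g, fun x y ↦ e.injective ?_⟩⟩
  · simp [halt]
  · simpa [hlie] using congrArg e (hf x y z)
  · simpa [hlie] using hg x y

end TwoCocycle

section Transport

variable {K : Type u} {L : Type v} {M N : Type*} [Field K] [LieRing L] [LieAlgebra K L]
  [AddCommGroup M] [Module K M] [LieRingModule L M] [AddCommGroup N] [Module K N]

variable (L) in
/-- The action of `L` transported along a linear equivalence. -/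
abbrev lieRingModuleOfEquiv (e : N ≃ₗ[K] M) : LieRingModule L N where
  bracket l n := e.symm ⁅l, e n⁆
  add_lie l l' n := (congrArg e.symm (add_lie l l' (e n))).trans (map_add _ _ _)
  lie_add l n n' := by rw [map_add, lie_add, map_add]
  leibniz_lie l l' n := by
    change e.symm ⁅l, e (e.symm ⁅l', e n⁆)⁆ =
      e.symm ⁅⁅l, l'⁆, e n⁆ + e.symm ⁅l', e (e.symm ⁅l, e n⁆)⁆
    rw [e.apply_symm_apply, e.apply_symm_apply, leibniz_lie, map_add]

lemma lieModule_lieRingModuleOfEquiv [LieModule K L M] (e : N ≃ₗ[K] M) :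
    letI := lieRingModuleOfEquiv L e
    LieModule K L N :=
  letI := lieRingModuleOfEquiv L e
  { smul_lie := fun a l n ↦ (congrArg e.symm (smul_lie a l (e n))).trans (map_smul _ _ _)
    lie_smul := fun a l n ↦ by
      change e.symm ⁅l, e (a • n)⁆ = a • e.symm ⁅l, e n⁆
      rw [map_smul, lie_smul, map_smul] }

lemma HasNontrivialH2.of_small [Small.{w} K] (h : HasNontrivialH2.{w'} K L) :
    HasNontrivialH2.{w} K L := by
  obtain ⟨M, _, _, _, _, _, hM⟩ := h
  have : Small.{w} M := small_of_injective (Module.finBasis K M).equivFun.injective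
  let e : Shrink.{w} M ≃ₗ[K] M := Shrink.linearEquiv K M
  let _ := lieRingModuleOfEquiv L e
  have := lieModule_lieRingModuleOfEquiv (L := L) e
  let e' : M ≃ₗ⁅K,L⁆ Shrink.{w} M :=
    { e.symm with map_lie' {l m} := congrArg (fun n ↦ e.symm ⁅l, n⁆) (e.apply_symm_apply m).symm }
  exact ⟨Shrink.{w} M, inferInstance, inferInstance, inferInstance, inferInstance,
    Module.Finite.equiv e.symm, not_twoCocycle_le_range_of_equiv e' hM⟩

lemma small_of_finrank_pos (hL : 0 < Module.finrank K L) : Small.{v} K := by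
  have := Module.nontrivial_of_finrank_pos hL
  obtain ⟨l, hl⟩ := exists_ne (0 : L)
  exact small_of_injective (smul_left_injective K hl)

end Transport

end

end LieTwoCohomology

open LieTwoCohomology in
theorem exists_module_with_nontrivial_H2_general.{u, v} {K : Type u} [Field K]
    {p : ℕ} (hp : 0 < p) [CharP K p] {L : Type v} [LieRing L] [LieAlgebra K L]
    (hL : 2 ≤ Module.finrank K L) :
    ∃ (M : Type v) (_ : AddCommGroup M) (_ : Module K M) (_ : LieRingModule L M)
      (_ : LieModule K L M), FiniteDimensional K M ∧
      ∃ f : L →ₗ[K] L →ₗ[K] M,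
        (∀ x : L, f x x = 0) ∧
        (∀ x y z : L,
          ⁅x, f y z⁆ - ⁅y, f x z⁆ + ⁅z, f x y⁆
            - f ⁅x, y⁆ z + f ⁅x, z⁆ y - f ⁅y, z⁆ x = 0) ∧
        ¬ ∃ g : L →ₗ[K] M, ∀ x y : L, f x y = ⁅x, g y⁆ - ⁅y, g x⁆ - g ⁅x, y⁆ := by
  have : Fact p.Prime := ⟨(CharP.char_is_prime_or_zero K p).resolve_right hp.ne'⟩
  have : Small.{v} K := small_of_finrank_pos (zero_lt_two.trans_le hL)
  obtain ⟨M, _, _, _, _, hfin, hM⟩ := (hasNontrivialH2_of_two_le_finrank p hL).of_small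
  exact ⟨M, inferInstance, inferInstance, inferInstance, inferInstance, hfin,
    not_twoCocycle_le_range_iff.mp hM⟩

/-- Dzhumadil'daev's theorem in degree 2: over a field of positive characteristic, every
finite-dimensional Lie algebra of dimension at least 2 admits a finite-dimensional module
with a 2-cocycle which is not a 2-coboundary (i.e. with nonvanishing second cohomology). -/
theorem exists_module_with_nontrivial_H2 (K : Type*) [Field K]
    (p : ℕ) (hp : 0 < p) [CharP K p]
    (L : Type) [LieRing L] [LieAlgebra K L] [FiniteDimensional K L]
    (hL : 2 ≤ Module.finrank K L) :
    ∃ (M : Type) (_ : AddCommGroup M) (_ : Module K M) (_ : LieRingModule L M)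
      (_ : LieModule K L M), FiniteDimensional K M ∧
      ∃ f : L →ₗ[K] L →ₗ[K] M,
        (∀ x : L, f x x = 0) ∧
        (∀ x y z : L,
          ⁅x, f y z⁆ - ⁅y, f x z⁆ + ⁅z, f x y⁆
            - f ⁅x, y⁆ z + f ⁅x, z⁆ y - f ⁅y, z⁆ x = 0) ∧
        ¬ ∃ g : L →ₗ[K] M, ∀ x y : L, f x y = ⁅x, g y⁆ - ⁅y, g x⁆ - g ⁅x, y⁆ := by
  exact exists_module_with_nontrivial_H2_general hp hL
end

section
/- Let K be a field of characteristic zero and L a finite-dimensional Lie algebra over K. Suppose that for every finite-dimensional L-module M, every 2-cocycle f: L × L → M with coefficients in M is a 2-coboundary. Then L is semisimple, or L is one-dimensional, or L is the direct sum (as Lie algebras) of a semisimple ideal and a one-dimensional central ideal. -/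
/-!
Let `A = ⁅L, rad L⁆`; it acts nilpotently on every finite-dimensional module. The vanishing of `H²`
forces every derivation of `L` into a finite-dimensional module killed by `A` to vanish on `A`.
Applied to the extension class of `M` by `A M` and `M / A M` when `A (A M) = 0`, this gives
`A M = A (A M)` for all `M`, hence `A M = 0` by Engel's theorem. So `⁅⁅L, L⁆, rad L⁆ = 0`, from
which `rad L` is central, and then it meets `⁅L, L⁆` trivially, by the invariance and nondegeneracy
of the Killing form of `L / rad L`.

For the vanishing of derivations `D` on `A` there are two cases. If `L` has a nonzero character
`χ`, then cupping with `χ` repeatedly, starting from `D`, produces an infinite Jordan chain for an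
element `h` with `χ h = 1`; the same argument gives `ker χ = ⁅L, L⁆`, so that `rad L` is a line. If
`L` is perfect, suppose `α (D a) = 1` and `α (D b) = 0` with `a, b ∈ A`, and tensor together copies
of the extension of the trivial module `W` with cocycle `α • D`. Lifting `D` to such a tensor
product `V` and applying `a ^ n` to the Leibniz rule for `⁅a, b⁆` yields `(n + 1)! • D b = 0` once
`ad a ^ n = 0`. Hence `D A` is at most a line, on which the perfect algebra `L` acts trivially, and
as `A = ⁅L, A⁆`, `D` vanishes on `A`.
-/

open LieAlgebra LieModule LieModule.Cohomology TensorProduct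

universe u

section Brackets

variable {R L M : Type*} [CommRing R] [LieRing L] [LieAlgebra R L]
  [AddCommGroup M] [Module R M] [LieRingModule L M] [LieModule R L M]

theorem toSubmodule_lie_le_iff {I : LieIdeal R L} {N : LieSubmodule R L M} {P : Submodule R M} :
    (⁅I, N⁆ : LieSubmodule R L M).toSubmodule ≤ P ↔ ∀ x ∈ I, ∀ m ∈ N, ⁅x, m⁆ ∈ P := by
  rw [LieSubmodule.lieIdeal_oper_eq_linear_span', Submodule.span_le]
  refine ⟨fun h x hx m hm => h ⟨x, hx, m, hm, rfl⟩, fun h => ?_⟩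
  rintro _ ⟨x, hx, m, hm, rfl⟩
  exact h x hx m hm

theorem lie_top_top_le (N : LieSubmodule R L M) :
    ⁅⁅(⊤ : LieIdeal R L), (⊤ : LieIdeal R L)⁆, N⁆ ≤
      ⁅(⊤ : LieIdeal R L), ⁅(⊤ : LieIdeal R L), N⁆⁆ := by
  rw [LieSubmodule.lie_le_iff]
  intro x hx m hm
  let P := (⁅(⊤ : LieIdeal R L), ⁅(⊤ : LieIdeal R L), N⁆⁆ : LieSubmodule R L M).toSubmodule
  suffices h : (⁅(⊤ : LieIdeal R L), (⊤ : LieIdeal R L)⁆ : LieIdeal R L).toSubmodule ≤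
      P.comap ((toEnd R L M : L →ₗ[R] Module.End R M).flip m) from h hx
  refine toSubmodule_lie_le_iff.2 fun y hy z hz => ?_
  change ⁅⁅y, z⁆, m⁆ ∈ P
  rw [lie_lie]
  exact P.sub_mem (LieSubmodule.lie_mem_lie hy (LieSubmodule.lie_mem_lie hz hm))
    (LieSubmodule.lie_mem_lie hz (LieSubmodule.lie_mem_lie hy hm))

theorem lie_lie_eq_bot_of_forall_lie_eq_smul {I : LieIdeal R L} {N : LieSubmodule R L M}
    (χ : I → R) (h : ∀ a : I, ∀ m ∈ N, ⁅(a : L), m⁆ = χ a • m) :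
    ⁅⁅(⊤ : LieIdeal R L), I⁆, N⁆ = ⊥ := by
  rw [LieSubmodule.lie_eq_bot_iff]
  intro x hx m hm
  suffices h : (⁅(⊤ : LieIdeal R L), I⁆ : LieIdeal R L).toSubmodule ≤
      LinearMap.ker ((toEnd R L M : L →ₗ[R] Module.End R M).flip m) from h hx
  refine toSubmodule_lie_le_iff.2 fun y _ a ha => ?_
  change ⁅⁅y, a⁆, m⁆ = 0
  rw [lie_lie, h ⟨a, ha⟩ m hm, h ⟨a, ha⟩ _ (N.lie_mem hm), lie_smul, sub_self]

end Brackets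

section BaseChange

variable {R L : Type*} (A : Type*) [CommRing R] [LieRing L] [LieAlgebra R L] [CommRing A]
  [Algebra R A]

theorem derivedSeriesOfIdeal_baseChange (I : LieIdeal R L) (k : ℕ) :
    derivedSeriesOfIdeal A (A ⊗[R] L) k (I.baseChange A) =
      (derivedSeriesOfIdeal R L k I).baseChange A := by
  induction k with
  | zero => rfl
  | succ k ih =>
    rw [derivedSeriesOfIdeal_succ, derivedSeriesOfIdeal_succ, ih, ← LieSubmodule.lie_baseChange]

theorem isSolvable_baseChange (I : LieIdeal R L) [IsSolvable I] :
    IsSolvable (I.baseChange A : LieIdeal A (A ⊗[R] L)) := by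
  obtain ⟨k, hk⟩ := IsSolvable.solvable R I
  rw [LieIdeal.derivedSeries_eq_bot_iff] at hk
  refine IsSolvable.mk (R := A) (k := k) ((LieIdeal.derivedSeries_eq_bot_iff _ k).2 ?_)
  rw [derivedSeriesOfIdeal_baseChange, hk, LieSubmodule.baseChange_bot]

end BaseChange

section Nilpotency

theorem eq_zero_of_forall_apply_succ_eq {K E : Type*} [Field K] [AddCommGroup E] [Module K E]
    [FiniteDimensional K E] {f : Module.End K E} {v : ℕ → E} (h0 : f (v 0) = 0)
    (hv : ∀ n, f (v (n + 1)) = v n) : v 0 = 0 := by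
  have hpow (n : ℕ) : (f ^ n) (v n) = v 0 := by
    induction n with
    | zero => rfl
    | succ n ih => rw [pow_succ, Module.End.mul_apply, hv, ih]
  let d := Module.finrank K E
  have hker : v d ∈ LinearMap.ker (f ^ (d + 1)) := by
    rw [LinearMap.mem_ker, pow_succ', Module.End.mul_apply, hpow, h0]
  rw [Module.End.ker_pow_eq_ker_pow_finrank_of_le d.le_succ, LinearMap.mem_ker, hpow] at hker
  exact hker

theorem isNilpotent_toEnd_of_quotient {R L M : Type*} [CommRing R] [LieRing L] [LieAlgebra R L]
    [AddCommGroup M] [Module R M] [LieRingModule L M] [LieModule R L M]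
    {N : LieSubmodule R L M} {x : L} (hN : ∀ m ∈ N, ⁅x, m⁆ = 0)
    (hx : IsNilpotent (toEnd R L (M ⧸ N) x)) : IsNilpotent (toEnd R L M x) := by
  obtain ⟨r, hr⟩ := hx
  refine ⟨r + 1, LinearMap.ext fun m => ?_⟩
  have hm := LinearMap.congr_fun (Module.End.commute_pow_left_of_commute
    (LieSubmodule.Quotient.toEnd_comp_mk' N x) r) m
  rw [pow_succ', Module.End.mul_apply, toEnd_apply_apply]
  apply hN
  rw [← LieSubmodule.Quotient.mk_eq_zero']
  simpa [hr] using hm.symm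

theorem isNilpotent_toEnd_of_mem_top_lie_of_isAlgClosed {k L M : Type*} [Field k] [CharZero k]
    [IsAlgClosed k] [LieRing L] [LieAlgebra k L] [AddCommGroup M] [Module k M]
    [LieRingModule L M] [LieModule k L M] [FiniteDimensional k M]
    (I : LieIdeal k L) [IsSolvable I] {x : L} (hx : x ∈ ⁅(⊤ : LieIdeal k L), I⁆) :
    IsNilpotent (toEnd k L M x) := by
  induction hn : Module.finrank k M using Nat.strong_induction_on generalizing M with
  | _ n ih =>
  rcases subsingleton_or_nontrivial M with _ | _
  · exact ⟨1, Subsingleton.elim _ _⟩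
  obtain ⟨χ, hχ⟩ := exists_nontrivial_weightSpace_of_isSolvable k I M
  let N : LieSubmodule k L M := weightSpaceOfIsLieTower k M χ
  have hN : ⁅⁅(⊤ : LieIdeal k L), I⁆, N⁆ = ⊥ :=
    lie_lie_eq_bot_of_forall_lie_eq_smul χ fun a m hm => (mem_weightSpace χ m).1 hm a
  refine isNilpotent_toEnd_of_quotient
    (fun m hm => (LieSubmodule.lie_eq_bot_iff _ _).1 hN x hx m hm) (ih _ ?_ rfl)
  have hpos : 0 < Module.finrank k N := Module.finrank_pos_iff.2 hχ
  have := N.toSubmodule.finrank_quotient_add_finrank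
  rw [← hn]
  change Module.finrank k (M ⧸ N.toSubmodule) < _
  change 0 < Module.finrank k N.toSubmodule at hpos
  lia

theorem isNilpotent_toEnd_of_mem_top_lie {K L M : Type*} [Field K] [CharZero K] [LieRing L]
    [LieAlgebra K L] [AddCommGroup M] [Module K M] [LieRingModule L M] [LieModule K L M]
    [FiniteDimensional K M] (I : LieIdeal K L) [IsSolvable I] {x : L}
    (hx : x ∈ ⁅(⊤ : LieIdeal K L), I⁆) : IsNilpotent (toEnd K L M x) := by
  let A := AlgebraicClosure K
  have : IsSolvable (I.baseChange A : LieIdeal A (A ⊗[K] L)) := isSolvable_baseChange A I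
  have hxA : (1 : A) ⊗ₜ[K] x ∈ ⁅(⊤ : LieIdeal A (A ⊗[K] L)), I.baseChange A⁆ := by
    rw [← LieSubmodule.baseChange_top, ← LieSubmodule.lie_baseChange]
    exact Submodule.tmul_mem_baseChange_of_mem 1 hx
  have h := isNilpotent_toEnd_of_mem_top_lie_of_isAlgClosed (M := A ⊗[K] M) (I.baseChange A) hxA
  rw [toEnd_baseChange] at h
  exact (IsNilpotent.map_iff (f := Module.End.baseChangeHom K A M)
    (LinearMap.baseChangeHom_injective K M A)).1 h

end Nilpotency

section Quotient

variable {R L : Type*} [CommRing R] [LieRing L] [LieAlgebra R L]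

/-- The projection `L → L ⧸ I`, as a homomorphism of Lie algebras. -/
def quotientLieHom (I : LieIdeal R L) : L →ₗ⁅R⁆ L ⧸ I where
  __ := (LieSubmodule.Quotient.mk' I : L →ₗ[R] L ⧸ I)
  map_lie' {x y} := LieSubmodule.Quotient.mk_bracket I x y

theorem quotientLieHom_surjective (I : LieIdeal R L) :
    Function.Surjective (quotientLieHom I) :=
  LieSubmodule.Quotient.surjective_mk' I

theorem ker_quotientLieHom (I : LieIdeal R L) : (quotientLieHom I).ker = I := by
  ext x
  exact LieSubmodule.Quotient.mk_eq_zero'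

end Quotient

section Radical

theorem hasTrivialRadical_quotient_radical (R L : Type*) [CommRing R] [LieRing L]
    [LieAlgebra R L] [IsNoetherian R L] : HasTrivialRadical R (L ⧸ radical R L) := by
  rw [hasTrivialRadical_iff_no_abelian_ideals]
  intro I hI
  let q := quotientLieHom (radical R L)
  have hderived : derivedSeriesOfIdeal R L 1 (I.comap q) ≤ radical R L := by
    rw [derivedSeriesOfIdeal_succ, derivedSeriesOfIdeal_zero, LieSubmodule.lie_le_iff]
    intro x hx y hy
    rw [← ker_quotientLieHom (radical R L), LieHom.mem_ker, LieHom.map_lie]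
    exact congrArg Subtype.val (hI.trivial ⟨q x, hx⟩ ⟨q y, hy⟩)
  have hsolvable : IsSolvable (I.comap q) := by
    have := (LieIdeal.solvable_iff_le_radical R L _).2 hderived
    obtain ⟨k, hk⟩ := IsSolvable.solvable R (derivedSeriesOfIdeal R L 1 (I.comap q))
    rw [LieIdeal.derivedSeries_eq_bot_iff, ← derivedSeriesOfIdeal_add] at hk
    exact IsSolvable.mk (R := R) ((LieIdeal.derivedSeries_eq_bot_iff _ _).2 hk)
  rw [eq_bot_iff]
  intro y hy
  obtain ⟨x, rfl⟩ := quotientLieHom_surjective _ y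
  rw [LieSubmodule.mem_bot, ← LieHom.mem_ker, ker_quotientLieHom]
  exact (LieIdeal.solvable_iff_le_radical R L _).1 hsolvable hy

theorem lie_top_top_of_isSemisimple (R L : Type*) [CommRing R] [LieRing L]
    [LieAlgebra R L] [IsSemisimple R L] : ⁅(⊤ : LieIdeal R L), (⊤ : LieIdeal R L)⁆ = ⊤ := by
  obtain ⟨J, hJ⟩ := exists_isCompl ⁅(⊤ : LieIdeal R L), (⊤ : LieIdeal R L)⁆
  have : IsLieAbelian J := by
    rw [LieSubmodule.lie_abelian_iff_lie_self_eq_bot, eq_bot_iff]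
    exact hJ.disjoint (LieSubmodule.mono_lie le_top le_top) (LieSubmodule.lie_le_right _ _)
  have := HasTrivialRadical.eq_bot_of_isSolvable J
  simpa [this] using hJ.sup_eq_top

end Radical

section CentralExtension

theorem exists_apply_eq_apply_lie {K G : Type*} [Field K] [LieRing G] [LieAlgebra K G]
    [FiniteDimensional K G] [IsKilling K G] (F : G →ₗ[K] G →ₗ[K] K)
    (hF : ∀ x y z, F ⁅x, y⁆ z = F x ⁅y, z⁆ - F y ⁅x, z⁆) :
    ∃ ℓ : Module.Dual K G, ∀ x y, F x y = ℓ ⁅x, y⁆ := by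
  -- The Killing form turns `F` into a derivation of `G`, which is inner.
  let κ := killingForm K G
  have hκ : κ.Nondegenerate := IsKilling.killingForm_nondegenerate K G
  have hinv (x y z : G) : κ ⁅x, y⁆ z = κ x ⁅y, z⁆ := traceForm_apply_lie_apply K G G x y z
  let D₀ : G →ₗ[K] G := (κ.toDual hκ).symm.toLinearMap ∘ₗ F
  have hD₀ (x y : G) : κ (D₀ x) y = F x y :=
    LinearMap.BilinForm.apply_toDual_symm_apply (hB := hκ) ..
  let D : LieDerivation K G G :=
    { D₀ with
      leibniz' := fun a b => (κ.toDual hκ).injective <| LinearMap.ext fun y => by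
        change κ (D₀ ⁅a, b⁆) y = κ (⁅a, D₀ b⁆ - ⁅b, D₀ a⁆) y
        rw [← lie_skew a (D₀ b), ← lie_skew b (D₀ a), map_sub, map_neg, map_neg,
          LinearMap.sub_apply, LinearMap.neg_apply, LinearMap.neg_apply, hinv, hinv, hD₀, hD₀,
          hD₀, hF]
        abel }
  obtain ⟨z, hz⟩ := LieDerivation.IsKilling.exists_eq_ad D
  have hDz (x : G) : D₀ x = ⁅z, x⁆ :=
    (LieDerivation.congr_fun hz x).symm.trans (LieDerivation.ad_apply_apply K G z x)
  exact ⟨κ z, fun x y => by rw [← hD₀, hDz, hinv]⟩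

theorem disjoint_lie_top_top_ker {K L G : Type*} [Field K] [LieRing L] [LieAlgebra K L]
    [LieRing G] [LieAlgebra K G] [FiniteDimensional K G] [IsKilling K G] {q : L →ₗ⁅K⁆ G}
    (hq : Function.Surjective q) (hcentral : q.ker ≤ center K L) :
    Disjoint ⁅(⊤ : LieIdeal K L), (⊤ : LieIdeal K L)⁆ q.ker := by
  obtain ⟨s, hs⟩ := (q : L →ₗ[K] G).exists_rightInverse_of_surjective (LinearMap.range_eq_top.2 hq)
  have hqs (y : G) : q (s y) = y := LinearMap.congr_fun hs y
  have hker {x y : L} (hxy : q x = q y) (z : L) : ⁅z, x⁆ = ⁅z, y⁆ := by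
    rw [← sub_eq_zero, ← lie_sub]
    exact (mem_maxTrivSubmodule K L L _).1
      (hcentral (by rw [LieHom.mem_ker, map_sub, hxy, sub_self])) z
  have hlie (x y : L) : ⁅s (q x), s (q y)⁆ = ⁅x, y⁆ := by
    rw [hker (hqs (q y)), ← lie_skew, hker (hqs (q x)), lie_skew]
  rw [disjoint_iff, eq_bot_iff]
  rintro w ⟨hw, hwker⟩
  refine (Module.forall_dual_apply_eq_zero_iff K w).1 fun ℓ => ?_
  let F : G →ₗ[K] G →ₗ[K] K := ((toEnd K L L : L →ₗ[K] Module.End K L).compl₁₂ s s).compr₂ ℓ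
  have hF (x y : L) : F (q x) (q y) = ℓ ⁅x, y⁆ := congrArg ℓ (hlie x y)
  obtain ⟨ℓ', hℓ'⟩ := exists_apply_eq_apply_lie F fun x y z => by
    obtain ⟨⟨x, rfl⟩, ⟨y, rfl⟩, z, rfl⟩ := And.intro (hq x) (And.intro (hq y) (hq z))
    rw [← LieHom.map_lie, ← LieHom.map_lie, ← LieHom.map_lie, hF, hF, hF, lie_lie, map_sub]
  have hle : (⁅(⊤ : LieIdeal K L), (⊤ : LieIdeal K L)⁆ : LieIdeal K L).toSubmodule ≤
      LinearMap.ker (ℓ - ℓ' ∘ₗ (q : L →ₗ[K] G)) :=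
    toSubmodule_lie_le_iff.2 fun x _ y _ => by simp [← hF, hℓ']
  have hwℓ : ℓ w - ℓ' (q w) = 0 := hle hw
  have hqw : q w = 0 := LieHom.mem_ker.1 hwker
  rwa [hqw, map_zero, sub_zero] at hwℓ

end CentralExtension

section Levi

variable {K L : Type*} [Field K] [CharZero K] [LieRing L] [LieAlgebra K L] [FiniteDimensional K L]

variable (K L) in
theorem lie_top_top_sup_radical :
    ⁅(⊤ : LieIdeal K L), (⊤ : LieIdeal K L)⁆ ⊔ radical K L = ⊤ := by
  have := hasTrivialRadical_quotient_radical K L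
  let q := quotientLieHom (radical K L)
  have hq : Function.Surjective q := quotientLieHom_surjective _
  have hmap : LieIdeal.map q ⁅(⊤ : LieIdeal K L), (⊤ : LieIdeal K L)⁆ = ⊤ := by
    rw [LieIdeal.map_bracket_eq q hq, ← LieHom.idealRange_eq_map,
      LieHom.idealRange_eq_top_of_surjective q hq, lie_top_top_of_isSemisimple]
  have hcomap := LieIdeal.comap_map_eq (congrArg SetLike.coe
    (LieIdeal.coe_map_of_surjective (I := ⁅(⊤ : LieIdeal K L), (⊤ : LieIdeal K L)⁆) hq))
  rw [hmap, ker_quotientLieHom] at hcomap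
  exact hcomap.symm.trans (eq_top_iff.2 fun _ _ => trivial)

theorem hasTrivialRadical_of_isCompl_radical {S : LieIdeal K L} (h : IsCompl S (radical K L)) :
    HasTrivialRadical K S := by
  have := hasTrivialRadical_quotient_radical K L
  let f := (quotientLieHom (radical K L)).comp S.incl
  have hker (x : L) : quotientLieHom (radical K L) x = 0 ↔ x ∈ radical K L :=
    LieSubmodule.Quotient.mk_eq_zero'
  have hf : Function.Bijective f := by
    refine ⟨(injective_iff_map_eq_zero f).2 fun x hx => ?_, fun y => ?_⟩
    · have hx' : (x : L) ∈ S ⊓ radical K L := ⟨x.2, (hker x).1 hx⟩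
      rw [h.inf_eq_bot] at hx'
      exact Subtype.ext hx'
    · obtain ⟨x, rfl⟩ := quotientLieHom_surjective _ y
      obtain ⟨s, hs, r, hr, rfl⟩ :=
        (LieSubmodule.mem_sup _ _ x).1 (h.sup_eq_top ▸ LieSubmodule.mem_top x)
      exact ⟨⟨s, hs⟩, by rw [map_add, (hker r).2 hr, add_zero]; rfl⟩
  have : IsKilling K S := isKilling_of_equiv (LieEquiv.ofBijective f hf).symm
  infer_instance

theorem exists_mem_radical_apply_eq_one {χ : LieCharacter K L} (hχ : χ ≠ 0) :
    ∃ h ∈ radical K L, χ h = 1 := by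
  obtain ⟨h, hR, hne⟩ : ∃ h ∈ radical K L, χ h ≠ 0 := by
    by_contra! hR
    let φ : L →ₗ[K] K := χ
    have hbracket : (⁅(⊤ : LieIdeal K L), (⊤ : LieIdeal K L)⁆ : LieIdeal K L).toSubmodule ≤
        LinearMap.ker φ :=
      toSubmodule_lie_le_iff.2 fun x _ y _ => lieCharacter_apply_lie χ x y
    have hle := sup_le hbracket (show (radical K L).toSubmodule ≤ LinearMap.ker φ from hR)
    rw [← LieSubmodule.sup_toSubmodule, lie_top_top_sup_radical] at hle
    exact hχ (DFunLike.ext _ _ fun x => hle (LieSubmodule.mem_top x))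
  exact ⟨(χ h)⁻¹ • h, (radical K L).smul_mem _ hR, by simp [hne]⟩

theorem disjoint_lie_top_top_radical (h : radical K L ≤ center K L) :
    Disjoint ⁅(⊤ : LieIdeal K L), (⊤ : LieIdeal K L)⁆ (radical K L) := by
  have := hasTrivialRadical_quotient_radical K L
  have hdisj := disjoint_lie_top_top_ker (quotientLieHom_surjective (radical K L)) 
    (by rwa [ker_quotientLieHom])
  rwa [ker_quotientLieHom] at hdisj

end Levi

section Cochains

variable {R L V : Type*} [CommRing R] [LieRing L] [LieAlgebra R L] [AddCommGroup V] [Module R V]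

/-- The cup product `φ ∪ f` of a scalar 1-cochain `φ` and a vector-valued 1-cochain `f`. -/
def cupProduct (φ : L →ₗ[R] R) (f : L →ₗ[R] V) : twoCochain R L V where
  val := LinearMap.smulRightₗ φ f - (LinearMap.smulRightₗ φ f).flip
  property _ := sub_self _

theorem cupProduct_apply (φ : L →ₗ[R] R) (f : L →ₗ[R] V) (x y : L) :
    cupProduct φ f x y = φ x • f y - φ y • f x := rfl

variable [LieRingModule L V] [LieModule R L V]

theorem d₁₂_lieDerivation (D : LieDerivation R L V) : d₁₂ R L V D = 0 := by
  ext x y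
  change ⁅x, D y⁆ - ⁅y, D x⁆ - D ⁅x, y⁆ = 0
  rw [D.apply_lie_eq_sub, sub_self]

/-- A 1-cochain with zero coboundary, as a derivation. -/
def lieDerivationOfD₁₂EqZero {f : L →ₗ[R] V} (hf : d₁₂ R L V f = 0) : LieDerivation R L V where
  toLinearMap := f
  leibniz' x y := (sub_eq_zero.1 (DFunLike.congr_fun (DFunLike.congr_fun hf x) y)).symm

theorem cupProduct_mem_twoCocycle {χ : LieCharacter R L} {f g : L →ₗ[R] V}
    (hg : d₁₂ R L V g = cupProduct χ f) : cupProduct χ g ∈ twoCocycle R L V := by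
  have hg' (x y : L) : g ⁅x, y⁆ = ⁅x, g y⁆ - ⁅y, g x⁆ - (χ x • f y - χ y • f x) := by
    have h : ⁅x, g y⁆ - ⁅y, g x⁆ - g ⁅x, y⁆ = χ x • f y - χ y • f x :=
      DFunLike.congr_fun (DFunLike.congr_fun hg x) y
    rw [← h, sub_sub_cancel]
  rw [mem_twoCocycle_iff]
  ext x y z
  simp only [d₂₃_apply, cupProduct_apply, LieHom.coe_toLinearMap, lieCharacter_apply_lie, hg',
    lie_sub, lie_smul, LinearMap.zero_apply]
  module

end Cochains

section SecondCohomology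

attribute [local instance] LieRing.ofAssociativeRing

theorem exists_lieCharacter_ne_zero {K L : Type*} [Field K] [LieRing L] [LieAlgebra K L]
    (hL : ⁅(⊤ : LieIdeal K L), (⊤ : LieIdeal K L)⁆ ≠ ⊤) : ∃ χ : LieCharacter K L, χ ≠ 0 := by
  obtain ⟨φ, hφ0, hφ⟩ := Submodule.exists_le_ker_of_lt_top
    (⁅(⊤ : LieIdeal K L), (⊤ : LieIdeal K L)⁆ : LieIdeal K L).toSubmodule
    (lt_top_iff_ne_top.2 fun h => hL (by rw [← LieSubmodule.toSubmodule_inj, h]; rfl))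
  let χ : LieCharacter K L :=
    { φ with
      map_lie' := fun {x y} => (toSubmodule_lie_le_iff.1 hφ x trivial y trivial).trans
        (by rw [LieRing.of_associative_ring_bracket, mul_comm, sub_self]) }
  exact ⟨χ, fun h => hφ0 (LinearMap.ext fun x => DFunLike.congr_fun h x)⟩

/-- An ideal `A` on which every derivation of `L` with values in a finite-dimensional `L`-module
killed by `A` vanishes. The modules are taken in the universe of `L`. -/
def DerivationsVanishOn {K : Type*} {L : Type u} [Field K] [LieRing L] [LieAlgebra K L]
    (A : LieIdeal K L) : Prop :=
  ∀ (W : Type u) [AddCommGroup W] [Module K W] [LieRingModule L W] [LieModule K L W]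
    [FiniteDimensional K W], A ≤ LieModule.ker K L W →
    ∀ D : LieDerivation K L W, ∀ a ∈ A, D a = 0

/-- The vanishing of `H²(L, M)` for all finite-dimensional `L`-modules `M`. The modules are taken
in the universe of `L`. -/
def SecondCohomologyVanishes (K : Type*) (L : Type u) [Field K] [LieRing L] [LieAlgebra K L] :
    Prop :=
  ∀ (M : Type u) [AddCommGroup M] [Module K M] [LieRingModule L M] [LieModule K L M]
    [FiniteDimensional K M], twoCocycle K L M ≤ LinearMap.range (d₁₂ K L M)

namespace SecondCohomologyVanishes

theorem of_forall_bilinear {K : Type*} {L : Type u} [Field K] [LieRing L] [LieAlgebra K L]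
    (H : ∀ (M : Type u) (_ : AddCommGroup M) (_ : Module K M) (_ : LieRingModule L M)
      (_ : LieModule K L M), FiniteDimensional K M →
      ∀ f : L →ₗ[K] L →ₗ[K] M, (∀ x : L, f x x = 0) →
        (∀ x y z : L,
          ⁅x, f y z⁆ - ⁅y, f x z⁆ + ⁅z, f x y⁆
            - f ⁅x, y⁆ z + f ⁅x, z⁆ y - f ⁅y, z⁆ x = 0) →
        ∃ g : L →ₗ[K] M, ∀ x y : L, f x y = ⁅x, g y⁆ - ⁅y, g x⁆ - g ⁅x, y⁆) :
    SecondCohomologyVanishes K L := fun M _ _ _ _ _ f hf => by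
  rw [mem_twoCocycle_iff] at hf
  obtain ⟨g, hg⟩ := H M _ _ _ inferInstance inferInstance f.1 f.2 fun x y z =>
    LinearMap.congr_fun (LinearMap.congr_fun (LinearMap.congr_fun hf x) y) z
  exact ⟨g, DFunLike.ext _ _ fun x => LinearMap.ext fun y => (hg x y).symm⟩

variable {K : Type*} {L V : Type u} [Field K] [LieRing L] [LieAlgebra K L]
  [AddCommGroup V] [Module K V] [LieRingModule L V] [LieModule K L V] [FiniteDimensional K V]

theorem exists_d₁₂_succ_eq_cupProduct (H : SecondCohomologyVanishes K L) (χ : LieCharacter K L)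
    (D : LieDerivation K L V) :
    ∃ f : ℕ → L →ₗ[K] V, f 0 = D ∧ ∀ n, d₁₂ K L V (f (n + 1)) = cupProduct χ (f n) := by
  let S := {g : L →ₗ[K] V // ∃ f, d₁₂ K L V g = cupProduct χ f}
  have hnext (g : S) : ∃ g' : S, d₁₂ K L V g' = cupProduct χ g := by
    obtain ⟨f, hf⟩ := g.2
    obtain ⟨g', hg'⟩ := H V (cupProduct_mem_twoCocycle hf)
    exact ⟨⟨g', g, hg'⟩, hg'⟩
  choose next hnext using hnext
  let D₀ : S := ⟨D, 0, by rw [d₁₂_lieDerivation]; ext; simp [cupProduct_apply]⟩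
  refine ⟨fun n => (next^[n] D₀).1, rfl, fun n => ?_⟩
  change d₁₂ K L V (next^[n + 1] D₀).1 = _
  rw [Function.iterate_succ_apply', hnext]

theorem derivationsVanishOn_of_lieCharacter [FiniteDimensional K L]
    (H : SecondCohomologyVanishes K L) {χ : LieCharacter K L} {h : L} (hχ : χ h = 1)
    {B : LieIdeal K L} (hB : B ≤ χ.ker) : DerivationsVanishOn B := by
  intro V _ _ _ _ _ hBV D b hb
  have hBV' (b : B) : ∀ v : V, ⁅(b : L), v⁆ = 0 := (LieModule.mem_ker K L V b).1 (hBV b.2)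
  obtain ⟨f, hf0, hf⟩ := H.exists_d₁₂_succ_eq_cupProduct χ D
  -- The restrictions of the `f n` to `B` form an infinite Jordan chain for `h` on `B → V`.
  let v (n : ℕ) : B →ₗ[K] V := f n ∘ₗ B.toSubmodule.subtype
  have hv0 : toEnd K L (B →ₗ[K] V) h (v 0) = 0 := by
    ext b
    change ⁅h, f 0 b⁆ - f 0 ⁅h, (b : L)⁆ = 0
    rw [hf0]
    change ⁅h, D b⁆ - D ⁅h, (b : L)⁆ = 0
    rw [D.apply_lie_eq_sub, hBV' b, sub_zero, sub_self]
  have hv (n : ℕ) : toEnd K L (B →ₗ[K] V) h (v (n + 1)) = v n := by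
    ext b
    have h' : ⁅h, f (n + 1) b⁆ - ⁅(b : L), f (n + 1) h⁆ - f (n + 1) ⁅h, (b : L)⁆ =
        χ h • f n b - χ b • f n h := DFunLike.congr_fun (DFunLike.congr_fun (hf n) h) (b : L)
    rw [hBV' b, hχ, LieHom.mem_ker.1 (hB b.2), sub_zero, one_smul, zero_smul, sub_zero] at h'
    exact h'
  have hzero := LinearMap.congr_fun (eq_zero_of_forall_apply_succ_eq hv0 hv) ⟨b, hb⟩
  exact (LinearMap.congr_fun hf0 b).symm.trans hzero

theorem exists_lieDerivation_lift (H : SecondCohomologyVanishes K L) {E : Type*}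
    [AddCommGroup E] [Module K E] [LieRingModule L E] [LieModule K L E]
    {π : V →ₗ⁅K,L⁆ E} (hπ : Function.Surjective π) (D : LieDerivation K L E) :
    ∃ P : LieDerivation K L V, ∀ x, π (P x) = D x := by
  obtain ⟨s, hs⟩ := (π : V →ₗ[K] E).exists_rightInverse_of_surjective
    (LinearMap.range_eq_top.2 hπ)
  let f : L →ₗ[K] V := s ∘ₗ D
  have hf (x : L) : π (f x) = D x := LinearMap.congr_fun hs (D x)
  have hmem (x y : L) : d₁₂ K L V f x y ∈ π.ker := by
    simp [LieModuleHom.mem_ker, hf]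
  let c : twoCochain K L π.ker :=
    ⟨LinearMap.mk₂ K (fun x y => ⟨d₁₂ K L V f x y, hmem x y⟩)
      (fun _ _ _ => Subtype.ext (by simp only [map_add, LinearMap.add_apply]; rfl))
      (fun _ _ _ => Subtype.ext (by simp only [map_smul, LinearMap.smul_apply]; rfl))
      (fun _ _ _ => Subtype.ext (map_add _ _ _))
      (fun _ _ _ => Subtype.ext (map_smul _ _ _)),
      fun x => Subtype.ext (twoCochain_alt (d₁₂ K L V f) x)⟩
  have hc : c ∈ twoCocycle K L π.ker := by
    rw [mem_twoCocycle_iff]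
    ext x y z
    exact LinearMap.congr_fun (LinearMap.congr_fun (LinearMap.congr_fun
      (LinearMap.congr_fun (d₂₃_comp_d₁₂ K L V) f) x) y) z
  obtain ⟨g, hg⟩ := H π.ker hc
  have hfg : d₁₂ K L V (f - π.ker.toSubmodule.subtype ∘ₗ g) = 0 := by
    rw [map_sub, sub_eq_zero]
    ext x y
    exact congrArg Subtype.val (DFunLike.congr_fun (DFunLike.congr_fun hg x) y).symm
  refine ⟨lieDerivationOfD₁₂EqZero hfg, fun x => ?_⟩
  change π (f x - g x) = D x
  rw [map_sub, hf, LieModuleHom.mem_ker.1 (g x).2, sub_zero]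

end SecondCohomologyVanishes

end SecondCohomology

section Extension

variable {R L W T : Type*} [CommRing R] [LieRing L] [LieAlgebra R L] [AddCommGroup W] [Module R W]
  [LieRingModule L W] [LieModule R L W] [AddCommGroup T] [Module R T]

theorem apply_toEnd_pow_of_mem_ker (D : LieDerivation R L W) {c : L}
    (hc : c ∈ LieModule.ker R L W) (a : L) (n : ℕ) :
    D ((toEnd R L L a ^ n) c) = (toEnd R L W a ^ n) (D c) := by
  have hmem (n : ℕ) : (toEnd R L L a ^ n) c ∈ LieModule.ker R L W := by
    induction n with
    | zero => exact hc
    | succ n ih =>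
      rw [pow_succ', Module.End.mul_apply]
      exact (LieModule.ker R L W).lie_mem ih
  induction n with
  | zero => rfl
  | succ n ih =>
    rw [pow_succ', Module.End.mul_apply, toEnd_apply_apply, D.apply_lie_eq_sub,
      (LieModule.mem_ker R L W _).1 (hmem n), sub_zero, ih, pow_succ', Module.End.mul_apply,
      toEnd_apply_apply]

/-- The extension of the trivial module `T` by `W` whose cocycle sends `x` to the map
`t ↦ α t • D x`. -/
def DerivationExtension (_D : LieDerivation R L W) (_α : T →ₗ[R] R) : Type _ := W × T

namespace DerivationExtension

variable {D : LieDerivation R L W} {α : T →ₗ[R] R}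

instance : AddCommGroup (DerivationExtension D α) := inferInstanceAs (AddCommGroup (W × T))

instance : Module R (DerivationExtension D α) := inferInstanceAs (Module R (W × T))

instance [Module.Finite R W] [Module.Finite R T] : Module.Finite R (DerivationExtension D α) :=
  inferInstanceAs (Module.Finite R (W × T))

variable (D α) in
/-- The coordinate on `W` of an element of the extension. -/
def fst : DerivationExtension D α →ₗ[R] W := LinearMap.fst R W T

variable (D α) in
/-- The coordinate on `T` of an element of the extension. -/
def snd : DerivationExtension D α →ₗ[R] T := LinearMap.snd R W T

variable (D α) in
/-- The functional `(w, t) ↦ α t` on the extension. -/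
def ε : DerivationExtension D α →ₗ[R] R := α ∘ₗ snd D α

variable (D α) in
/-- The inclusion of `T` into the extension; it is linear but not a map of `L`-modules. -/
def inr : T →ₗ[R] DerivationExtension D α := LinearMap.inr R W T

@[simp]
theorem ε_inr (t : T) : ε D α (inr D α t) = α t := rfl

@[ext]
theorem ext {u v : DerivationExtension D α} (h₁ : fst D α u = fst D α v)
    (h₂ : snd D α u = snd D α v) : u = v := Prod.ext h₁ h₂

instance : Bracket L (DerivationExtension D α) where
  bracket x u := (⁅x, fst D α u⁆ + α (snd D α u) • D x, (0 : T))

@[simp]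
theorem fst_lie (x : L) (u : DerivationExtension D α) :
    fst D α ⁅x, u⁆ = ⁅x, fst D α u⁆ + α (snd D α u) • D x := rfl

@[simp]
theorem snd_lie (x : L) (u : DerivationExtension D α) : snd D α ⁅x, u⁆ = 0 := rfl

instance : LieRingModule L (DerivationExtension D α) where
  add_lie x y u := by
    ext
    · simp only [fst_lie, map_add, add_lie, smul_add]; abel
    · simp
  lie_add x u v := by
    ext
    · simp only [fst_lie, map_add, lie_add, add_smul]; abel
    · simp
  leibniz_lie x y u := by
    ext
    · simp only [fst_lie, snd_lie, map_add, map_zero, zero_smul, add_zero, lie_add, lie_smul,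
        lie_lie, D.apply_lie_eq_sub, smul_sub]
      abel
    · simp

instance : LieModule R L (DerivationExtension D α) where
  smul_lie t x u := by ext <;> simp [smul_comm t]
  lie_smul t x u := by ext <;> simp [mul_smul]

variable (D α) in
theorem ε_lie (x : L) (u : DerivationExtension D α) : ε D α ⁅x, u⁆ = 0 := map_zero α

theorem lie_lie_eq_zero {x : L} (hx : x ∈ LieModule.ker R L W) (y : L)
    (u : DerivationExtension D α) : ⁅x, ⁅y, u⁆⁆ = 0 := by
  rw [LieModule.mem_ker] at hx
  ext <;> simp [hx]

theorem fst_lie_of_mem_ker {x : L} (hx : x ∈ LieModule.ker R L W) (u : DerivationExtension D α) :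
    fst D α ⁅x, u⁆ = α (snd D α u) • D x := by
  rw [fst_lie, (LieModule.mem_ker R L W x).1 hx, zero_add]

theorem mem_ker {x : L} (hx : x ∈ LieModule.ker R L W) (hDx : D x = 0) :
    x ∈ LieModule.ker R L (DerivationExtension D α) := by
  rw [LieModule.mem_ker] at hx ⊢
  intro u
  ext <;> simp [hx, hDx]

end DerivationExtension

end Extension

section TensorProduct

variable {R L M N : Type*} [CommRing R] [LieRing L] [LieAlgebra R L]
  [AddCommGroup M] [Module R M] [LieRingModule L M] [LieModule R L M]
  [AddCommGroup N] [Module R N] [LieRingModule L N] [LieModule R L N]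

theorem toEnd_pow_tmul {a : L} {m : M} (h : ⁅a, ⁅a, m⁆⁆ = 0) (n : N) (k : ℕ) :
    (toEnd R L (M ⊗[R] N) a ^ k) (m ⊗ₜ n) =
      m ⊗ₜ (toEnd R L N a ^ k) n + k • ⁅a, m⁆ ⊗ₜ[R] (toEnd R L N a ^ (k - 1)) n := by
  have hpow (k : ℕ) : ⁅a, (toEnd R L N a ^ k) n⁆ = (toEnd R L N a ^ (k + 1)) n := by
    rw [pow_succ', Module.End.mul_apply, toEnd_apply_apply]
  induction k with
  | zero => simp
  | succ k ih =>
    rw [pow_succ', Module.End.mul_apply, ih, toEnd_apply_apply, lie_add, lie_nsmul,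
      TensorProduct.LieModule.lie_tmul_right, TensorProduct.LieModule.lie_tmul_right, h, hpow,
      zero_tmul, zero_add, hpow, Nat.add_sub_cancel, add_comm (⁅a, m⁆ ⊗ₜ[R] _), add_assoc,
      succ_nsmul']
    rcases k with _ | k
    · simp
    · rfl

theorem mem_ker_tensor {x : L} (hM : x ∈ LieModule.ker R L M) (hN : x ∈ LieModule.ker R L N) :
    x ∈ LieModule.ker R L (M ⊗[R] N) := by
  rw [LieModule.mem_ker] at hM hN ⊢
  intro t
  induction t with
  | zero => exact lie_zero x
  | add s t hs ht => rw [lie_add, hs, ht, add_zero]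
  | tmul m n =>
    rw [TensorProduct.LieModule.lie_tmul_right, hM, hN, zero_tmul, tmul_zero, add_zero]

end TensorProduct

section FactorialCover

variable {K L V W : Type*} [Field K] [LieRing L] [LieAlgebra K L]
  [AddCommGroup V] [Module K V] [LieRingModule L V] [LieModule K L V]
  [AddCommGroup W] [Module K W] [LieRingModule L W]

/-- A cover `π : V → W` of `L`-modules with a functional `θ` on `V` for which `θ ∘ a ^ j` is
`j! • β ∘ π`, and which vanishes on `a ^ (j - 1) b V` if `j > 0`, while `⁅a, b⁆` kills `V`. For
a lift `P` to `V` of a derivation `D` into `W`, applying `θ ∘ a ^ (j - 1)` to `P ⁅a, b⁆` gives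
`j! • β (D b)`. -/
structure IsFactorialCover (a b : L) (β : W →ₗ[K] K) (j : ℕ) (π : V →ₗ⁅K,L⁆ W)
    (θ : V →ₗ[K] K) : Prop where
  surjective : Function.Surjective π
  apply_pow (v : V) : θ ((toEnd K L V a ^ j) v) = j.factorial • β (π v)
  apply_pow_lie (i : ℕ) (hi : i + 1 = j) (v : V) : θ ((toEnd K L V a ^ i) ⁅b, v⁆) = 0
  lie_mem_ker : ⁅a, b⁆ ∈ LieModule.ker K L V

variable [LieModule K L W]

open DerivationExtension

theorem dualDistrib_toEnd_pow_tmul {D : LieDerivation K L W} {α : W →ₗ[K] K} {a : L}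
    (ha : a ∈ LieModule.ker K L W) (θ : V →ₗ[K] K) (k : ℕ) (u : DerivationExtension D α) (v : V) :
    dualDistrib K _ V ((α ∘ₗ fst D α) ⊗ₜ θ) ((toEnd K L _ a ^ k) (u ⊗ₜ v)) =
      α (fst D α u) * θ ((toEnd K L V a ^ k) v) +
        k • (ε D α u * α (D a) * θ ((toEnd K L V a ^ (k - 1)) v)) := by
  rw [toEnd_pow_tmul (lie_lie_eq_zero ha a u), map_add, map_nsmul, dualDistrib_apply,
    dualDistrib_apply, LinearMap.comp_apply, LinearMap.comp_apply, fst_lie_of_mem_ker ha, map_smul,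
    smul_eq_mul]
  rfl

/-- The map `E ⊗ V → W` sending `u ⊗ v` to `ε u • π v`. -/
def smulLieModuleHom {E : Type*} [AddCommGroup E] [Module K E] [LieRingModule L E]
    [LieModule K L E] (ε : E →ₗ[K] K) (hε : ∀ (x : L) (u : E), ε ⁅x, u⁆ = 0) (π : V →ₗ⁅K,L⁆ W) :
    E ⊗[K] V →ₗ⁅K,L⁆ W where
  toLinearMap := (TensorProduct.lid K W).toLinearMap ∘ₗ TensorProduct.map ε (π : V →ₗ[K] W)
  map_lie' {x t} := by
    induction t with
    | zero => simp
    | add s t hs ht =>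
      simp only [AddHom.toFun_eq_coe, lie_add, map_add] at hs ht ⊢
      rw [hs, ht]
    | tmul u v => simp [hε]

@[simp]
theorem smulLieModuleHom_tmul {E : Type*} [AddCommGroup E] [Module K E] [LieRingModule L E]
    [LieModule K L E] (ε : E →ₗ[K] K) (hε : ∀ (x : L) (u : E), ε ⁅x, u⁆ = 0) (π : V →ₗ⁅K,L⁆ W)
    (u : E) (v : V) :
    smulLieModuleHom ε hε π (u ⊗ₜ v) = ε u • π v := rfl

theorem IsFactorialCover.tensor {D : LieDerivation K L W} {α : W →ₗ[K] K} {a b : L}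
    (ha : a ∈ LieModule.ker K L W) (hb : b ∈ LieModule.ker K L W) (hαa : α (D a) = 1)
    (hαb : α (D b) = 0) {β : W →ₗ[K] K} {j : ℕ} {π : V →ₗ⁅K,L⁆ W} {θ : V →ₗ[K] K}
    (h : IsFactorialCover a b β j π θ) :
    IsFactorialCover a b β (j + 1) (smulLieModuleHom (ε D α) (ε_lie D α) π)
      (dualDistrib K _ V ((α ∘ₗ fst D α) ⊗ₜ θ)) where
  surjective w := by
    obtain ⟨v, rfl⟩ := h.surjective w
    exact ⟨inr D α (D a) ⊗ₜ v, by simp [hαa]⟩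
  apply_pow t := by
    induction t with
    | zero => simp
    | add s t hs ht => rw [map_add, map_add, hs, ht, map_add, map_add, smul_add]
    | tmul u v =>
      have hθ : θ ((toEnd K L V a ^ (j + 1)) v) = 0 := by
        rw [pow_succ, Module.End.mul_apply, h.apply_pow, toEnd_apply_apply, π.map_lie,
          (LieModule.mem_ker K L W a).1 ha, map_zero, smul_zero]
      rw [dualDistrib_toEnd_pow_tmul ha, hθ, hαa, Nat.add_sub_cancel, h.apply_pow,
        smulLieModuleHom_tmul, map_smul, Nat.factorial_succ]
      simp only [nsmul_eq_mul, smul_eq_mul, Nat.cast_mul]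
      ring
  apply_pow_lie i hi t := by
    obtain rfl : i = j := Nat.succ_injective hi
    induction t with
    | zero => simp
    | add s t hs ht => rw [lie_add, map_add, map_add, hs, ht, add_zero]
    | tmul u v =>
      have hθ : θ ((toEnd K L V a ^ i) ⁅b, v⁆) = 0 := by
        rw [h.apply_pow, π.map_lie, (LieModule.mem_ker K L W b).1 hb, map_zero, smul_zero]
      have hθ' : i • θ ((toEnd K L V a ^ (i - 1)) ⁅b, v⁆) = 0 := by
        rcases i with _ | i
        · exact zero_smul _ _
        · rw [Nat.add_sub_cancel, h.apply_pow_lie i rfl, smul_zero]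
      rw [TensorProduct.LieModule.lie_tmul_right, map_add, map_add, dualDistrib_toEnd_pow_tmul ha,
        dualDistrib_toEnd_pow_tmul ha, fst_lie_of_mem_ker hb, hθ, ε_lie, map_smul, hαb,
        ← mul_smul_comm i _ (θ ((toEnd K L V a ^ (i - 1)) ⁅b, v⁆)), hθ']
      simp
  lie_mem_ker := mem_ker_tensor
    (mem_ker ((LieModule.ker K L W).lie_mem hb) (by
      rw [LieModule.mem_ker] at ha hb
      rw [D.apply_lie_eq_sub, ha, hb, sub_zero]))
    h.lie_mem_ker

theorem exists_isFactorialCover {K L : Type*} {W : Type u} [Field K] [LieRing L] [LieAlgebra K L]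
    [AddCommGroup W] [Module K W] [LieRingModule L W] [LieModule K L W] [FiniteDimensional K W]
    {D : LieDerivation K L W} {α : W →ₗ[K] K} {a b : L} (ha : a ∈ LieModule.ker K L W)
    (hb : b ∈ LieModule.ker K L W) (hαa : α (D a) = 1) (hαb : α (D b) = 0) (β : W →ₗ[K] K)
    (j : ℕ) :
    ∃ (V : Type u) (_ : AddCommGroup V) (_ : Module K V) (_ : LieRingModule L V)
      (_ : LieModule K L V) (_ : FiniteDimensional K V) (π : V →ₗ⁅K,L⁆ W) (θ : V →ₗ[K] K),
      IsFactorialCover a b β j π θ := by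
  induction j with
  | zero =>
    exact ⟨W, _, _, _, _, inferInstance, LieModuleHom.id, β, Function.surjective_id,
      fun w => by simp, fun _ h => absurd h (Nat.succ_ne_zero _), (LieModule.ker K L W).lie_mem hb⟩
  | succ j ih =>
    obtain ⟨V, _, _, _, _, _, π, θ, h⟩ := ih
    exact ⟨DerivationExtension D α ⊗[K] V, _, _, _, _, inferInstance, _, _,
      h.tensor ha hb hαa hαb⟩

theorem SecondCohomologyVanishes.lieDerivation_apply_eq_zero_of_dual_apply_eq_zero {K : Type*}
    {L W : Type u} [Field K] [CharZero K] [LieRing L] [LieAlgebra K L]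
    [AddCommGroup W] [Module K W] [LieRingModule L W] [LieModule K L W] [FiniteDimensional K W]
    (H : SecondCohomologyVanishes K L)
    {D : LieDerivation K L W} {α : W →ₗ[K] K} {a b : L} (ha : a ∈ LieModule.ker K L W)
    (hb : b ∈ LieModule.ker K L W) (hnil : IsNilpotent (toEnd K L L a)) (hαa : α (D a) = 1)
    (hαb : α (D b) = 0) : D b = 0 := by
  obtain ⟨n, hn⟩ := hnil
  refine (Module.forall_dual_apply_eq_zero_iff K (D b)).1 fun β => ?_
  obtain ⟨V, _, _, _, _, _, π, θ, h⟩ := exists_isFactorialCover ha hb hαa hαb β (n + 1)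
  obtain ⟨P, hP⟩ := H.exists_lieDerivation_lift h.surjective D
  -- `⁅a, b⁆` kills `V`, so `P (ad a ^ n ⁅a, b⁆) = a ^ n (P ⁅a, b⁆)`, and `ad a ^ n = 0`.
  have hzero : (toEnd K L V a ^ n) (⁅a, P b⁆ - ⁅b, P a⁆) = 0 := by
    rw [← P.apply_lie_eq_sub, ← apply_toEnd_pow_of_mem_ker P h.lie_mem_ker, hn,
      LinearMap.zero_apply, map_zero]
  have hpow : (toEnd K L V a ^ n) ⁅a, P b⁆ = (toEnd K L V a ^ (n + 1)) (P b) := by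
    rw [pow_succ, Module.End.mul_apply, toEnd_apply_apply]
  have hfac := congrArg θ hzero
  rw [map_sub, map_sub, hpow, h.apply_pow, h.apply_pow_lie n rfl, sub_zero, hP, map_zero] at hfac
  exact (smul_eq_zero.1 hfac).resolve_left (Nat.factorial_ne_zero _)

end FactorialCover

section ExtensionClass

/-- The extension class of `M` by `N` and `M ⧸ N` relative to a linear section `s`, as a derivation
with values in `M ⧸ N → N`. -/
def extensionDerivation {R L M : Type*} [CommRing R] [LieRing L] [LieAlgebra R L] [AddCommGroup M]
    [Module R M] [LieRingModule L M] [LieModule R L M] (N : LieSubmodule R L M)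
    (s : M ⧸ N →ₗ[R] M) (hs : ∀ q, LieSubmodule.Quotient.mk' N (s q) = q) :
    LieDerivation R L (M ⧸ N →ₗ[R] N) where
  toFun x := LinearMap.codRestrict N.toSubmodule ⁅x, s⁆ fun q => by
    change ⁅x, s q⁆ - s ⁅x, q⁆ ∈ N
    rw [← LieSubmodule.Quotient.mk_eq_zero, map_sub, LieModuleHom.map_lie, hs, hs, sub_self]
  map_add' x y := by ext1; exact Subtype.ext (LinearMap.congr_fun (add_lie x y s) _)
  map_smul' t x := by ext1; exact Subtype.ext (LinearMap.congr_fun (smul_lie t x s) _)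
  leibniz' x y := by ext1; exact Subtype.ext (LinearMap.congr_fun (lie_lie x y s) _)

namespace DerivationsVanishOn

variable {K : Type*} {L M : Type u} [Field K] [LieRing L] [LieAlgebra K L]
  [AddCommGroup M] [Module K M] [LieRingModule L M] [LieModule K L M] [FiniteDimensional K M]
  {A : LieIdeal K L}

theorem lie_top_eq_bot_of_lie_lie_top_eq_bot (hA : DerivationsVanishOn A)
    (h : ⁅A, ⁅A, (⊤ : LieSubmodule K L M)⁆⁆ = ⊥) : ⁅A, (⊤ : LieSubmodule K L M)⁆ = ⊥ := by
  let N := ⁅A, (⊤ : LieSubmodule K L M)⁆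
  have hN (a : L) (ha : a ∈ A) (n : N) : ⁅a, n⁆ = 0 :=
    Subtype.ext ((LieSubmodule.lie_eq_bot_iff _ _).1 h a ha n n.2)
  have hQ (a : L) (ha : a ∈ A) (q : M ⧸ N) : ⁅a, q⁆ = 0 := by
    obtain ⟨m, rfl⟩ := LieSubmodule.Quotient.surjective_mk' N q
    rw [← LieModuleHom.map_lie, LieSubmodule.Quotient.mk_eq_zero]
    exact LieSubmodule.lie_mem_lie ha (LieSubmodule.mem_top m)
  have hker : A ≤ LieModule.ker K L (M ⧸ N →ₗ[K] N) := fun a ha =>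
    (LieModule.mem_ker K L _ a).2 fun f => by
      ext1 q
      rw [LieHom.lie_apply, hN a ha, hQ a ha, map_zero, sub_zero, LinearMap.zero_apply]
  obtain ⟨s, hs⟩ := (LieSubmodule.Quotient.mk' N : M →ₗ[K] M ⧸ N).exists_rightInverse_of_surjective
    (LinearMap.range_eq_top.2 (LieSubmodule.Quotient.surjective_mk' N))
  have hs' (q : M ⧸ N) : LieSubmodule.Quotient.mk' N (s q) = q := LinearMap.congr_fun hs q
  rw [LieSubmodule.lie_eq_bot_iff]
  intro a ha m _
  let q := LieSubmodule.Quotient.mk' N m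
  have hsq : ⁅a, s q⁆ = 0 := by
    have hD : ⁅a, s q⁆ - s ⁅a, q⁆ = 0 := congrArg Subtype.val
      (LinearMap.congr_fun (hA _ hker (extensionDerivation N s hs') a ha) q)
    rwa [hQ a ha, map_zero, sub_zero] at hD
  have hm : m - s q ∈ N := by
    rw [← LieSubmodule.Quotient.mk_eq_zero, map_sub, hs', sub_self]
  rw [← sub_add_cancel m (s q), lie_add, hsq, add_zero]
  exact congrArg Subtype.val (hN a ha ⟨_, hm⟩)

theorem lie_top_eq_bot (hA : DerivationsVanishOn A)
    (hnil : ∀ a ∈ A, IsNilpotent (toEnd K L M a)) : ⁅A, (⊤ : LieSubmodule K L M)⁆ = ⊥ := by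
  have hstable : ⁅A, (⊤ : LieSubmodule K L M)⁆ ≤ ⁅A, ⁅A, (⊤ : LieSubmodule K L M)⁆⁆ := by
    let π := LieSubmodule.Quotient.mk' ⁅A, ⁅A, (⊤ : LieSubmodule K L M)⁆⁆
    have htop : LieSubmodule.map π ⊤ = ⊤ := by
      rw [LieModuleHom.map_top, LieSubmodule.Quotient.range_mk']
    have hzero : LieSubmodule.map π ⁅A, ⁅A, (⊤ : LieSubmodule K L M)⁆⁆ = ⊥ :=
      LieSubmodule.Quotient.map_mk'_eq_bot_le _ _ |>.2 le_rfl
    rw [← LieSubmodule.Quotient.map_mk'_eq_bot_le, LieSubmodule.map_bracket_eq, htop]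
    apply hA.lie_top_eq_bot_of_lie_lie_top_eq_bot
    rw [← htop, ← LieSubmodule.map_bracket_eq, ← LieSubmodule.map_bracket_eq, hzero]
  have hlcs (j : ℕ) : ⁅A, (⊤ : LieSubmodule K L M)⁆ ≤ A.lcs M j := by
    induction j with
    | zero => simp
    | succ j ih =>
      rw [LieIdeal.lcs_succ]
      exact hstable.trans (LieSubmodule.mono_lie_right _ ih)
  have : LieModule.IsNilpotent A M :=
    (LieModule.isNilpotent_iff_forall' (R := K)).2 fun a => hnil a a.2
  obtain ⟨k, hk⟩ := (LieModule.isNilpotent_iff K A M).1 this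
  have hbot : A.lcs M k = ⊥ := by
    rw [← LieSubmodule.toSubmodule_inj, LieIdeal.coe_lcs_eq, hk]
    rfl
  exact eq_bot_iff.2 (hbot ▸ hlcs k)

theorem lie_top_top_radical_eq_bot [CharZero K] [FiniteDimensional K L]
    (h : DerivationsVanishOn ⁅(⊤ : LieIdeal K L), radical K L⁆) :
    ⁅⁅(⊤ : LieIdeal K L), (⊤ : LieIdeal K L)⁆, radical K L⁆ = ⊥ := by
  refine eq_bot_iff.2 ((lie_top_top_le (radical K L)).trans ?_)
  rw [LieSubmodule.lie_comm, h.lie_top_eq_bot fun a ha => isNilpotent_toEnd_of_mem_top_lie _ ha]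

end DerivationsVanishOn

end ExtensionClass

section Structure

attribute [local instance] LieRing.ofAssociativeRing

variable {K : Type*} {L : Type u} [Field K] [CharZero K] [LieRing L] [LieAlgebra K L]

namespace SecondCohomologyVanishes

theorem derivationsVanishOn_of_perfect (H : SecondCohomologyVanishes K L)
    (hL : ⁅(⊤ : LieIdeal K L), (⊤ : LieIdeal K L)⁆ = ⊤) {A : LieIdeal K L}
    (hA : ⁅(⊤ : LieIdeal K L), A⁆ = A) (hnil : ∀ a ∈ A, IsNilpotent (toEnd K L L a)) :
    DerivationsVanishOn A := by
  intro W _ _ _ _ _ hAW D a ha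
  by_contra hDa
  obtain ⟨α, hα⟩ := Module.Projective.exists_dual_eq_one K hDa
  have hlie {b : L} (hb : b ∈ A) (x : L) : D ⁅x, b⁆ = ⁅x, D b⁆ := by
    rw [D.apply_lie_eq_sub, (LieModule.mem_ker K L W b).1 (hAW hb), sub_zero]
  have hD {b : L} (hb : b ∈ A) : D b = α (D b) • D a := by
    rw [← sub_eq_zero, ← map_smul, ← map_sub]
    exact H.lieDerivation_apply_eq_zero_of_dual_apply_eq_zero (hAW ha)
      (hAW (A.sub_mem hb (A.smul_mem _ ha))) (hnil a ha) hα (by simp [hα])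
  have hscalar (x : L) : ∃ c : K, ⁅x, D a⁆ = c • D a :=
    ⟨_, (hlie ha x).symm.trans (hD (A.lie_mem ha))⟩
  have hinv (x : L) : ⁅x, D a⁆ = 0 := by
    suffices h : (⁅(⊤ : LieIdeal K L), (⊤ : LieIdeal K L)⁆ : LieIdeal K L).toSubmodule ≤
        LinearMap.ker ((toEnd K L W : L →ₗ[K] Module.End K W).flip (D a)) by
      rw [hL] at h
      exact h (LieSubmodule.mem_top x)
    refine toSubmodule_lie_le_iff.2 fun y _ z _ => ?_
    change ⁅⁅y, z⁆, D a⁆ = 0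
    obtain ⟨⟨s, hs⟩, t, ht⟩ := And.intro (hscalar y) (hscalar z)
    rw [lie_lie, hs, ht, lie_smul, lie_smul, hs, ht, smul_comm, sub_self]
  have hker : (⁅(⊤ : LieIdeal K L), A⁆ : LieIdeal K L).toSubmodule ≤
      LinearMap.ker (D : L →ₗ[K] W) := toSubmodule_lie_le_iff.2 fun x _ b hb => by
    change D ⁅x, b⁆ = 0
    rw [hlie hb, hD hb, lie_smul, hinv, smul_zero]
  rw [hA] at hker
  exact hDa (hker ha)

variable [FiniteDimensional K L]

theorem hasTrivialRadical_of_perfect (H : SecondCohomologyVanishes K L)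
    (hL : ⁅(⊤ : LieIdeal K L), (⊤ : LieIdeal K L)⁆ = ⊤) : HasTrivialRadical K L := by
  have hA : ⁅(⊤ : LieIdeal K L), ⁅(⊤ : LieIdeal K L), radical K L⁆⁆ =
      ⁅(⊤ : LieIdeal K L), radical K L⁆ :=
    (LieSubmodule.lie_le_right _ _).antisymm (by simpa only [hL] using lie_top_top_le (radical K L))
  have hbot := (H.derivationsVanishOn_of_perfect hL hA
    fun a ha => isNilpotent_toEnd_of_mem_top_lie _ ha).lie_top_top_radical_eq_bot
  rw [hL, ← le_max_triv_iff_bracket_eq_bot] at hbot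
  have hdisj := disjoint_lie_top_top_radical hbot
  rw [hL, top_disjoint] at hdisj
  exact ⟨hdisj⟩

theorem ker_lieCharacter_le (H : SecondCohomologyVanishes K L) {χ : LieCharacter K L}
    (hχ : χ ≠ 0) : χ.ker ≤ ⁅(⊤ : LieIdeal K L), (⊤ : LieIdeal K L)⁆ := by
  obtain ⟨h, -, hh⟩ := exists_mem_radical_apply_eq_one hχ
  let N : LieIdeal K L := ⁅(⊤ : LieIdeal K L), (⊤ : LieIdeal K L)⁆
  have htriv (x : L) (q : L ⧸ N) : ⁅x, q⁆ = 0 := by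
    obtain ⟨y, rfl⟩ := LieSubmodule.Quotient.surjective_mk' N q
    rw [← LieModuleHom.map_lie, LieSubmodule.Quotient.mk_eq_zero]
    exact LieSubmodule.lie_mem_lie (LieSubmodule.mem_top x) (LieSubmodule.mem_top y)
  let D : LieDerivation K L (L ⧸ N) :=
    { (LieSubmodule.Quotient.mk' N : L →ₗ[K] L ⧸ N) with
      leibniz' := fun x y => by
        change LieSubmodule.Quotient.mk' N ⁅x, y⁆ = _
        rw [LieModuleHom.map_lie, htriv, htriv, htriv, sub_zero] }
  intro x hx
  exact (LieSubmodule.Quotient.mk_eq_zero N).1 <| H.derivationsVanishOn_of_lieCharacter hh le_rfl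
    (L ⧸ N) (fun y _ => (LieModule.mem_ker K L _ y).2 (htriv y)) D x hx

theorem radical_le_center (H : SecondCohomologyVanishes K L) {χ : LieCharacter K L}
    (hχ : χ ≠ 0) : radical K L ≤ center K L := by
  obtain ⟨h, hR, hh⟩ := exists_mem_radical_apply_eq_one hχ
  have hbot := (H.derivationsVanishOn_of_lieCharacter hh (B := ⁅(⊤ : LieIdeal K L), radical K L⁆)
    fun a ha => lieCharacter_apply_of_mem_derived χ
      (LieSubmodule.mono_lie_right ⊤ le_top ha)).lie_top_top_radical_eq_bot
  have hcomm (x r : L) (hr : r ∈ radical K L) : ⁅x, r⁆ = χ x • ⁅h, r⁆ := by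
    have hx : x - χ x • h ∈ ⁅(⊤ : LieIdeal K L), (⊤ : LieIdeal K L)⁆ :=
      H.ker_lieCharacter_le hχ (by simp [hh])
    rw [← sub_eq_zero, ← smul_lie, ← sub_lie]
    exact (LieSubmodule.lie_eq_bot_iff _ _).1 hbot _ hx r hr
  intro r hr
  have hhr : ⁅h, r⁆ = 0 := by
    rw [← lie_skew, hcomm r h hR, lie_self, smul_zero, neg_zero]
  exact (mem_maxTrivSubmodule K L L r).2 fun x => by rw [hcomm x r hr, hhr, smul_zero]

theorem finrank_radical_eq_one (H : SecondCohomologyVanishes K L) {χ : LieCharacter K L}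
    (hχ : χ ≠ 0) : Module.finrank K (radical K L) = 1 := by
  obtain ⟨h, hR, hh⟩ := exists_mem_radical_apply_eq_one hχ
  have hdisj := disjoint_lie_top_top_radical (H.radical_le_center hχ)
  refine finrank_eq_one (⟨h, hR⟩ : radical K L) (fun h0 => ?_) fun r => ⟨χ r, Subtype.ext ?_⟩
  · have h0' : h = 0 := congrArg Subtype.val h0
    simp [h0'] at hh
  · have hmem : (r : L) - χ r • h ∈ (⊥ : LieIdeal K L) := hdisj.eq_bot ▸
      ⟨H.ker_lieCharacter_le hχ (by simp [hh]),
        (radical K L).sub_mem r.2 ((radical K L).smul_mem _ hR)⟩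
    exact (sub_eq_zero.1 hmem).symm

end SecondCohomologyVanishes

theorem converse_second_whitehead_general [FiniteDimensional K L]
    (H : SecondCohomologyVanishes K L) :
    HasTrivialRadical K L ∨ ∃ S Z : LieIdeal K L, HasTrivialRadical K S ∧
      Module.finrank K Z = 1 ∧ Z ≤ center K L ∧ IsCompl S Z := by
  by_cases hL : ⁅(⊤ : LieIdeal K L), (⊤ : LieIdeal K L)⁆ = ⊤
  · exact Or.inl (H.hasTrivialRadical_of_perfect hL)
  obtain ⟨χ, hχ⟩ := exists_lieCharacter_ne_zero hL
  have hcenter := H.radical_le_center hχ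
  have hcompl : IsCompl ⁅(⊤ : LieIdeal K L), (⊤ : LieIdeal K L)⁆ (radical K L) :=
    ⟨disjoint_lie_top_top_radical hcenter, codisjoint_iff.2 (lie_top_top_sup_radical K L)⟩
  exact Or.inr ⟨_, _, hasTrivialRadical_of_isCompl_radical hcompl, H.finrank_radical_eq_one hχ,
    hcenter, hcompl⟩

end Structure

/-- The converse to the Second Whitehead Lemma: a finite-dimensional Lie algebra over a field
of characteristic zero such that the second cohomology with coefficients in every
finite-dimensional module vanishes (every 2-cocycle is a 2-coboundary) is semisimple (i.e.
has zero solvable radical), or one-dimensional, or the direct sum of a semisimple ideal and a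
one-dimensional central ideal. -/
theorem converse_second_whitehead (K : Type*) [Field K] [CharZero K]
    (L : Type) [LieRing L] [LieAlgebra K L] [FiniteDimensional K L]
    (H : ∀ (M : Type) (_ : AddCommGroup M) (_ : Module K M) (_ : LieRingModule L M)
      (_ : LieModule K L M), FiniteDimensional K M →
      ∀ f : L →ₗ[K] L →ₗ[K] M, (∀ x : L, f x x = 0) →
        (∀ x y z : L,
          ⁅x, f y z⁆ - ⁅y, f x z⁆ + ⁅z, f x y⁆
            - f ⁅x, y⁆ z + f ⁅x, z⁆ y - f ⁅y, z⁆ x = 0) →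
        ∃ g : L →ₗ[K] M, ∀ x y : L, f x y = ⁅x, g y⁆ - ⁅y, g x⁆ - g ⁅x, y⁆) :
    LieAlgebra.HasTrivialRadical K L ∨ Module.finrank K L = 1 ∨
      ∃ S Z : LieIdeal K L, LieAlgebra.HasTrivialRadical K S ∧
        Module.finrank K Z = 1 ∧ Z ≤ LieAlgebra.center K L ∧ S ⊓ Z = ⊥ ∧ S ⊔ Z = ⊤ :=
  (converse_second_whitehead_general (.of_forall_bilinear H)).imp_right
    fun ⟨S, Z, hS, hZ, hcenter, hSZ⟩ =>
      Or.inr ⟨S, Z, hS, hZ, hcenter, hSZ.inf_eq_bot, hSZ.sup_eq_top⟩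
end

section
/- Let X be a set with 3 elements. The number of ternary maps f: X × X × X → X for which there exists a binary map *: X × X → X with f(x,y,z) = (x*y)*z for all x,y,z ∈ X, is 19292. -/
/-!
It is enough to examine the binary maps that share their ternary map with another one. Let `op` and
`op'` be distinct with the same ternary map, on three points. The rows `op (op x y)` that occur in
the ternary map are the same for both. If there is only one such row, then `(x * y) * z` depends on
`z` alone. Otherwise these rows take at least two values, hence all values of `op` if it has only
two; if `op` has three values, every row occurs and the same holds. So `op` and `op'` have the same
values. If the rows at these values are distinct, then `op'` arises from `op` by a permutation of
the values. In the remaining case the values exhaust the three points and there are exactly two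
distinct rows; then `op` and `op'` differ at every point by an exchange of these rows. The 631
binary maps admitting one of these descriptions have 240 ternary maps, and the others have one
each, whence `19683 - 631 + 240 = 19292`.
-/

open Finset

section Counting

variable {ι α β : Type*} [DecidableEq β]

theorem card_image_univ_add_card [Fintype α] {F : α → β} {s : Finset α}
    (hs : ∀ a b, F a = F b → a ≠ b → a ∈ s) :
    #(univ.image F) + #s = Fintype.card α + #(s.image F) := by
  classical
  have injOn_compl : Set.InjOn F (sᶜ : Finset α) := fun a ha b _ hab => by
    by_contra hne
    exact mem_compl.1 ha (hs a b hab hne)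
  have disjoint_images : Disjoint (s.image F) (sᶜ.image F) := by
    refine disjoint_left.2 fun y hy hy' => ?_
    obtain ⟨a, ha, rfl⟩ := mem_image.1 hy
    obtain ⟨b, hb, hba⟩ := mem_image.1 hy'
    exact mem_compl.1 hb (hs b a hba fun h => mem_compl.1 hb (h ▸ ha))
  rw [← union_compl s, image_union, card_union_of_disjoint disjoint_images,
    card_image_of_injOn injOn_compl, add_assoc, card_compl_add_card, add_comm]

/-- The removal of duplicates, quadratic in the size of a list, becomes local to a residue class;
this brings the evaluation of such cardinalities within reach of the kernel. -/
theorem card_image_biUnion_eq_sum_mod [DecidableEq α] (s : Finset ι) (t : ι → Finset α)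
    (code : α → ℕ) {m : ℕ} (hm : 0 < m) :
    #((s.biUnion t).image code) =
      ∑ c ∈ range m, #(s.biUnion fun i => {a ∈ t i | code a % m = c}.image code) := by
  rw [card_eq_sum_card_fiberwise (f := (· % m)) (t := range m)
    fun n _ => mem_coe.2 (mem_range.2 (n.mod_lt hm))]
  refine sum_congr rfl fun c _ => congrArg card ?_
  ext n
  simp only [mem_filter, mem_image, mem_biUnion]
  constructor
  · rintro ⟨⟨a, ⟨i, hi, ha⟩, rfl⟩, hc⟩
    exact ⟨i, hi, a, ⟨ha, hc⟩, rfl⟩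
  · rintro ⟨i, hi, a, ⟨ha, hc⟩, rfl⟩
    exact ⟨⟨a, ⟨i, hi, ha⟩, rfl⟩, hc⟩

end Counting

section LeftAssoc

variable {X : Type*}

/-- The ternary map `(x, y, z) ↦ (x * y) * z` of a binary map `*`. A binary map is read as the
family of its rows `op x : X → X`, so that `leftAssoc op x y` is itself a row of `op`. -/
def leftAssoc (op : X → X → X) : X → X → X → X := fun x y => op (op x y)

variable {op op' : X → X → X} {r s : X → X}

theorem eq_const_of_comp_rows (hop : ∀ x, op x = r ∨ op x = s) (hsurj : ∀ u, ∃ x y, op x y = u)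
    (hr : ∀ y, op (r y) = r) (hs : ∀ y, op (s y) = r) (u : X) : op u = r := by
  obtain ⟨x, y, rfl⟩ := hsurj u
  rcases hop x with hx | hx
  · rw [hx, hr]
  · rw [hx, hs]

theorem eq_of_leftAssoc_eq_of_common_row (hL : leftAssoc op = leftAssoc op')
    (hop : ∀ x, op x = r ∨ op x = s) (hop' : ∀ x, op' x = r ∨ op' x = s)
    (hsurj : ∀ u, ∃ x y, op x y = u) (hsurj' : ∀ u, ∃ x y, op' x y = u)
    (hr : ∃ x, op x = r ∧ op' x = r) : op = op' := by
  have hL' (x y : X) : op (op x y) = op' (op' x y) := congrFun₂ hL x y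
  have agree_on_row {t : X → X} (ht : ∃ x, op x = t ∧ op' x = t) (y : X) :
      op (t y) = op' (t y) := by
    obtain ⟨x, hx, hx'⟩ := ht
    simpa only [hx, hx'] using hL' x y
  by_cases hs : ∃ x, op x = s ∧ op' x = s
  · funext u
    obtain ⟨x, y, rfl⟩ := hsurj u
    rcases hop x with hx | hx
    · rw [hx, agree_on_row hr]
    · rw [hx, agree_on_row hs]
  have op_r (y : X) : op (r y) = r :=
    (hop (r y)).resolve_right fun h => hs ⟨r y, h, agree_on_row hr y ▸ h⟩
  have op'_r (y : X) : op' (r y) = r := agree_on_row hr y ▸ op_r y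
  funext z
  rcases hop z with h | h <;> rcases hop' z with h' | h'
  · rw [h, h']
  · have op'_s (y : X) : op' (s y) = r := by rw [← h', ← hL' z y, h, op_r]
    rw [h, eq_const_of_comp_rows hop' hsurj' op'_r op'_s]
  · have op_s (y : X) : op (s y) = r := by rw [← h, hL' z y, h', op'_r]
    rw [h', eq_const_of_comp_rows hop hsurj op_r op_s]
  · rw [h, h']

theorem forall_row_ne_of_leftAssoc_eq (hL : leftAssoc op = leftAssoc op') (hne : op ≠ op')
    (hop : ∀ x, op x = r ∨ op x = s) (hop' : ∀ x, op' x = r ∨ op' x = s)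
    (hsurj : ∀ u, ∃ x y, op x y = u) (hsurj' : ∀ u, ∃ x y, op' x y = u) (x : X) :
    op x ≠ op' x := by
  intro hx
  rcases hop x with h | h
  · exact hne <| eq_of_leftAssoc_eq_of_common_row hL hop hop' hsurj hsurj' ⟨x, h, hx ▸ h⟩
  · exact hne <| eq_of_leftAssoc_eq_of_common_row hL (fun x => (hop x).symm)
      (fun x => (hop' x).symm) hsurj hsurj' ⟨x, h, hx ▸ h⟩

section Finite

variable [Fintype X] [DecidableEq X]

/-- The values taken by the rows in `W`. -/
def rowValues (W : Finset (X → X)) : Finset X := W.biUnion fun r => univ.image r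

/-- The values of a binary map, i.e. the left factors of the outer product in `(x * y) * z`. -/
def opValues (op : X → X → X) : Finset X := rowValues (univ.image op)

theorem mem_rowValues {W : Finset (X → X)} {u : X} :
    u ∈ rowValues W ↔ ∃ r ∈ W, ∃ y, r y = u := by
  simp only [rowValues, mem_biUnion, mem_image, mem_univ, true_and]

theorem mem_opValues {u : X} : u ∈ opValues op ↔ ∃ x y, op x y = u := by
  simp only [opValues, mem_rowValues, mem_image, mem_univ, true_and, exists_exists_eq_and]

theorem image_opValues_eq_image_leftAssoc (op : X → X → X) :
    (opValues op).image op = univ.image fun p : X × X => leftAssoc op p.1 p.2 := by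
  ext r
  simp only [mem_image, mem_opValues, mem_univ, true_and, Prod.exists, leftAssoc]
  exact ⟨fun ⟨_, ⟨x, y, rfl⟩, hr⟩ => ⟨x, y, hr⟩, fun ⟨x, y, hr⟩ => ⟨_, ⟨x, y, rfl⟩, hr⟩⟩

theorem two_le_card_rowValues {W : Finset (X → X)} (hW : 1 < #W) : 2 ≤ #(rowValues W) := by
  obtain ⟨r, hr, s, hs, hrs⟩ := one_lt_card.1 hW
  obtain ⟨y, hy⟩ := Function.ne_iff.1 hrs
  exact one_lt_card.2
    ⟨r y, mem_rowValues.2 ⟨r, hr, y, rfl⟩, s y, mem_rowValues.2 ⟨s, hs, y, rfl⟩, hy⟩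

theorem rowValues_image_opValues (h : Fintype.card X ≤ #(rowValues ((opValues op).image op)) + 1) :
    rowValues ((opValues op).image op) = opValues op := by
  have hsub : rowValues ((opValues op).image op) ⊆ opValues op :=
    biUnion_subset_biUnion_of_subset_left _ (image_subset_image (subset_univ _))
  rcases hsub.eq_or_ssubset with heq | hssub
  · exact heq
  · have huniv : opValues op = univ :=
      eq_univ_of_card _ <| le_antisymm (card_le_univ _) (h.trans (card_lt_card hssub))
    exact congrArg (fun s => rowValues (s.image op)) huniv

theorem exists_perm_comp_of_injOn (hL : leftAssoc op = leftAssoc op')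
    (hinj : Set.InjOn op (opValues op)) (hinj' : Set.InjOn op' (opValues op')) :
    ∃ σ : Equiv.Perm X, ∀ x y, σ (op x y) = op' x y := by
  have same_row (u : X) (hu : u ∈ opValues op) : ∃ u' ∈ opValues op', op' u' = op u := by
    obtain ⟨x, y, rfl⟩ := mem_opValues.1 hu
    exact ⟨op' x y, mem_opValues.2 ⟨x, y, rfl⟩, (congrFun₂ hL x y).symm⟩
  choose! f hf_mem hf using same_row
  have f_inj : Set.InjOn f (opValues op) := fun u hu w hw huw =>
    hinj hu hw (by rw [← hf u hu, ← hf w hw, huw])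
  obtain ⟨σ, hσ⟩ := Equiv.Perm.exists_extending_pair
    Subtype.val ((opValues op : Set X).domRestrict f) Subtype.val_injective f_inj.injective
  refine ⟨σ, fun x y => ?_⟩
  have hxy : op x y ∈ opValues op := mem_opValues.2 ⟨x, y, rfl⟩
  rw [show σ (op x y) = f (op x y) from hσ ⟨_, hxy⟩]
  exact hinj' (hf_mem _ hxy) (mem_opValues.2 ⟨x, y, rfl⟩)
    ((hf _ hxy).trans (congrFun₂ hL x y))

/-- The binary maps all of whose columns `x ↦ op x y` belong to `C`. -/
def opsWithColumns (C : Finset (X → X)) : Finset (X → X → X) :=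
  (Fintype.piFinset fun _ : X => C).map (Equiv.piComm fun _ _ : X => X).toEmbedding

theorem mem_opsWithColumns {C : Finset (X → X)} :
    op ∈ opsWithColumns C ↔ ∀ y, (op · y) ∈ C := by
  simp only [opsWithColumns, mem_map_equiv, Fintype.mem_piFinset]
  rfl

/-- Columns of the binary maps with values in `S` whose rows at the points of `S` coincide; for
these, `(x * y) * z` depends on `z` alone. -/
def constantColumns (S : Finset X) : Finset (X → X) :=
  {v | (∀ u, v u ∈ S) ∧ ∀ u ∈ S, ∀ w ∈ S, v u = v w}

/-- Columns of the binary maps with values in `S` which satisfy `x * y = σ (σ x * y)` for `x ∈ S`;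
for these, `(x, y) ↦ σ (x * y)` has the same left-associated ternary map. -/
def relabelledColumns (σ : Equiv.Perm X) (S : Finset X) : Finset (X → X) :=
  {v | (∀ u, v u ∈ S) ∧ ∀ u ∈ S, σ (v (σ u)) = v u}

/-- Columns of the binary maps with one row on `A` and one row on its complement, the entries of
which lie on opposite sides of `A`; for these, exchanging the two rows has no effect on
`(x * y) * z`. -/
def exchangeableColumns (A : Finset X) : Finset (X → X) :=
  {v | ∀ u w, if u ∈ A ↔ w ∈ A then v u = v w else ¬(v u ∈ A ↔ v w ∈ A)}

variable (X) in
/-- The column sets of the three kinds of families in which a binary map sharing its ternary map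
with another one can lie when `X` has three elements. -/
def collisionCandidateColumns : Finset (Finset (X → X)) :=
  univ.image constantColumns ∪ univ.image exchangeableColumns ∪
    (({1}ᶜ : Finset (Equiv.Perm X)) ×ˢ univ).image fun p => relabelledColumns p.1 p.2

variable (X) in
/-- The binary maps in one of these families. Not all of them do share their ternary map with
another binary map, e.g. not `(x, y) ↦ y`, but these do not affect the count. -/
def collisionCandidates : Finset (X → X → X) :=
  (collisionCandidateColumns X).biUnion opsWithColumns

theorem mem_collisionCandidates_of_constantColumns {S : Finset X}
    (h : op ∈ opsWithColumns (constantColumns S)) : op ∈ collisionCandidates X :=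
  mem_biUnion.2 ⟨_, mem_union_left _ (mem_union_left _ (mem_image_of_mem _ (mem_univ S))), h⟩

theorem mem_collisionCandidates_of_exchangeableColumns {A : Finset X}
    (h : op ∈ opsWithColumns (exchangeableColumns A)) : op ∈ collisionCandidates X :=
  mem_biUnion.2 ⟨_, mem_union_left _ (mem_union_right _ (mem_image_of_mem _ (mem_univ A))), h⟩

theorem mem_collisionCandidates_of_relabelledColumns {σ : Equiv.Perm X} (hσ : σ ≠ 1) {S : Finset X}
    (h : op ∈ opsWithColumns (relabelledColumns σ S)) : op ∈ collisionCandidates X :=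
  mem_biUnion.2 ⟨_, mem_union_right _ (mem_image.2 ⟨(σ, S), by simpa using hσ, rfl⟩), h⟩

theorem mem_collisionCandidates_of_constant
    (h : ∀ u ∈ opValues op, ∀ w ∈ opValues op, op u = op w) : op ∈ collisionCandidates X :=
  mem_collisionCandidates_of_constantColumns (S := opValues op) <| mem_opsWithColumns.2 fun y =>
    mem_filter.2 ⟨mem_univ _, fun u => mem_opValues.2 ⟨u, y, rfl⟩,
      fun u hu w hw => congrFun (h u hu w hw) y⟩

theorem mem_collisionCandidates_of_injOn (hL : leftAssoc op = leftAssoc op') (hne : op ≠ op')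
    (hinj : Set.InjOn op (opValues op)) (hinj' : Set.InjOn op' (opValues op')) :
    op ∈ collisionCandidates X := by
  obtain ⟨σ, hσ⟩ := exists_perm_comp_of_injOn hL hinj hinj'
  have hσ_ne : σ ≠ 1 := by
    rintro rfl
    exact hne (funext₂ hσ)
  refine mem_collisionCandidates_of_relabelledColumns hσ_ne (S := opValues op) <|
    mem_opsWithColumns.2 fun z => mem_filter.2
      ⟨mem_univ _, fun u => mem_opValues.2 ⟨u, z, rfl⟩, fun u hu => ?_⟩
  obtain ⟨x, y, rfl⟩ := mem_opValues.1 hu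
  calc σ (op (σ (op x y)) z) = op' (op' x y) z := by rw [hσ, hσ]
    _ = op (op x y) z := (congrFun₃ hL x y z).symm

theorem mem_collisionCandidates_of_two_rows (hL : leftAssoc op = leftAssoc op') (hne : op ≠ op')
    (hop : ∀ x, op x = r ∨ op x = s) (hop' : ∀ x, op' x = r ∨ op' x = s)
    (hsurj : ∀ u, ∃ x y, op x y = u) (hsurj' : ∀ u, ∃ x y, op' x y = u) :
    op ∈ collisionCandidates X := by
  have row_ne := forall_row_ne_of_leftAssoc_eq hL hne hop hop' hsurj hsurj'
  have op_eq_iff {u w : X} : op u = op w ↔ (op u = r ↔ op w = r) := by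
    grind
  have op'_eq {u w : X} (h : op u ≠ op w) : op' u = op w := by
    grind
  refine mem_collisionCandidates_of_exchangeableColumns (A := {x | op x = r}) <|
    mem_opsWithColumns.2 fun y => mem_filter.2 ⟨mem_univ _, fun u w => ?_⟩
  simp only [mem_filter, mem_univ, true_and, ← op_eq_iff]
  split_ifs with huw
  · exact congrFun huw y
  · exact fun h => row_ne (op w y) <| calc
      op (op w y) = op (op u y) := h.symm
      _ = op' (op' u y) := congrFun₂ hL u y
      _ = op' (op w y) := by rw [op'_eq huw]

theorem rowValues_image_opValues_of_card_eq_three (hX : Fintype.card X = 3)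
    (hop : 1 < #((opValues op).image op)) :
    rowValues ((opValues op).image op) = opValues op :=
  rowValues_image_opValues (by have := two_le_card_rowValues hop; omega)

theorem mem_collisionCandidates_of_leftAssoc_eq (hX : Fintype.card X = 3)
    (hL : leftAssoc op = leftAssoc op') (hne : op ≠ op') : op ∈ collisionCandidates X := by
  have rows_eq : (opValues op).image op = (opValues op').image op' := by
    simp only [image_opValues_eq_image_leftAssoc, hL]
  rcases le_or_gt #((opValues op).image op) 1 with one_row | many_rows
  · exact mem_collisionCandidates_of_constant fun u hu w hw =>
      card_le_one.1 one_row _ (mem_image_of_mem _ hu) _ (mem_image_of_mem _ hw)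
  have values_eq : opValues op = opValues op' := by
    rw [← rowValues_image_opValues_of_card_eq_three hX many_rows, rows_eq,
      rowValues_image_opValues_of_card_eq_three hX (rows_eq ▸ many_rows)]
  rcases (card_image_le (s := opValues op) (f := op)).eq_or_lt with hinj | hlt
  · exact mem_collisionCandidates_of_injOn hL hne (card_image_iff.1 hinj)
      (card_image_iff.1 (by rw [← rows_eq, hinj, values_eq]))
  · have card_values_le : #(opValues op) ≤ 3 := hX ▸ card_le_univ _
    have values_univ : opValues op = univ := eq_univ_of_card _ (by omega)
    obtain ⟨r, s, -, hrs⟩ := card_eq_two.1 (show #((opValues op).image op) = 2 by omega)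
    have row_cases {p : X → X} (hp : p ∈ (opValues op).image op) : p = r ∨ p = s := by
      rwa [hrs, mem_insert, mem_singleton] at hp
    have mem_values (u : X) : u ∈ opValues op := values_univ ▸ mem_univ u
    have mem_values' (u : X) : u ∈ opValues op' := values_eq ▸ mem_values u
    exact mem_collisionCandidates_of_two_rows hL hne
      (fun x => row_cases (mem_image_of_mem op (mem_values x)))
      (fun x => row_cases (rows_eq ▸ mem_image_of_mem op' (mem_values' x)))
      (fun u => mem_opValues.1 (mem_values u)) (fun u => mem_opValues.1 (mem_values' u))

/-- The two cardinalities are variables because a kernel comparing sums of closed terms such as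
`#(collisionCandidates (Fin 3))` may try to evaluate them. -/
theorem card_ternary_add_of_card_eq (hX : Fintype.card X = 3) {m n : ℕ}
    (hm : #(collisionCandidates X) = m) (hn : #((collisionCandidates X).image leftAssoc) = n) :
    Nat.card {f : X → X → X → X // ∃ op : X → X → X, ∀ x y z, f x y z = op (op x y) z} + m =
      (3 ^ 3) ^ 3 + n := by
  subst hm hn
  have card_binary : Fintype.card (X → X → X) = (3 ^ 3) ^ 3 := by
    rw [Fintype.card_fun, Fintype.card_fun, hX]
  rw [← card_binary, Nat.subtype_card (univ.image leftAssoc) fun f => by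
    simp only [mem_image, mem_univ, true_and, funext_iff, eq_comm, leftAssoc]]
  exact card_image_univ_add_card fun _ _ => mem_collisionCandidates_of_leftAssoc_eq hX

end Finite

end LeftAssoc

section Computation

/-- Base-`3` code of the Cayley table of a binary map on `Fin 3`. -/
def opCode : (Fin 3 → Fin 3 → Fin 3) ≃ Fin ((3 ^ 3) ^ 3) :=
  (Equiv.arrowCongr (Equiv.refl _) finFunctionFinEquiv).trans finFunctionFinEquiv

/-- Base-`3` code of the value table of a ternary map on `Fin 3`. -/
def ternaryCode : (Fin 3 → Fin 3 → Fin 3 → Fin 3) ≃ Fin (((3 ^ 3) ^ 3) ^ 3) :=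
  (Equiv.arrowCongr (Equiv.refl _) opCode).trans finFunctionFinEquiv

theorem card_collisionCandidates_fin_three : #(collisionCandidates (Fin 3)) = 631 := by
  have code_injective : Function.Injective fun op => (opCode op : ℕ) :=
    Fin.val_injective.comp opCode.injective
  rw [← card_image_of_injective _ code_injective, collisionCandidates,
    card_image_biUnion_eq_sum_mod _ _ _ (show 0 < 27 by norm_num)]
  decide +kernel

theorem card_image_leftAssoc_collisionCandidates_fin_three :
    #((collisionCandidates (Fin 3)).image leftAssoc) = 240 := by
  have code_injective : Function.Injective fun f => (ternaryCode f : ℕ) :=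
    Fin.val_injective.comp ternaryCode.injective
  rw [← card_image_of_injective _ code_injective, image_image, collisionCandidates,
    card_image_biUnion_eq_sum_mod _ _ _ (show 0 < 27 by norm_num)]
  decide +kernel

end Computation

/-- On a 3-element set, the number of ternary maps representable as `f (x, y, z) = (x*y)*z`
for some binary map `*` is `T_L(3) = 19292`. -/
theorem count_left_assoc_ternary_three :
    Nat.card {f : Fin 3 → Fin 3 → Fin 3 → Fin 3 //
      ∃ op : Fin 3 → Fin 3 → Fin 3, ∀ x y z, f x y z = op (op x y) z} = 19292 := by
  have count := card_ternary_add_of_card_eq (Fintype.card_fin 3)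
    card_collisionCandidates_fin_three card_image_leftAssoc_collisionCandidates_fin_three
  exact Nat.add_right_cancel (m := 631) count
end

section
/- Let X be a set with 3 elements. The number of ternary maps f: X × X × X → X for which there exists a binary map *: X × X → X with f(x,y,z) = (x*y)*z for all x,y,z ∈ X, or there exists a binary map *: X × X → X with f(x,y,z) = x*(y*z) for all x,y,z ∈ X, is 38472. -/
/-!
Reversing the three arguments exchanges the maps `(x * y) * z` with the maps `x * (y * z)`, so by
inclusion-exclusion it suffices to count the maps of the first kind and those of both kinds.
Consider the 0/1 matrix whose columns are the `3 ^ 9` operations and whose rows tell for which of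
them `(x * y) * z` equals `v`: two operations induce the same map exactly when their columns agree,
so distinct maps are distinct columns. These are counted by refining a set of columns one row
at a time. With rows and sets of columns stored as binary numerals, each refinement is a single
bitwise operation, and the recursion becomes light enough for the kernel to evaluate.
-/

namespace BitMatrix

open Set

/-- The set of column indices encoded by the bits of `s`. -/
def members (s : ℕ) : Set ℕ := {i | s.testBit i}

/-- Column `i` of the 0/1 matrix whose rows are the binary expansions of `rows`. -/
def column (rows : List ℕ) (i : ℕ) : List Bool := rows.map (·.testBit i)

/-- The number of distinct columns of the matrix `rows` among those indexed by the bits of `s`,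
found by splitting the index set along one row after another. `s &&& (s - 1)` clears the lowest bit,
so it vanishes once at most one index is left. The functions `Nat.land`, `Nat.xor`, ... stand in
place of their notations because the kernel evaluates them without unfolding type class
instances. -/
def columnCount : List ℕ → ℕ → ℕ
  | [], s => bif s.beq 0 then 0 else 1
  | r :: rows, s =>
    bif (s.land (s.sub 1)).beq 0 then bif s.beq 0 then 0 else 1
    else (columnCount rows (s.land r)).add (columnCount rows (s.xor (s.land r)))

/-- The number of columns that two matrices of the same height have in common, where only the
columns indexed by the bits of `s` in the first and of `t` in the second matrix count. The list
holds the pairs of corresponding rows. -/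
def commonColumnCount : List (ℕ × ℕ) → ℕ → ℕ → ℕ
  | [], s, t => bif s.beq 0 then 0 else bif t.beq 0 then 0 else 1
  | (p, q) :: rows, s, t =>
    bif s.beq 0 then 0
    else bif t.beq 0 then 0
    else (commonColumnCount rows (s.land p) (t.land q)).add
      (commonColumnCount rows (s.xor (s.land p)) (t.xor (t.land q)))

theorem members_nonempty {s : ℕ} : (members s).Nonempty ↔ s ≠ 0 :=
  ⟨by rintro ⟨i, hi⟩ rfl; simp [members] at hi, Nat.exists_testBit_of_ne_zero⟩

theorem members_two_pow (k : ℕ) : members (2 ^ k) = {k} := by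
  ext i
  simp [members, Nat.testBit_two_pow, eq_comm]

theorem members_two_pow_sub_one (k : ℕ) : members (2 ^ k - 1) = Iio k := by
  ext i
  simp [members]

theorem members_finite (s : ℕ) : (members s).Finite :=
  (finite_Iio s).subset fun _ hi ↦ Nat.lt_two_pow_self.trans_le (Nat.ge_two_pow_of_testBit hi)

theorem image_column_nil {s : ℕ} (hs : s ≠ 0) : column [] '' members s = {[]} :=
  (members_nonempty.2 hs).image_const []

theorem image_column_cons (r : ℕ) (rows : List ℕ) (s : ℕ) :
    column (r :: rows) '' members s =
      List.cons true '' (column rows '' members (s &&& r)) ∪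
        List.cons false '' (column rows '' members (s ^^^ (s &&& r))) := by
  ext c
  simp only [image_image, mem_union, mem_image, members, mem_ofPred_eq, column, List.map_cons,
    Nat.testBit_and, Nat.testBit_xor]
  constructor
  · rintro ⟨i, hi, rfl⟩
    cases hr : r.testBit i
    · exact .inr ⟨i, by simp [hi, hr]⟩
    · exact .inl ⟨i, by simp [hi, hr]⟩
  · rintro (⟨i, hi, rfl⟩ | ⟨i, hi, rfl⟩) <;> exact ⟨i, by grind⟩

section List

variable {α : Type*} {a b : α}

theorem ncard_cons_union_cons (hab : a ≠ b) {S T : Set (List α)} (hS : S.Finite) (hT : T.Finite) :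
    (List.cons a '' S ∪ List.cons b '' T).ncard = S.ncard + T.ncard := by
  have hdisj : Disjoint (List.cons a '' S) (List.cons b '' T) := by
    rw [disjoint_left]
    rintro _ ⟨l, -, rfl⟩ ⟨l', -, h⟩
    exact hab (List.head_eq_of_cons_eq h).symm
  rw [ncard_union_eq hdisj (hS.image _) (hT.image _),
    ncard_image_of_injective _ List.cons_injective, ncard_image_of_injective _ List.cons_injective]

theorem cons_union_cons_inter (hab : a ≠ b) (S T S' T' : Set (List α)) :
    (List.cons a '' S ∪ List.cons b '' T) ∩ (List.cons a '' S' ∪ List.cons b '' T') =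
      List.cons a '' (S ∩ S') ∪ List.cons b '' (T ∩ T') := by
  ext (_ | ⟨c, l⟩)
  · simp
  · simp only [mem_inter_iff, mem_union, mem_image, List.cons.injEq, exists_eq_right_right]
    grind

end List

theorem cond_beq_zero_eq_ite {β : Type*} (s : ℕ) (x y : β) :
    (bif s.beq 0 then x else y) = if s = 0 then x else y := by
  cases s <;> rfl

theorem columnCount_eq_ncard (rows : List ℕ) (s : ℕ) :
    columnCount rows s = (column rows '' members s).ncard := by
  induction rows generalizing s with
  | nil =>
    rcases eq_or_ne s 0 with rfl | hs
    · simp [columnCount, members]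
    · simp [columnCount, cond_beq_zero_eq_ite, image_column_nil hs, hs]
  | cons r rows ih =>
    by_cases hsingle : s &&& (s - 1) = 0
    · rcases eq_or_ne s 0 with rfl | hs
      · simp [columnCount, members]
      · obtain ⟨k, rfl⟩ := (Nat.and_sub_one_eq_zero_iff_isPowerOfTwo hs).1 hsingle
        have hcount : columnCount (r :: rows) (2 ^ k) = 1 := by
          simp_all [columnCount, cond_beq_zero_eq_ite]
        simp [hcount, members_two_pow]
    · have hcount : columnCount (r :: rows) s =
          columnCount rows (s &&& r) + columnCount rows (s ^^^ (s &&& r)) := by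
        simp_all [columnCount, cond_beq_zero_eq_ite]
      rw [hcount, ih, ih, image_column_cons, ncard_cons_union_cons (by decide)
        ((members_finite _).image _) ((members_finite _).image _)]

theorem commonColumnCount_eq_ncard (rows : List (ℕ × ℕ)) (s t : ℕ) :
    commonColumnCount rows s t =
      (column (rows.map Prod.fst) '' members s ∩
        column (rows.map Prod.snd) '' members t).ncard := by
  induction rows generalizing s t with
  | nil =>
    rcases eq_or_ne s 0 with rfl | hs
    · simp [commonColumnCount, members]
    rcases eq_or_ne t 0 with rfl | ht
    · simp [commonColumnCount, members]
    simp [commonColumnCount, cond_beq_zero_eq_ite, image_column_nil hs, image_column_nil ht, hs, ht]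
  | cons r rows ih =>
    rcases eq_or_ne s 0 with rfl | hs
    · simp [commonColumnCount, members]
    rcases eq_or_ne t 0 with rfl | ht
    · simp [commonColumnCount, members]
    have hcount : commonColumnCount (r :: rows) s t =
        commonColumnCount rows (s &&& r.1) (t &&& r.2) +
          commonColumnCount rows (s ^^^ (s &&& r.1)) (t ^^^ (t &&& r.2)) := by
      simp_all [commonColumnCount, cond_beq_zero_eq_ite]
    rw [hcount, ih, ih, List.map_cons, List.map_cons, image_column_cons, image_column_cons,
      cons_union_cons_inter (by decide), ncard_cons_union_cons (by decide)
        (((members_finite _).image _).inter_of_left _)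
        (((members_finite _).image _).inter_of_left _)]

/-- The union of the index sets encoded by the members of `rows`. -/
def union (rows : List ℕ) : ℕ := rows.foldr (· ||| ·) 0

theorem testBit_union (rows : List ℕ) (i : ℕ) :
    (union rows).testBit i = rows.any (·.testBit i) := by
  induction rows with
  | nil => simp [union]
  | cons r rows ih => simp [union, ← ih]

/-- The lowest `w` bits of `m`, repeated `k` times. -/
def tile (w m : ℕ) : ℕ → ℕ
  | 0 => 0
  | k + 1 => (tile w m k <<< w) ||| m % 2 ^ w

theorem testBit_tile (w m k i : ℕ) :
    (tile w m k).testBit i = (decide (i < k * w) && m.testBit (i % w)) := by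
  induction k generalizing i with
  | zero => simp [tile]
  | succ k ih =>
    rw [tile, Nat.testBit_or, Nat.testBit_shiftLeft, Nat.testBit_mod_two_pow, ih]
    rcases lt_or_ge i w with hi | hi
    · have hlt : i < (k + 1) * w := by rw [add_one_mul]; lia
      simp [hi, Nat.mod_eq_of_lt hi, hlt]
    · have hsub : i - w < k * w ↔ i < (k + 1) * w := by rw [add_one_mul]; lia
      simp [hi, hi.not_gt, hsub, ← Nat.mod_eq_sub_mod hi]

/-- The set of those codes `i < b ^ n` whose base-`b` digit number `j` is `v`, as a binary numeral,
for `j < n` and `v < b`. It is assembled from blocks because testing the codes one by one would be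
too slow. -/
def digitRow (b j v : ℕ) : ℕ → ℕ
  | 0 => 0
  | n + 1 =>
    if j = n then (2 ^ b ^ n - 1) <<< (v * b ^ n) else tile (b ^ n) (digitRow b j v n) b

theorem testBit_digitRow {b j v n i : ℕ} (hj : j < n) (hi : i < b ^ n) :
    (digitRow b j v n).testBit i = decide (i / b ^ j % b = v) := by
  induction n generalizing i with
  | zero => lia
  | succ n ih =>
    rw [pow_succ'] at hi
    have hw : 0 < b ^ n := Nat.pos_of_mul_pos_left (pos_of_gt hi)
    rw [digitRow]
    split_ifs with hjn
    · rw [hjn, Nat.mod_eq_of_lt ((Nat.div_lt_iff_lt_mul hw).2 hi), Nat.testBit_shiftLeft,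
        Nat.testBit_two_pow_sub_one, ← Bool.decide_and, decide_eq_decide, Nat.div_eq_iff hw]
      lia
    · have hdigit : i % b ^ n / b ^ j % b = i / b ^ j % b := by
        rw [← Nat.mod_mul_right_div_self, ← Nat.mod_mul_right_div_self, ← pow_succ,
          Nat.mod_mod_of_dvd _ (pow_dvd_pow b (by lia))]
      rw [testBit_tile, ih (by lia) (Nat.mod_lt _ hw), hdigit]
      simp [hi]

end BitMatrix

namespace TernaryMap

open Set BitMatrix

section Duality

variable {X : Type*}

/-- The ternary map `(x * y) * z`. -/
def leftAssoc (op : X → X → X) (x y z : X) : X := op (op x y) z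

/-- The ternary map `x * (y * z)`. -/
def rightAssoc (op : X → X → X) (x y z : X) : X := op x (op y z)

/-- The ternary map with the order of its arguments reversed. -/
def reverse (f : X → X → X → X) (x y z : X) : X := f z y x

theorem reverse_injective : Function.Injective (reverse (X := X)) :=
  Function.Involutive.injective fun _ ↦ rfl

theorem range_rightAssoc : range (rightAssoc (X := X)) = reverse '' range leftAssoc := by
  have hflip : Function.Surjective (flip : (X → X → X) → X → X → X) := fun op ↦ ⟨flip op, rfl⟩
  have hreverse : rightAssoc (X := X) = reverse ∘ leftAssoc ∘ flip := rfl
  rw [hreverse, range_comp, hflip.range_comp]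

theorem ncard_range_rightAssoc :
    (range (rightAssoc (X := X))).ncard = (range (leftAssoc (X := X))).ncard := by
  rw [range_rightAssoc, ncard_image_of_injective _ reverse_injective]

end Duality

variable {n : ℕ}

/-- The numbering of binary operations in which digit number `y + n * x` of the base-`n` expansion
of the code is `x * y`. -/
def opOfCode (n : ℕ) : Fin (n ^ (n * n)) ≃ (Fin n → Fin n → Fin n) :=
  finFunctionFinEquiv.symm.trans <|
    (finProdFinEquiv.symm.arrowCongr (Equiv.refl _)).trans (Equiv.curry _ _ _)

/-- The set of codes of the operations with `x * y = v`, as a binary numeral. -/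
def opRow (x y v : Fin n) : ℕ := digitRow n (y + n * x) v (n * n)

theorem testBit_opRow (x y v : Fin n) (i : Fin (n ^ (n * n))) :
    (opRow x y v).testBit i = decide (opOfCode n i x y = v) := by
  have hdigit := testBit_digitRow (v := v) (finProdFinEquiv (x, y)).isLt i.isLt
  simpa [opRow, opOfCode, Fin.ext_iff, finFunctionFinEquiv] using hdigit

/-- The questions `(x, y, z, v)`, asking whether a ternary map takes the value `v` at `(x, y, z)`.
The value `0` is left out since it is the one remaining when all other values are excluded. -/
def queries (n : ℕ) : List (Fin n × Fin n × Fin n × Fin n) :=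
  List.finRange n ×ˢ List.finRange n ×ˢ List.finRange n ×ˢ (List.finRange n).filter (·.val ≠ 0)

theorem mem_queries {x y z v : Fin n} : (x, y, z, v) ∈ queries n ↔ v.val ≠ 0 := by
  simp [queries]

/-- The answers of a ternary map to all `queries`. -/
def answers (f : Fin n → Fin n → Fin n → Fin n) : List Bool :=
  (queries n).map fun (x, y, z, v) ↦ decide (f x y z = v)

theorem answers_injective : Function.Injective (answers (n := n)) := by
  intro f g hfg
  ext x y z : 3
  have hiff (v : Fin n) (hv : v.val ≠ 0) : f x y z = v ↔ g x y z = v := by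
    simpa using List.map_inj_left.1 hfg (x, y, z, v) (mem_queries.2 hv)
  by_cases hf : (f x y z).val = 0
  · by_cases hg : (g x y z).val = 0
    · exact Fin.ext (hf.trans hg.symm)
    · exact (hiff _ hg).2 rfl
  · exact ((hiff _ hf).1 rfl).symm

/-- The set of codes of the operations with `(x * y) * z = v`, as a binary numeral. -/
def leftRow : Fin n × Fin n × Fin n × Fin n → ℕ
  | (x, y, z, v) => union ((List.finRange n).map fun u ↦ opRow x y u &&& opRow u z v)

/-- The set of codes of the operations with `x * (y * z) = v`, as a binary numeral. -/
def rightRow : Fin n × Fin n × Fin n × Fin n → ℕ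
  | (x, y, z, v) => union ((List.finRange n).map fun u ↦ opRow y z u &&& opRow x u v)

theorem testBit_leftRow (x y z v : Fin n) (i : Fin (n ^ (n * n))) :
    (leftRow (x, y, z, v)).testBit i = decide (leftAssoc (opOfCode n i) x y z = v) := by
  rw [Bool.eq_iff_iff, decide_eq_true_iff]
  simp [leftRow, leftAssoc, testBit_union, testBit_opRow]

theorem column_leftRow (i : Fin (n ^ (n * n))) :
    column ((queries n).map leftRow) i = answers (leftAssoc (opOfCode n i)) := by
  simp [column, answers, testBit_leftRow]

theorem testBit_rightRow (x y z v : Fin n) (i : Fin (n ^ (n * n))) :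
    (rightRow (x, y, z, v)).testBit i = decide (rightAssoc (opOfCode n i) x y z = v) := by
  rw [Bool.eq_iff_iff, decide_eq_true_iff]
  simp [rightRow, rightAssoc, testBit_union, testBit_opRow]

theorem column_rightRow (i : Fin (n ^ (n * n))) :
    column ((queries n).map rightRow) i = answers (rightAssoc (opOfCode n i)) := by
  simp [column, answers, testBit_rightRow]

/-- The set of codes of all binary operations, as a binary numeral. -/
def allCodes (n : ℕ) : ℕ := 2 ^ n ^ (n * n) - 1

theorem image_answers_range {assoc : (Fin n → Fin n → Fin n) → Fin n → Fin n → Fin n → Fin n}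
    {rows : List ℕ}
    (hrows : ∀ i : Fin (n ^ (n * n)), column rows i = answers (assoc (opOfCode n i))) :
    answers '' range assoc = column rows '' members (allCodes n) := by
  rw [allCodes, members_two_pow_sub_one, ← Fin.range_val,
    ← (opOfCode n).surjective.range_comp assoc, ← range_comp, ← range_comp]
  exact congrArg range (funext fun i ↦ (hrows i).symm)

theorem ncard_range_leftAssoc (n : ℕ) :
    (range (leftAssoc (X := Fin n))).ncard =
      columnCount ((queries n).map leftRow) (allCodes n) := by
  rw [columnCount_eq_ncard, ← image_answers_range column_leftRow,
    ncard_image_of_injective _ answers_injective]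

theorem ncard_range_leftAssoc_inter_range_rightAssoc (n : ℕ) :
    (range (leftAssoc (X := Fin n)) ∩ range rightAssoc).ncard =
      commonColumnCount ((queries n).map fun q ↦ (leftRow q, rightRow q))
        (allCodes n) (allCodes n) := by
  simp only [commonColumnCount_eq_ncard, List.map_map, Function.comp_def]
  rw [← image_answers_range column_leftRow, ← image_answers_range column_rightRow,
    ← image_inter answers_injective, ncard_image_of_injective _ answers_injective]

theorem ncard_range_leftAssoc_three : (range (leftAssoc (X := Fin 3))).ncard = 19292 := by
  rw [ncard_range_leftAssoc]
  decide +kernel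

theorem ncard_range_leftAssoc_inter_range_rightAssoc_three :
    (range (leftAssoc (X := Fin 3)) ∩ range rightAssoc).ncard = 112 := by
  rw [ncard_range_leftAssoc_inter_range_rightAssoc]
  decide +kernel

end TernaryMap

/-- On a 3-element set, the number of ternary maps representable either as
`f (x, y, z) = (x*y)*z` or as `f (x, y, z) = x*(y*z)` for some binary map `*` is
`T_LR(3) = 38472`. -/
theorem count_left_or_right_assoc_ternary_three :
    Nat.card {f : Fin 3 → Fin 3 → Fin 3 → Fin 3 //
      (∃ op : Fin 3 → Fin 3 → Fin 3, ∀ x y z, f x y z = op (op x y) z) ∨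
      (∃ op : Fin 3 → Fin 3 → Fin 3, ∀ x y z, f x y z = op x (op y z))} = 38472 := by
  have hunion : {f : Fin 3 → Fin 3 → Fin 3 → Fin 3 |
      (∃ op : Fin 3 → Fin 3 → Fin 3, ∀ x y z, f x y z = op (op x y) z) ∨
      (∃ op : Fin 3 → Fin 3 → Fin 3, ∀ x y z, f x y z = op x (op y z))} =
      Set.range TernaryMap.leftAssoc ∪ Set.range TernaryMap.rightAssoc := by
    ext f
    simp [funext_iff, TernaryMap.leftAssoc, TernaryMap.rightAssoc, eq_comm]
  have hcard := Set.ncard_union_add_ncard_inter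
    (Set.range (TernaryMap.leftAssoc (X := Fin 3))) (Set.range TernaryMap.rightAssoc)
  rw [TernaryMap.ncard_range_rightAssoc, TernaryMap.ncard_range_leftAssoc_three,
    TernaryMap.ncard_range_leftAssoc_inter_range_rightAssoc_three, ← hunion] at hcard
  exact Nat.add_right_cancel hcard
end

section
/- Let X be a set with 3 elements. The number of symmetric ternary maps f: X × X × X → X (i.e., maps invariant under every permutation of the three arguments) for which there exists a binary map *: X × X → X with f(x,y,z) = (x*y)*z for all x,y,z ∈ X, is 48. -/
/-! Symmetry of `(x * y) * z` says that the right translations commute and that `x * y` and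
`y * x` have the same left translation. If `*` is commutative, it is therefore associative. If
`a = x * y` and `b = y * x` differ and there are at most three elements, then `a` and `b` are also
interchangeable as right factors as soon as some product lies outside `{a, b}`; comparing
`(c * c) * a` with `(c * a) * c` rules that out. So all products have the same left translation,
and `(x * y) * z` is constant. In both cases the map is the triple product of a commutative
semigroup, and those on three elements are found by running through the `3 ^ 6` symmetric Cayley
tables. -/

section TripleProduct

variable {X : Type*}

/-- The ternary map `(x * y) * z` attached to a binary map. -/
def tripleProduct (op : X → X → X) : X → X → X → X := fun x y z => op (op x y) z

/-- Invariance of a ternary map under all permutations of its arguments, stated for the two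
adjacent transpositions, which generate `S₃`. -/
structure IsSymmetricTernary (f : X → X → X → X) : Prop where
  swap_left : ∀ x y z, f x y z = f y x z
  swap_right : ∀ x y z, f x y z = f x z y

theorem isSymmetricTernary_tripleProduct (op : X → X → X) [Std.Commutative op]
    [Std.Associative op] : IsSymmetricTernary (tripleProduct op) where
  swap_left x y z := congrArg (op · z) (Std.Commutative.comm x y)
  swap_right := RightCommutative.right_comm

namespace IsSymmetricTernary

variable {op : X → X → X}

theorem op_op_comm (h : IsSymmetricTernary (tripleProduct op)) (x y : X) :
    op (op x y) = op (op y x) :=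
  funext (h.swap_left x y)

theorem op_right_comm (h : IsSymmetricTernary (tripleProduct op)) (x y z : X) :
    op (op x y) z = op (op x z) y :=
  h.swap_right x y z

theorem associative (h : IsSymmetricTernary (tripleProduct op)) [Std.Commutative op] :
    Std.Associative op where
  assoc x y z := by
    calc op (op x y) z = op (op y x) z := by rw [h.op_op_comm]
      _ = op (op y z) x := h.op_right_comm y x z
      _ = op x (op y z) := Std.Commutative.comm _ _

theorem op_op_congr_right (h : IsSymmetricTernary (tripleProduct op)) {a b : X}
    (hab : op a = op b) (u v : X) : op (op u v) a = op (op u v) b := by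
  have rotate (w : X) : op (op u v) w = op (op w u) v := by
    rw [h.op_right_comm, h.op_op_comm]
  rw [rotate, rotate, hab]

theorem tripleProduct_eq_const (h : IsSymmetricTernary (tripleProduct op)) {φ : X → X}
    (hφ : ∀ u v, op (op u v) = φ) (w : X) : tripleProduct op = fun _ _ _ => φ w := by
  funext x y z
  calc op (op x y) z = op (op x z) y := h.op_right_comm x y z
    _ = op (op x w) y := by rw [hφ, hφ]
    _ = op (op x y) w := h.op_right_comm x w y
    _ = φ w := by rw [hφ]

theorem op_ne_of_interchangeable (h : IsSymmetricTernary (tripleProduct op)) {a c : X}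
    (hleft : ∀ z w, z ≠ c → op z w = op a w) (hright : ∀ z w, z ≠ c → op w z = op w a)
    {x y : X} (hxy : op x y ≠ op y x) (hxyc : op x y ≠ c) (hyxc : op y x ≠ c) (u v : X) :
    op u v ≠ c := by
  obtain ⟨hca, hac, hne⟩ : op c a ≠ c ∧ op a c ≠ c ∧ op c a ≠ op a c := by
    by_cases hx : x = c <;> by_cases hy : y = c <;> grind
  have hcca : op (op c c) a = op a c := by
    rw [h.op_right_comm, hleft _ _ hca]
  have hcc : op c c ≠ c := fun hcc => hne (by rwa [hcc] at hcca)
  have haa : op a a = op a c := by rw [← hcca, hleft _ _ hcc]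
  by_cases hu : u = c <;> by_cases hv : v = c <;> grind

theorem op_eq_or_eq_of_not_comm [Fintype X] (hX : Fintype.card X ≤ 3)
    (h : IsSymmetricTernary (tripleProduct op)) {x y : X} (hxy : op x y ≠ op y x) (u v : X) :
    op u v = op x y ∨ op u v = op y x := by
  by_contra! huv
  obtain ⟨hx, hy⟩ := huv
  have eq_or_eq (z : X) (hz : z ≠ op u v) : z = op x y ∨ z = op y x := by
    by_contra! hz'
    classical
    have hcard : ({z, op u v, op x y, op y x} : Finset X).card = 4 := by grind
    have := Finset.card_le_univ {z, op u v, op x y, op y x}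
    omega
  have hleft (z w : X) (hz : z ≠ op u v) : op z w = op (op x y) w := by
    rcases eq_or_eq z hz with rfl | rfl
    · rfl
    · rw [h.op_op_comm]
  have op_op_right (s t : X) : op (op s t) (op y x) = op (op s t) (op x y) :=
    h.op_op_congr_right (h.op_op_comm y x) s t
  have hright (z w : X) (hz : z ≠ op u v) : op w z = op w (op x y) := by
    rcases eq_or_eq z hz with rfl | rfl
    · rfl
    by_cases hw : w = op u v
    · rw [hw, op_op_right]
    · rw [hleft w _ hw, hleft w _ hw, op_op_right]
  exact h.op_ne_of_interchangeable hleft hright hxy hx.symm hy.symm u v rfl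

theorem exists_commSemigroup_tripleProduct_eq [Fintype X] (hX : Fintype.card X ≤ 3)
    (h : IsSymmetricTernary (tripleProduct op)) :
    ∃ op' : X → X → X,
      Std.Commutative op' ∧ Std.Associative op' ∧ tripleProduct op' = tripleProduct op := by
  by_cases hcomm : ∀ x y, op x y = op y x
  · have : Std.Commutative op := ⟨hcomm⟩
    exact ⟨op, this, h.associative, rfl⟩
  · push Not at hcomm
    obtain ⟨x, y, hxy⟩ := hcomm
    have left_translation_eq (u v : X) : op (op u v) = op (op x y) := by
      rcases h.op_eq_or_eq_of_not_comm hX hxy u v with huv | huv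
      · rw [huv]
      · rw [huv, h.op_op_comm]
    exact ⟨fun _ _ => op (op x y) x, ⟨fun _ _ => rfl⟩, ⟨fun _ _ _ => rfl⟩,
      (h.tripleProduct_eq_const left_translation_eq x).symm⟩

end IsSymmetricTernary

theorem isSymmetricTernary_and_exists_iff [Fintype X] (hX : Fintype.card X ≤ 3)
    {f : X → X → X → X} :
    (IsSymmetricTernary f ∧ ∃ op, tripleProduct op = f) ↔
      ∃ op, Std.Commutative op ∧ Std.Associative op ∧ tripleProduct op = f := by
  constructor
  · rintro ⟨h, op, rfl⟩
    exact h.exists_commSemigroup_tripleProduct_eq hX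
  · rintro ⟨op, _, _, rfl⟩
    exact ⟨isSymmetricTernary_tripleProduct op, op, rfl⟩

end TripleProduct

section ThreeElements

/-- The binary map on `Fin 3` whose symmetric Cayley table has the entries of `t`, read row by row,
on and above its diagonal. -/
def symmetricTable {α : Type*} (t : Fin 6 → α) : Fin 3 → Fin 3 → α :=
  ![![t 0, t 1, t 2], ![t 1, t 3, t 4], ![t 2, t 4, t 5]]

theorem symmetricTable_comm {α : Type*} (t : Fin 6 → α) (x y : Fin 3) :
    symmetricTable t x y = symmetricTable t y x := by
  fin_cases x <;> fin_cases y <;> rfl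

theorem exists_symmetricTable_eq {α : Type*} {op : Fin 3 → Fin 3 → α}
    (hop : ∀ x y, op x y = op y x) : ∃ t, symmetricTable t = op := by
  refine ⟨![op 0 0, op 0 1, op 0 2, op 1 1, op 1 2, op 2 2], ?_⟩
  funext x y
  fin_cases x <;> fin_cases y <;> first | rfl | exact hop _ _

/-- The Cayley tables, encoded as in `symmetricTable`, of the commutative semigroups on `Fin 3`. -/
def commSemigroupTables : Finset (Fin 6 → Fin 3) :=
  {t | ∀ x y z, symmetricTable t (symmetricTable t x y) z =
    symmetricTable t x (symmetricTable t y z)}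

/-- The triple products of the commutative semigroups on `Fin 3`; several semigroups can have the
same one. -/
def commSemigroupTripleProducts : Finset (Fin 3 → Fin 3 → Fin 3 → Fin 3) :=
  commSemigroupTables.image fun t => tripleProduct (symmetricTable t)

theorem mem_commSemigroupTripleProducts {f : Fin 3 → Fin 3 → Fin 3 → Fin 3} :
    f ∈ commSemigroupTripleProducts ↔
      ∃ op, Std.Commutative op ∧ Std.Associative op ∧ tripleProduct op = f := by
  simp only [commSemigroupTripleProducts, commSemigroupTables, Finset.mem_image,
    Finset.mem_filter, Finset.mem_univ, true_and]
  constructor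
  · rintro ⟨t, hassoc, rfl⟩
    exact ⟨_, ⟨symmetricTable_comm t⟩, ⟨hassoc⟩, rfl⟩
  · rintro ⟨op, hcomm, hassoc, rfl⟩
    obtain ⟨t, rfl⟩ := exists_symmetricTable_eq hcomm.comm
    exact ⟨t, hassoc.assoc, rfl⟩

theorem card_commSemigroupTripleProducts : commSemigroupTripleProducts.card = 48 := by
  decide +kernel

end ThreeElements

/-- On a 3-element set, the number of symmetric ternary maps (invariant under every
permutation of the three arguments) representable as `f (x, y, z) = (x*y)*z` for some binary
map `*` is `T_comm(3) = 48`. -/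
theorem count_symmetric_left_assoc_ternary_three :
    Nat.card {f : Fin 3 → Fin 3 → Fin 3 → Fin 3 //
      (∀ x y z, f x y z = f y x z) ∧ (∀ x y z, f x y z = f x z y) ∧
      ∃ op : Fin 3 → Fin 3 → Fin 3, ∀ x y z, f x y z = op (op x y) z} = 48 := by
  rw [Nat.subtype_card commSemigroupTripleProducts, card_commSemigroupTripleProducts]
  intro f
  rw [mem_commSemigroupTripleProducts,
    ← isSymmetricTernary_and_exists_iff (Fintype.card_fin 3).le]
  constructor
  · rintro ⟨⟨hleft, hright⟩, op, rfl⟩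
    exact ⟨hleft, hright, op, fun _ _ _ => rfl⟩
  · rintro ⟨hleft, hright, op, hop⟩
    exact ⟨⟨hleft, hright⟩, op, funext fun x => funext₂ fun y z => (hop x y z).symm⟩
end
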